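/- arXiv:2410.18259 — 2 statements merged into one kernel-verified Lean document; each statement's English description precedes it below -/
import Mathlib

section
/- There exists a constant C > 0 such that for all real x ≥ 16, |Σ_{n ≤ x} μ(n) ω(n) {x/n}| ≤ C · x · √(log log x) / √(log x), where {y} = y − ⌊y⌋ denotes the fractional part and the sum runs over positive integers n ≤ x. -/
open Finset ArithmeticFunction Real


lemma zaux_step (φ Φ φ' : ℝ → ℂ) (a B D : ℝ)
    (hΦ : ∀ u ∈ Set.Icc a (a+1), HasDerivAt Φ (φ u) u)
    (hφ : ∀ u ∈ Set.Icc a (a+1), HasDerivAt φ (φ' u) u)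
    (hB : ∀ u ∈ Set.Icc a (a+1), ‖φ u‖ ≤ B) (hD : ∀ u ∈ Set.Icc a (a+1), ‖φ' u‖ ≤ D) :
    ‖φ a - (Φ (a+1) - Φ a)‖ ≤ min (2 * B) D := by
  have ha : a ∈ Set.Icc a (a+1) := ⟨le_rfl, by linarith⟩
  have hb : a + 1 ∈ Set.Icc a (a+1) := ⟨by linarith, le_rfl⟩
  have hD0 : 0 ≤ D := (norm_nonneg _).trans (hD a ha)
  have key : ∀ M : ℝ, (∀ u ∈ Set.Icc a (a+1), ‖φ u - φ a‖ ≤ M) →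
      ‖φ a - (Φ (a+1) - Φ a)‖ ≤ M := by
    intro M hM
    have h := Convex.norm_image_sub_le_of_norm_hasDerivWithin_le (𝕜 := ℝ)
      (f := fun u : ℝ => Φ u - u * φ a) (f' := fun u => φ u - φ a) (s := Set.Icc a (a+1)) (C := M)
      (x := a) (y := a + 1) ?_ hM (convex_Icc _ _) ha hb
    · rw [← norm_neg]
      convert h using 1
      · congr 1; push_cast; ring
      · simp
    · intro u hu
      refine HasDerivAt.hasDerivWithinAt ?_
      have := (hΦ u hu).sub ((HasDerivAt.ofReal_comp (hasDerivAt_id u)).mul_const (φ a))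
      have h' : HasDerivAt (fun u : ℝ => Φ u - u * φ a) (φ u - φ a) u := by
        simpa [Pi.sub_def] using this
      exact h'
  refine le_min (key _ ?_) (key _ ?_)
  · intro u hu
    calc _ ≤ ‖φ u‖ + ‖φ a‖ := norm_sub_le _ _
      _ ≤ _ := by linarith [hB u hu, hB a ha]
  · intro u hu
    have h := Convex.norm_image_sub_le_of_norm_hasDerivWithin_le (𝕜 := ℝ)
      (f := φ) (f' := φ') (s := Set.Icc a (a+1)) (C := D)
      (x := a) (y := u) (fun v hv => (hφ v hv).hasDerivWithinAt) hD (convex_Icc _ _) ha hu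
    refine h.trans ?_
    have : ‖u - a‖ ≤ 1 := by
      rw [Real.norm_eq_abs, abs_le]; constructor <;> linarith [hu.1, hu.2]
    nlinarith

lemma zaux_sum (φ Φ φ' : ℝ → ℂ) (c B D : ℕ → ℝ) (L : ℂ)
    (hΦ : ∀ u : ℝ, 1 ≤ u → HasDerivAt Φ (φ u) u)
    (hφ : ∀ u : ℝ, 1 ≤ u → HasDerivAt φ (φ' u) u)
    (hB : ∀ n : ℕ, ∀ u ∈ Set.Icc ((n:ℝ)+1) (n+1+1), ‖φ u‖ ≤ B n)
    (hD : ∀ n : ℕ, ∀ u ∈ Set.Icc ((n:ℝ)+1) (n+1+1), ‖φ' u‖ ≤ D n)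
    (hc : ∀ n, min (2 * B n) (D n) ≤ c n) (hcs : Summable c)
    (hlim : Filter.Tendsto Φ Filter.atTop (nhds 0))
    (hL : HasSum (fun n : ℕ => φ ((n:ℝ)+1)) L) : ‖L‖ ≤ ‖Φ 1‖ + ∑' n, c n := by
  have hc0 : ∀ n : ℕ, ‖φ ((n:ℝ)+1) - (Φ ((n:ℝ)+1+1) - Φ ((n:ℝ)+1))‖ ≤ c n := by
    intro n
    have hn : (0:ℝ) ≤ n := n.cast_nonneg
    exact (zaux_step φ Φ φ' _ (B n) (D n) (fun u hu => hΦ u (by linarith [hu.1]))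
      (fun u hu => hφ u (by linarith [hu.1])) (hB n) (hD n)).trans (hc n)
  have hfin : ∀ N : ℕ, ‖∑ n ∈ Finset.range N, φ ((n:ℝ)+1)‖ ≤
      ‖Φ ((N:ℝ)+1)‖ + (‖Φ 1‖ + ∑' n, c n) := by
    intro N
    have h1 : ∑ n ∈ Finset.range N, φ ((n:ℝ)+1) =
        (Φ ((N:ℝ)+1) - Φ 1) + ∑ n ∈ Finset.range N,
          (φ ((n:ℝ)+1) - (Φ ((n:ℝ)+1+1) - Φ ((n:ℝ)+1))) := by
      have := Finset.sum_range_sub (fun n : ℕ => Φ ((n:ℝ)+1)) N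
      rw [Finset.sum_sub_distrib]
      push_cast at this
      rw [this]; simp
    rw [h1]
    have h2 : ‖∑ n ∈ Finset.range N, (φ ((n:ℝ)+1) - (Φ ((n:ℝ)+1+1) - Φ ((n:ℝ)+1)))‖ ≤ ∑' n, c n :=
      (norm_sum_le_of_le _ (fun n _ => hc0 n)).trans
        (hcs.sum_le_tsum _ (fun n _ => (norm_nonneg _).trans (hc0 n)))
    have h3 := norm_sub_le (Φ ((N:ℝ)+1)) (Φ 1)
    refine (norm_add_le _ _).trans ?_
    linarith
  have ht : Filter.Tendsto (fun N : ℕ => ‖Φ ((N:ℝ)+1)‖ + (‖Φ 1‖ + ∑' n, c n)) Filter.atTop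
      (nhds (0 + (‖Φ 1‖ + ∑' n, c n))) := by
    refine Filter.Tendsto.add_const _ ?_
    have := (hlim.comp (Filter.tendsto_atTop_add_const_right _ (1:ℝ)
      (tendsto_natCast_atTop_atTop (R := ℝ)))).norm
    simpa using this
  have := le_of_tendsto_of_tendsto' hL.tendsto_sum_nat.norm ht hfin
  simpa using this

/-- the common majorant -/
lemma zaux_maj (ε : ℝ) (hε : 0 < ε) (hε1 : ε < 1) :
    Summable (fun n : ℕ => 3 * Real.log ((n:ℝ)+1+1) / ((n:ℝ)+1) ^ (1 + ε)) := by
  have hs : Summable (fun n : ℕ => (3 * (2/ε) * 2) * (1 / ((n:ℝ)+1) ^ (1 + ε/2))) := by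
    have h := (summable_nat_add_iff 1).2 (Real.summable_one_div_nat_rpow.2 (by linarith : 1 < 1 + ε/2))
    refine Summable.mul_left _ ?_
    simpa using h
  refine Summable.of_nonneg_of_le (fun n => ?_) (fun n => ?_) hs
  · have hn : (0:ℝ) ≤ n := n.cast_nonneg
    have := Real.log_nonneg (by linarith : (1:ℝ) ≤ n + 1 + 1)
    positivity
  · have hn : (0:ℝ) ≤ n := n.cast_nonneg
    have h1 : Real.log ((n:ℝ)+1+1) ≤ ((n:ℝ)+1+1)^(ε/2) / (ε/2) :=
      Real.log_le_rpow_div (by linarith) (by linarith)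
    have h2 : ((n:ℝ)+1+1)^(ε/2) ≤ 2 * ((n:ℝ)+1)^(ε/2) := by
      calc ((n:ℝ)+1+1)^(ε/2) ≤ (2 * ((n:ℝ)+1))^(ε/2) :=
            Real.rpow_le_rpow (by linarith) (by linarith) (by linarith)
        _ = 2^(ε/2) * ((n:ℝ)+1)^(ε/2) := Real.mul_rpow (by norm_num) (by linarith)
        _ ≤ 2 * ((n:ℝ)+1)^(ε/2) := by
          gcongr
          calc (2:ℝ)^(ε/2) ≤ 2^(1:ℝ) := Real.rpow_le_rpow_of_exponent_le (by norm_num) (by linarith)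
            _ = 2 := by simp
    have hp : (0:ℝ) < (n:ℝ)+1 := by linarith
    have h3 : ((n:ℝ)+1)^(1+ε) = ((n:ℝ)+1)^(1+ε/2) * ((n:ℝ)+1)^(ε/2) := by
      rw [← Real.rpow_add hp]; congr 1; ring
    rw [h3, mul_one_div, div_le_div_iff₀ (by positivity) (by positivity)]
    have h4 : Real.log ((n:ℝ)+1+1) ≤ (2/ε) * 2 * ((n:ℝ)+1)^(ε/2) := by
      calc _ ≤ _ := h1
        _ = (2/ε) * ((n:ℝ)+1+1)^(ε/2) := by field_simp
        _ ≤ (2/ε) * (2 * ((n:ℝ)+1)^(ε/2)) := by gcongr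
        _ = _ := by ring
    calc 3 * Real.log ((n:ℝ)+1+1) * ((n:ℝ)+1)^(1+ε/2)
        ≤ 3 * ((2/ε) * 2 * ((n:ℝ)+1)^(ε/2)) * ((n:ℝ)+1)^(1+ε/2) := by gcongr
      _ = _ := by ring

lemma zaux_min (ε S l a x y : ℝ) (hε : 0 < ε) (hε1 : ε < 1) (hS : 0 ≤ S) (hl : 0 ≤ l) (ha : 0 < a)
    (hx : x ≤ 3 * l / a) (hy : y ≤ 3 * S * l / a^2) :
    min x y ≤ S ^ ε * (3 * l / a ^ (1+ε)) := by
  have hX : (0:ℝ) ≤ 3 * l / a := by positivity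
  have hY : (0:ℝ) ≤ 3 * S * l / a^2 := by positivity
  have hmm : min x y ≤ min (3 * l / a) (3 * S * l / a^2) := min_le_min hx hy
  refine hmm.trans ?_
  set m := min (3 * l / a) (3 * S * l / a^2) with hm
  have hm0 : 0 ≤ m := le_min hX hY
  have h1 : m = m ^ (1-ε) * m ^ ε := by
    rcases hm0.eq_or_lt with h | h
    · rw [← h, Real.zero_rpow (by linarith : ε ≠ 0)]; simp
    · rw [← Real.rpow_add h]; simp
  rw [h1]
  calc m ^ (1-ε) * m ^ ε ≤ (3 * l / a)^(1-ε) * (3 * S * l / a^2)^ε := by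
        gcongr
        · exact min_le_left _ _
        · exact min_le_right _ _
    _ = (3 * l / a)^(1-ε) * ((3 * l / a)^ε * (S^ε * (a^ε)⁻¹)) := by
        congr 1
        rw [show 3 * S * l / a^2 = (3 * l / a) * (S * a⁻¹) by field_simp,
          Real.mul_rpow hX (by positivity), Real.mul_rpow hS (by positivity), Real.inv_rpow ha.le]
    _ = (3 * l / a) * (S^ε * (a^ε)⁻¹) := by
        rw [← mul_assoc]; congr 1
        rcases hX.eq_or_lt with h | h
        · rw [← h, Real.zero_rpow (by linarith : ε ≠ 0)]; simp
        · rw [← Real.rpow_add h]; simp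
    _ = _ := by
        rw [Real.rpow_add ha, Real.rpow_one]; field_simp


lemma zaux_norm_cpow (s : ℂ) (hs : 1 ≤ s.re) (a u : ℝ) (ha : 1 ≤ a) (hu : a ≤ u) :
    ‖(u:ℂ) ^ (-s)‖ ≤ 1 / a := by
  rw [Complex.norm_cpow_eq_rpow_re_of_pos (by linarith)]
  calc u ^ (-s).re ≤ u ^ (-1:ℝ) := Real.rpow_le_rpow_of_exponent_le (by linarith) (by simpa using hs)
    _ = 1 / u := by rw [Real.rpow_neg_one, one_div]
    _ ≤ 1 / a := one_div_le_one_div_of_le (by linarith) hu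

lemma zaux_norm_cpow' (s : ℂ) (hs : 1 ≤ s.re) (a u : ℝ) (ha : 1 ≤ a) (hu : a ≤ u) :
    ‖(u:ℂ) ^ (-s-1)‖ ≤ 1 / a ^ 2 := by
  have hu0 : (u:ℂ) ≠ 0 := by exact_mod_cast (by linarith : u ≠ 0)
  rw [Complex.cpow_sub _ _ hu0, Complex.cpow_one, norm_div, Complex.norm_real,
    Real.norm_of_nonneg (by linarith)]
  have := zaux_norm_cpow s hs a u ha hu
  rw [div_le_iff₀ (by linarith)]
  refine this.trans ?_
  rw [div_mul_eq_mul_div, one_mul, div_le_div_iff₀ (by linarith) (by positivity)]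
  nlinarith

lemma zaux_lim (s : ℂ) (hs : 1 < s.re) :
    Filter.Tendsto (fun u : ℝ => (u:ℂ)^(1-s)) Filter.atTop (nhds 0) := by
  rw [tendsto_zero_iff_norm_tendsto_zero]
  have h : Filter.Tendsto (fun u : ℝ => u^(-(s.re - 1))) Filter.atTop (nhds 0) :=
    tendsto_rpow_neg_atTop (by linarith)
  refine h.congr' ?_
  filter_upwards [Filter.eventually_gt_atTop 0] with u hu
  rw [Complex.norm_cpow_eq_rpow_re_of_pos hu]; simp

lemma zaux_lim_log (s : ℂ) (hs : 1 < s.re) :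
    Filter.Tendsto (fun u : ℝ => ((Real.log u : ℝ) : ℂ) * (u:ℂ)^(1-s)) Filter.atTop (nhds 0) := by
  rw [tendsto_zero_iff_norm_tendsto_zero]
  have h := (isLittleO_log_rpow_atTop (by linarith : 0 < s.re - 1)).tendsto_div_nhds_zero.norm
  rw [norm_zero] at h
  refine h.congr' ?_
  filter_upwards [Filter.eventually_gt_atTop 0] with u hu
  rw [norm_mul, Complex.norm_cpow_eq_rpow_re_of_pos hu, norm_div, Complex.norm_real,
    Real.norm_of_nonneg (Real.rpow_nonneg hu.le (s.re-1)), div_eq_mul_inv, ← Real.rpow_neg hu.le]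
  simp

lemma zaux_hasDeriv (r : ℂ) (u : ℝ) (hu : 1 ≤ u) (hr : r ≠ 0) :
    HasDerivAt (fun y : ℝ => (y:ℂ)^r) (r * (u:ℂ)^(r-1)) u :=
  hasDerivAt_ofReal_cpow_const (by linarith) hr

lemma zaux_log (u : ℝ) (hu : 1 ≤ u) :
    HasDerivAt (fun y : ℝ => ((Real.log y : ℝ):ℂ)) ((u:ℂ)⁻¹) u := by
  simpa using (Real.hasDerivAt_log (by linarith : u ≠ 0)).ofReal_comp

lemma zeta_bound (ε : ℝ) (hε : 0 < ε) (hε1 : ε < 1) (s : ℂ) (hs : 1 < s.re) (hi : 1 ≤ |s.im|) :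
    ‖riemannZeta s‖ ≤ 1 + ‖s‖ ^ ε * ∑' n : ℕ, 3 * Real.log ((n:ℝ)+1+1) / ((n:ℝ)+1) ^ (1 + ε) := by
  have hs1 : 1 - s ≠ 0 := fun h => by
    have := congrArg Complex.re h; simp at this; linarith
  have hs0 : -s ≠ 0 := fun h => by
    have := congrArg Complex.re h; simp at this; linarith
  have hn1 : 1 ≤ ‖1 - s‖ := hi.trans (by simpa using Complex.abs_im_le_norm (1 - s))
  have hsn : 1 ≤ ‖s‖ := hi.trans (Complex.abs_im_le_norm s)
  rw [← tsum_mul_left]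
  have := zaux_sum (fun u => (u:ℂ)^(-s)) (fun u => (u:ℂ)^(1-s) / (1-s)) (fun u => -s * (u:ℂ)^(-s-1))
    (fun n : ℕ => ‖s‖ ^ ε * (3 * Real.log ((n:ℝ)+1+1) / ((n:ℝ)+1) ^ (1 + ε)))
    (fun n => 1 / ((n:ℝ)+1)) (fun n => ‖s‖ * (1 / ((n:ℝ)+1)^2)) (riemannZeta s)
    ?_ ?_ ?_ ?_ ?_ ((zaux_maj ε hε hε1).mul_left _) ?_ ?_
  · refine this.trans ?_
    gcongr
    simp only [Complex.ofReal_one, Complex.one_cpow, norm_div, norm_one]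
    rw [div_le_one (by linarith)]; exact hn1
  · intro u hu
    have h := (zaux_hasDeriv (1-s) u hu hs1).div_const (1-s)
    refine HasDerivAt.congr_deriv h ?_
    rw [mul_comm, mul_div_assoc, div_self hs1, mul_one, show 1 - s - 1 = -s by ring]
  · intro u hu
    exact zaux_hasDeriv (-s) u hu hs0
  · intro n u hu
    exact zaux_norm_cpow s hs.le _ u (by linarith [(n.cast_nonneg : (0:ℝ) ≤ n)]) hu.1
  · intro n u hu
    simp only [norm_mul, norm_neg]
    gcongr
    exact zaux_norm_cpow' s hs.le _ u (by linarith [(n.cast_nonneg : (0:ℝ) ≤ n)]) hu.1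
  · intro n
    have hn : (0:ℝ) ≤ n := n.cast_nonneg
    have hl : 2/3 ≤ Real.log ((n:ℝ)+1+1) := by
      have := Real.log_le_log (by norm_num : (0:ℝ) < 2) (by linarith : (2:ℝ) ≤ n+1+1)
      linarith [Real.log_two_gt_d9]
    refine zaux_min ε ‖s‖ _ _ _ _ hε hε1 (norm_nonneg _) (by linarith) (by linarith) ?_ ?_
    · rw [mul_one_div]; gcongr; linarith
    · rw [mul_one_div]; gcongr; nlinarith
  · simpa using (zaux_lim s hs).div_const (1-s)
  · have h1 := zeta_eq_tsum_one_div_nat_add_one_cpow hs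
    have h2 : Summable (fun n : ℕ => 1 / ((n:ℂ)+1)^s) := by
      have := (summable_nat_add_iff 1).2 (Complex.summable_one_div_nat_cpow.2 hs)
      simpa using this
    rw [h1]
    convert h2.hasSum using 2 with n
    push_cast
    rw [Complex.cpow_neg, one_div]

lemma zeta_deriv_bound (ε : ℝ) (hε : 0 < ε) (hε1 : ε < 1) (s : ℂ) (hs : 1 < s.re) (hi : 1 ≤ |s.im|) :
    ‖deriv riemannZeta s‖ ≤
      1 + ‖s‖ ^ ε * ∑' n : ℕ, 3 * Real.log ((n:ℝ)+1+1) / ((n:ℝ)+1) ^ (1 + ε) := by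
  have hs1 : 1 - s ≠ 0 := fun h => by
    have := congrArg Complex.re h; simp at this; linarith
  have hs0 : -s ≠ 0 := fun h => by
    have := congrArg Complex.re h; simp at this; linarith
  have hn1 : 1 ≤ ‖1 - s‖ := hi.trans (by simpa using Complex.abs_im_le_norm (1 - s))
  have hsn : 1 ≤ ‖s‖ := hi.trans (Complex.abs_im_le_norm s)
  have hd : deriv riemannZeta s = - LSeries (LSeries.logMul 1) s := by
    rw [← LSeries_deriv (by rw [LSeries.abscissaOfAbsConv_one]; exact_mod_cast hs)]
    apply Filter.EventuallyEq.deriv_eq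
    have : {z : ℂ | 1 < z.re} ∈ nhds s := (isOpen_lt continuous_const Complex.continuous_re).mem_nhds hs
    filter_upwards [this] with z hz
    exact (LSeries_one_eq_riemannZeta hz).symm
  rw [hd, norm_neg, ← tsum_mul_left]
  have hA : ∀ n : ℕ, ∀ u ∈ Set.Icc ((n:ℝ)+1) (n+1+1), |Real.log u| ≤ Real.log ((n:ℝ)+1+1) := by
    intro n u hu
    have hn : (0:ℝ) ≤ n := n.cast_nonneg
    rw [abs_of_nonneg (Real.log_nonneg (by linarith [hu.1]))]
    exact Real.log_le_log (by linarith [hu.1]) hu.2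
  have hB : ∀ n : ℕ, 2/3 ≤ Real.log ((n:ℝ)+1+1) := by
    intro n
    have hn : (0:ℝ) ≤ n := n.cast_nonneg
    have := Real.log_le_log (by norm_num : (0:ℝ) < 2) (by linarith : (2:ℝ) ≤ n+1+1)
    linarith [Real.log_two_gt_d9]
  have := zaux_sum (fun u => ((Real.log u : ℝ):ℂ) * (u:ℂ)^(-s))
    (fun u => ((Real.log u : ℝ):ℂ) * (u:ℂ)^(1-s) / (1-s) - (u:ℂ)^(1-s) / (1-s)^2)
    (fun u => (u:ℂ)^(-s-1) * (1 - s * ((Real.log u : ℝ):ℂ)))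
    (fun n : ℕ => ‖s‖ ^ ε * (3 * Real.log ((n:ℝ)+1+1) / ((n:ℝ)+1) ^ (1 + ε)))
    (fun n => Real.log ((n:ℝ)+1+1) * (1 / ((n:ℝ)+1)))
    (fun n => (1 / ((n:ℝ)+1)^2) * (1 + ‖s‖ * Real.log ((n:ℝ)+1+1)))
    (LSeries (LSeries.logMul 1) s)
    ?_ ?_ ?_ ?_ ?_ ((zaux_maj ε hε hε1).mul_left _) ?_ ?_
  · refine this.trans ?_
    gcongr
    simp only [Complex.ofReal_one, Complex.one_cpow, norm_div, norm_one, Real.log_one,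
      Complex.ofReal_zero, zero_mul, zero_div, zero_sub, norm_neg, norm_pow]
    rw [div_le_one (by positivity)]; exact one_le_pow₀ hn1
  · intro u hu
    have hu0 : (u:ℂ) ≠ 0 := by exact_mod_cast (by linarith : u ≠ 0)
    have h := (((zaux_log u hu).mul (zaux_hasDeriv (1-s) u hu hs1)).div_const (1-s)).sub
      ((zaux_hasDeriv (1-s) u hu hs1).div_const ((1-s)^2))
    refine HasDerivAt.congr_deriv h ?_
    rw [show (1 - s - 1) = -s by ring, show (1 - s) = -s + 1 by ring, Complex.cpow_add _ _ hu0,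
      Complex.cpow_one]
    have : -s + 1 ≠ 0 := by rwa [neg_add_eq_sub]
    field_simp
    ring
  · intro u hu
    have hu0 : (u:ℂ) ≠ 0 := by exact_mod_cast (by linarith : u ≠ 0)
    have h := (zaux_log u hu).mul (zaux_hasDeriv (-s) u hu hs0)
    refine HasDerivAt.congr_deriv h ?_
    rw [Complex.cpow_sub _ _ hu0, Complex.cpow_one]
    field_simp
    ring
  · intro n u hu
    rw [norm_mul, Complex.norm_real, Real.norm_eq_abs]
    have := hB n
    gcongr
    · exact hA n u hu
    · exact zaux_norm_cpow s hs.le _ u (by linarith [(n.cast_nonneg : (0:ℝ) ≤ n)]) hu.1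
  · intro n u hu
    rw [norm_mul]
    gcongr
    · exact zaux_norm_cpow' s hs.le _ u (by linarith [(n.cast_nonneg : (0:ℝ) ≤ n)]) hu.1
    · refine (norm_sub_le _ _).trans ?_
      rw [norm_one, norm_mul, Complex.norm_real, Real.norm_eq_abs]
      gcongr
      exact hA n u hu
  · intro n
    have hn : (0:ℝ) ≤ n := n.cast_nonneg
    have hl := hB n
    refine zaux_min ε ‖s‖ _ _ _ _ hε hε1 (norm_nonneg _) (by linarith) (by linarith) ?_ ?_
    · rw [mul_one_div, ← mul_div_assoc]; gcongr; linarith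
    · rw [one_div_mul_eq_div]; gcongr; nlinarith
  · simpa using ((zaux_lim_log s hs).div_const (1-s)).sub ((zaux_lim s hs).div_const ((1-s)^2))
  · have h2 : LSeriesSummable (LSeries.logMul 1) s :=
      LSeriesSummable_logMul_of_lt_re (by rw [LSeries.abscissaOfAbsConv_one]; exact_mod_cast hs)
    have h3 := (hasSum_nat_add_iff' 1).2 h2.LSeriesHasSum
    simp only [Finset.range_one, Finset.sum_singleton, LSeries.term_zero, sub_zero] at h3
    convert! h3 using 2 with n
    rw [LSeries.term_of_ne_zero (by omega), Complex.cpow_neg]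
    simp [LSeries.logMul, div_eq_mul_inv]
    left
    have := Complex.natCast_log (n := n + 1)
    push_cast at this
    exact this


lemma zeta_bounds : ∃ K : ℝ, 1 ≤ K ∧ ∀ s : ℂ, 1 < s.re → s.re ≤ 2 → 1 ≤ |s.im| →
    ‖riemannZeta s‖ ≤ K * |s.im| ^ (1/60:ℝ) ∧ ‖deriv riemannZeta s‖ ≤ K * |s.im| ^ (1/60:ℝ) := by
  set A := ∑' n : ℕ, 3 * Real.log ((n:ℝ)+1+1) / ((n:ℝ)+1) ^ (1 + (1/60:ℝ)) with hA
  have hA0 : 0 ≤ A := tsum_nonneg (fun n => by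
    have hn : (0:ℝ) ≤ n := n.cast_nonneg
    have := Real.log_nonneg (by linarith : (1:ℝ) ≤ n + 1 + 1)
    positivity)
  refine ⟨1 + 3 * A, by linarith, ?_⟩
  intro s h1 h2 h3
  have hT : 1 ≤ |s.im| ^ (1/60:ℝ) := Real.one_le_rpow h3 (by norm_num)
  have hs : ‖s‖ ^ (1/60:ℝ) ≤ 3 * |s.im| ^ (1/60:ℝ) := by
    have hns : ‖s‖ ≤ 3 * |s.im| := by
      have := Complex.norm_le_abs_re_add_abs_im s
      rw [abs_of_pos (by linarith : 0 < s.re)] at this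
      linarith
    calc ‖s‖ ^ (1/60:ℝ) ≤ (3 * |s.im|) ^ (1/60:ℝ) :=
          Real.rpow_le_rpow (norm_nonneg _) hns (by norm_num)
      _ = 3 ^ (1/60:ℝ) * |s.im| ^ (1/60:ℝ) := Real.mul_rpow (by norm_num) (abs_nonneg _)
      _ ≤ 3 * |s.im| ^ (1/60:ℝ) := by
        gcongr
        calc (3:ℝ)^(1/60:ℝ) ≤ 3^(1:ℝ) := Real.rpow_le_rpow_of_exponent_le (by norm_num) (by norm_num)
          _ = 3 := by simp
  have key : 1 + ‖s‖ ^ (1/60:ℝ) * A ≤ (1 + 3 * A) * |s.im| ^ (1/60:ℝ) := by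
    have := mul_le_mul_of_nonneg_right hs hA0
    nlinarith
  exact ⟨(zeta_bound (1/60) (by norm_num) (by norm_num) s h1 h3).trans key,
    (zeta_deriv_bound (1/60) (by norm_num) (by norm_num) s h1 h3).trans key⟩

/-- `(s-1)ζ(s)` -/
noncomputable def zetaOne : ℂ → ℂ := DirichletCharacter.LFunctionTrivChar₁ 1

lemma zetaOne_of_ne {s : ℂ} (hs : s ≠ 1) : zetaOne s = (s - 1) * riemannZeta s := by
  rw [zetaOne, DirichletCharacter.LFunctionTrivChar₁, Function.update_of_ne hs,
    DirichletCharacter.LFunctionTrivChar, DirichletCharacter.LFunction_modOne_eq]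

lemma zetaOne_diff : Differentiable ℂ zetaOne := DirichletCharacter.differentiable_LFunctionTrivChar₁ 1

lemma zetaOne_deriv {s : ℂ} (hs : s ≠ 1) :
    deriv zetaOne s = (s - 1) * deriv riemannZeta s + riemannZeta s := by
  have := DirichletCharacter.deriv_LFunctionTrivChar₁_apply_of_ne_one 1 hs
  rw [DirichletCharacter.LFunctionTrivChar, DirichletCharacter.LFunction_modOne_eq] at this
  exact this

lemma zetaOne_ne_zero {s : ℂ} (hs : 1 ≤ s.re) : zetaOne s ≠ 0 := by
  by_cases h : s = 1
  · rw [h]; exact DirichletCharacter.LFunctionTrivChar₁_apply_one_ne_zero 1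
  · rw [zetaOne_of_ne h]
    exact mul_ne_zero (sub_ne_zero.2 h) (riemannZeta_ne_zero_of_one_le_re hs)

lemma zeta_real_bound : ∃ K : ℝ, 1 ≤ K ∧ ∀ x : ℝ, 0 < x → x ≤ 1 → ‖riemannZeta (1 + x)‖ ≤ K / x := by
  have hcont : ContinuousOn (fun x : ℝ => zetaOne (1 + x)) (Set.Icc 0 1) :=
    (zetaOne_diff.continuous.comp (by fun_prop)).continuousOn
  obtain ⟨K, hK⟩ := isCompact_Icc.exists_bound_of_continuousOn hcont
  refine ⟨max 1 K, le_max_left _ _, fun x hx hx1 => ?_⟩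
  have h := hK x ⟨hx.le, hx1⟩
  have hne : (1:ℂ) + x ≠ 1 := by
    simp; exact hx.ne'
  rw [zetaOne_of_ne hne] at h
  rw [le_div_iff₀ hx]
  simp only [add_sub_cancel_left, norm_mul, Complex.norm_real, Real.norm_of_nonneg hx.le] at h
  rw [mul_comm]
  exact h.trans (le_max_right _ _)

lemma zeta_341 {x : ℝ} (hx : 0 < x) (y : ℝ) :
    1 ≤ ‖riemannZeta (1 + x)‖ ^ 3 * ‖riemannZeta (1 + x + Complex.I * y)‖ ^ 4 *
      ‖riemannZeta (1 + x + 2 * Complex.I * y)‖ := by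
  have := DirichletCharacter.norm_LFunction_product_ge_one (N := 1) 1 hx y
  rw [DirichletCharacter.LFunctionTrivChar] at this
  simp only [DirichletCharacter.LFunction_modOne_eq, norm_mul, norm_pow] at this
  exact this

lemma zeta_lower : ∃ c : ℝ, 0 < c ∧ ∀ x t : ℝ, 0 < x → x ≤ 1 → 1 ≤ |t| →
    c ≤ ‖riemannZeta (1 + x + Complex.I * t)‖ * (|t| ^ (1/60:ℝ)) ^ 7 := by
  obtain ⟨K, hK1, hK⟩ := zeta_bounds
  obtain ⟨K0, hK01, hK0⟩ := zeta_real_bound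
  set C := 2 * K * K0 ^ 3 with hC
  have hK03 : 1 ≤ K0 ^ 3 := one_le_pow₀ hK01
  have hC1 : 1 ≤ C := by nlinarith
  refine ⟨1 / (16 * C^4 * K^3), by positivity, ?_⟩
  intro x t hx hx1 ht
  set T := |t| ^ (1/60:ℝ) with hTdef
  have hT : 1 ≤ T := Real.one_le_rpow ht (by norm_num)
  -- first bound
  have first : ∀ x y : ℝ, 0 < x → x ≤ 1 → 0 < y → y ^ 4 ≤ x →
      y ^ 3 / (C * T) ≤ ‖riemannZeta (1 + x + Complex.I * t)‖ := by
    intro x y hx hx1 hy hxy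
    set W := ‖riemannZeta (1 + x + Complex.I * t)‖ with hW
    have h1 := zeta_341 hx t
    have h2 := hK0 x hx hx1
    have h3 := (hK (1 + x + 2 * Complex.I * t) (by simp; exact hx) (by simp; linarith)
      (by simp [abs_mul]; linarith)).1
    have him : |(1 + (x:ℂ) + 2 * Complex.I * t).im| = 2 * |t| := by simp [abs_mul]
    rw [him] at h3
    have h4 : (2 * |t|) ^ (1/60:ℝ) ≤ 2 * T := by
      rw [Real.mul_rpow (by norm_num) (abs_nonneg _)]
      gcongr
      calc (2:ℝ)^(1/60:ℝ) ≤ 2^(1:ℝ) := Real.rpow_le_rpow_of_exponent_le (by norm_num) (by norm_num)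
        _ = 2 := by simp
    have h5 : ‖riemannZeta (1 + x + 2 * Complex.I * t)‖ ≤ 2 * K * T := by
      refine h3.trans ?_
      nlinarith
    have h6 : 1 ≤ (K0 / x)^3 * W ^ 4 * (2 * K * T) := by
      refine h1.trans ?_
      gcongr
    have h7 : x ^ 3 ≤ C * T * W ^ 4 := by
      have : (K0 / x)^3 * W ^ 4 * (2 * K * T) = (C * T * W^4) / x^3 := by
        rw [hC]; field_simp
      rw [this, le_div_iff₀ (by positivity)] at h6
      linarith
    have h8 : (y^3)^4 ≤ C * T * W^4 := by
      refine le_trans ?_ h7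
      calc (y^3)^4 = (y^4)^3 := by ring
        _ ≤ x^3 := by gcongr
    have hCT : 1 ≤ C * T := by nlinarith
    rw [div_le_iff₀ (by positivity)]
    have h9 : (y^3)^4 ≤ (W * (C * T))^4 := by
      refine h8.trans ?_
      have : C * T ≤ (C*T)^4 := le_self_pow₀ hCT (by norm_num)
      calc C * T * W^4 ≤ (C*T)^4 * W^4 := by gcongr
        _ = _ := by ring
    exact le_of_pow_le_pow_left₀ (by norm_num) (by positivity) h9
  set y := 1 / (2 * C * K * T^2) with hy
  have hT2 : 1 ≤ T^2 := one_le_pow₀ hT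
  have hCK : 1 ≤ C * K := by nlinarith
  have hden : 1 ≤ 2 * C * K * T^2 := by nlinarith
  have hy0 : 0 < y := by positivity
  have hy1 : y ≤ 1 := by rw [hy, div_le_one (by linarith)]; exact hden
  have hy4 : y ^ 4 ≤ 1 := pow_le_one₀ hy0.le hy1
  -- goal: y^3/(2CT) ≤ W
  have main : y ^ 3 / (2 * (C * T)) ≤ ‖riemannZeta (1 + x + Complex.I * t)‖ := by
    rcases le_total (y^4) x with h | h
    · refine le_trans ?_ (first x y hx hx1 hy0 h)
      have : 0 < C * T := by positivity
      exact div_le_div_of_nonneg_left (by positivity) this (by linarith)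
    · have h1 := first (y^4) y (by positivity) hy4 hy0 le_rfl
      have hmv : ‖riemannZeta (1 + x + Complex.I * t) - riemannZeta (1 + (y^4:ℝ) + Complex.I * t)‖
          ≤ K * T * ‖x - y^4‖ := by
        have := Convex.norm_image_sub_le_of_norm_hasDerivWithin_le (𝕜 := ℝ)
          (f := fun u : ℝ => riemannZeta (1 + u + Complex.I * t))
          (f' := fun u : ℝ => deriv riemannZeta (1 + u + Complex.I * t)) (s := Set.Ioc 0 1)
          (C := K * T) (x := y^4) (y := x) ?_ ?_ (convex_Ioc _ _) ⟨by positivity, hy4⟩ ⟨hx, hx1⟩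
        · exact this
        · intro u hu
          refine HasDerivAt.hasDerivWithinAt ?_
          have hne : (1:ℂ) + u + Complex.I * t ≠ 1 := fun h => by
            have := congrArg Complex.re h
            simp at this
            linarith [hu.1]
          have hz := (differentiableAt_riemannZeta hne).hasDerivAt
          have hi : HasDerivAt (fun u : ℝ => (1:ℂ) + u + Complex.I * t) 1 u := by
            simpa using ((Complex.ofRealCLM.hasDerivAt (x := u)).const_add (1:ℂ)).add_const (Complex.I * t)
          have := HasDerivAt.scomp u hz hi
          simpa [Function.comp_def] using this
        · intro u hu
          have := (hK (1 + u + Complex.I * t) (by simp; exact hu.1) (by simp; linarith [hu.2])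
            (by simpa using ht)).2
          simpa [hTdef] using this
      have hn : ‖x - y^4‖ ≤ y^4 := by
        rw [Real.norm_eq_abs, abs_le]; constructor <;> linarith
      have hmv2 : ‖riemannZeta (1 + x + Complex.I * t) - riemannZeta (1 + (y^4:ℝ) + Complex.I * t)‖
          ≤ y^3 / (2 * (C * T)) := by
        refine hmv.trans ?_
        calc K * T * ‖x - y^4‖ ≤ K * T * y^4 := by gcongr
          _ = y^3 * (K * T * y) := by ring
          _ = y^3 * (1 / (2 * (C * T))) := by
            congr 1; rw [hy]; field_simp
          _ = _ := by ring
      have htri := norm_sub_norm_le (riemannZeta (1 + (y^4:ℝ) + Complex.I * t))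
        (riemannZeta (1 + x + Complex.I * t))
      rw [norm_sub_rev] at htri
      have : y^3 / (C*T) = y ^ 3 / (2 * (C * T)) + y ^ 3 / (2 * (C * T)) := by field_simp; ring
      linarith
  have : 1 / (16 * C^4 * K^3) = y ^ 3 / (2 * (C * T)) * T ^ 7 := by
    rw [hy]; field_simp; norm_num
  rw [this]
  gcongr

/-- The main analytic bound. -/
lemma inv_zetaOne_deriv_bound : ∃ K : ℝ, 0 < K ∧ ∀ x t : ℝ, 0 < x → x ≤ 1 →
    ‖deriv zetaOne (1 + x + Complex.I * t) / zetaOne (1 + x + Complex.I * t) ^ 2‖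
      ≤ K * (1 + |t|) ^ (-(3/4):ℝ) := by
  obtain ⟨K, hK1, hK⟩ := zeta_bounds
  obtain ⟨c, hc, hcl⟩ := zeta_lower
  have hcont : ContinuousOn (fun p : ℝ × ℝ => deriv zetaOne (1 + p.1 + Complex.I * p.2) /
      zetaOne (1 + p.1 + Complex.I * p.2) ^ 2) (Set.Icc 0 1 ×ˢ Set.Icc (-1) 1) := by
    have h1 : Continuous (fun p : ℝ × ℝ => (1:ℂ) + p.1 + Complex.I * p.2) := by fun_prop
    have h2 : Continuous (deriv zetaOne) :=
      (zetaOne_diff.contDiff (n := 1)).continuous_deriv le_rfl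
    refine ContinuousOn.div (h2.comp h1).continuousOn
      ((zetaOne_diff.continuous.comp h1).pow 2).continuousOn ?_
    intro p hp
    refine pow_ne_zero _ (zetaOne_ne_zero ?_)
    simp; exact hp.1.1
  obtain ⟨K2, hK2⟩ := (isCompact_Icc.prod isCompact_Icc).exists_bound_of_continuousOn hcont
  refine ⟨2 * (max 1 K2) + 2 * (3 * K / c^2), by positivity, ?_⟩
  intro x t hx hx1
  have hb : 0 < 1 + |t| := by positivity
  rcases le_total |t| 1 with ht | ht
  · have h := hK2 (x, t) ⟨⟨hx.le, hx1⟩, abs_le.1 ht⟩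
    have h1 : (1:ℝ)/2 ≤ (1 + |t|) ^ (-(3/4):ℝ) := by
      calc (1:ℝ)/2 = 2 ^ (-1:ℝ) := by rw [Real.rpow_neg_one]; norm_num
        _ ≤ 2 ^ (-(3/4):ℝ) := Real.rpow_le_rpow_of_exponent_le (by norm_num) (by norm_num)
        _ ≤ _ := Real.rpow_le_rpow_of_nonpos hb (by linarith) (by norm_num)
    have h2 : K2 ≤ max 1 K2 := le_max_right _ _
    have h3 : 0 < max 1 K2 := by positivity
    have h4 : 0 ≤ 3 * K / c^2 := by positivity
    refine h.trans ?_
    nlinarith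
  · set w : ℂ := 1 + x + Complex.I * t with hw
    have hre : w.re = 1 + x := by simp [hw]
    have him : w.im = t := by simp [hw]
    have hne : w ≠ 1 := fun h => by
      have := congrArg Complex.re h
      rw [hre] at this; simp at this; linarith
    set T := |t| ^ (1/60:ℝ) with hTdef
    have hT : 1 ≤ T := Real.one_le_rpow ht (by norm_num)
    obtain ⟨hz, hz'⟩ := hK w (by rw [hre]; linarith) (by rw [hre]; linarith) (by rw [him]; exact ht)
    rw [him] at hz hz'
    have hl := hcl x t hx hx1 ht
    rw [← hw] at hl
    set W := ‖riemannZeta w‖ with hW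
    have hW0 : 0 < W := by
      rw [hW, norm_pos_iff]; exact riemannZeta_ne_zero_of_one_le_re (by rw [hre]; linarith)
    have hw1 : w - 1 = x + Complex.I * t := by rw [hw]; ring
    have hlow : |t| ≤ ‖w - 1‖ := by
      have := Complex.abs_im_le_norm (w - 1); simpa [him] using this
    have hup : ‖w - 1‖ ≤ 2 * |t| := by
      have := Complex.norm_le_abs_re_add_abs_im (w - 1)
      simp only [Complex.sub_re, Complex.sub_im, hre, him, Complex.one_re, Complex.one_im, sub_zero,
        add_sub_cancel_left, abs_of_pos hx] at this
      linarith
    rw [zetaOne_deriv hne, zetaOne_of_ne hne, norm_div, norm_pow, norm_mul]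
    have hnum : ‖(w - 1) * deriv riemannZeta w + riemannZeta w‖ ≤ 3 * |t| * (K * T) := by
      refine (norm_add_le _ _).trans ?_
      rw [norm_mul]
      have : ‖w - 1‖ * ‖deriv riemannZeta w‖ ≤ 2 * |t| * (K * T) := by gcongr
      have h2 : K * T ≤ |t| * (K * T) := le_mul_of_one_le_left (by positivity) ht
      linarith
    have hden : (|t| * (c / T^7))^2 ≤ (‖w - 1‖ * W)^2 := by
      have : c / T^7 ≤ W := by rw [div_le_iff₀ (by positivity)]; exact hl
      gcongr
    have ht0 : 0 < |t| := by linarith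
    have hT15 : T ^ 15 = |t| ^ (1/4:ℝ) := by
      rw [hTdef, ← Real.rpow_natCast, ← Real.rpow_mul (abs_nonneg _)]; norm_num
    have hexp : |t| ^ (1/4:ℝ) / |t| = |t| ^ (-(3/4):ℝ) := by
      conv_lhs => rw [← Real.rpow_one |t|, ← Real.rpow_mul ht0.le, ← Real.rpow_sub ht0]
      norm_num
    have hlast : |t| ^ (-(3/4):ℝ) ≤ 2 * (1 + |t|) ^ (-(3/4):ℝ) := by
      have h1 : (2 * |t|) ^ (-(3/4):ℝ) ≤ (1 + |t|) ^ (-(3/4):ℝ) :=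
        Real.rpow_le_rpow_of_nonpos hb (by linarith) (by norm_num)
      rw [Real.mul_rpow (by norm_num) ht0.le] at h1
      have h2 : (1:ℝ)/2 ≤ 2 ^ (-(3/4):ℝ) := by
        calc (1:ℝ)/2 = 2 ^ (-1:ℝ) := by rw [Real.rpow_neg_one]; norm_num
          _ ≤ _ := Real.rpow_le_rpow_of_exponent_le (by norm_num) (by norm_num)
      have h3 : 0 ≤ |t| ^ (-(3/4):ℝ) := by positivity
      nlinarith
    calc _ ≤ 3 * |t| * (K * T) / (|t| * (c / T^7))^2 := by gcongr
      _ = 3 * K / c^2 * (T^15 / |t|) := by field_simp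
      _ = 3 * K / c^2 * |t| ^ (-(3/4):ℝ) := by rw [hT15, hexp]
      _ ≤ 3 * K / c^2 * (2 * (1 + |t|) ^ (-(3/4):ℝ)) := by gcongr
      _ ≤ _ := by
        have h3 : 0 < max 1 K2 := by positivity
        have h5 : 0 ≤ (1 + |t|) ^ (-(3/4):ℝ) := by positivity
        nlinarith


/-- partial sums of `μ(n)/n` -/
noncomputable def Amu (y : ℝ) : ℝ := ∑ n ∈ Finset.Icc 1 ⌊y⌋₊, (moebius n : ℝ) / n

lemma abs_moebius_le (n : ℕ) : |(moebius n : ℝ)| ≤ 1 := by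
  have := abs_moebius_le_one (n := n)
  exact_mod_cast this

lemma abs_Amu_nat (N : ℕ) : ∑ n ∈ Finset.Icc 1 N, |(moebius n : ℝ) / n| ≤ 1 + Real.log N := by
  have h := harmonic_le_one_add_log N
  refine le_trans ?_ h
  rw [harmonic_eq_sum_Icc]
  push_cast
  refine Finset.sum_le_sum (fun n hn => ?_)
  rw [abs_div, Nat.abs_cast, inv_eq_one_div]
  gcongr
  exact abs_moebius_le n

lemma abs_Amu_le (y : ℝ) (hy : 1 ≤ y) : |Amu y| ≤ 1 + Real.log y := by
  refine (Finset.abs_sum_le_sum_abs _ _).trans ((abs_Amu_nat _).trans ?_)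
  have h1 : 1 ≤ ⌊y⌋₊ := Nat.one_le_floor_iff y |>.2 hy
  have : Real.log (⌊y⌋₊ : ℝ) ≤ Real.log y :=
    Real.log_le_log (by exact_mod_cast h1) (Nat.floor_le (by linarith))
  linarith

lemma Amu_laplace (s : ℂ) (hs : 0 < s.re) :
    ∫ t in Set.Ioi (1 : ℝ), (Amu t : ℂ) * (t:ℂ) ^ (-(s + 1)) = 1 / zetaOne (1 + s) := by
  set f : ℕ → ℂ := fun n => (moebius n : ℂ) / n with hf
  have hre : 1 < (s + 1).re := by simpa using hs
  have hterm : LSeries.term f s = LSeries.term (fun n => (moebius n : ℂ)) (s + 1) := by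
    ext n
    rcases eq_or_ne n 0 with rfl | hn
    · simp
    · have hn' : (n:ℂ) ≠ 0 := by exact_mod_cast hn
      rw [LSeries.term_of_ne_zero hn, LSeries.term_of_ne_zero hn, Complex.cpow_add _ _ hn',
        Complex.cpow_one, hf]
      field_simp
  have hS : LSeriesSummable f s := by
    rw [LSeriesSummable, hterm]
    exact LSeriesSummable_moebius_iff.2 hre
  have hLS : LSeries f s = LSeries (fun n => (moebius n : ℂ)) (s + 1) := by
    rw [LSeries, LSeries, hterm]
  have hprod := LSeries_zeta_mul_Lseries_moebius hre
  rw [LSeries_zeta_eq_riemannZeta hre, ← hLS] at hprod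
  have hO : (fun n ↦ ∑ k ∈ Finset.Icc 1 n, f k) =O[Filter.atTop] fun n ↦ (n : ℝ) ^ (s.re/2) := by
    have h1 : (fun n : ℕ ↦ ∑ k ∈ Finset.Icc 1 n, f k) =O[Filter.atTop]
        fun n : ℕ ↦ 1 + Real.log n := by
      refine Asymptotics.IsBigO.of_bound 1 (Filter.Eventually.of_forall fun n => ?_)
      rw [one_mul]
      refine le_trans ?_ (Real.le_norm_self _)
      refine le_trans (norm_sum_le _ _) (le_trans (le_of_eq ?_) (abs_Amu_nat n))
      refine Finset.sum_congr rfl fun k _ => ?_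
      rw [hf, ← Real.norm_eq_abs, ← Complex.norm_real]; push_cast; rfl
    refine h1.trans ?_
    have h2 : (fun x : ℝ => 1 + Real.log x) =O[Filter.atTop] fun x => x ^ (s.re/2) := by
      refine Asymptotics.IsBigO.add ?_ (isLittleO_log_rpow_atTop (by linarith)).isBigO
      refine Asymptotics.IsBigO.of_bound 1 ?_
      filter_upwards [Filter.eventually_ge_atTop 1] with x hx
      have := Real.one_le_rpow hx (by linarith : 0 ≤ s.re/2)
      rw [one_mul, norm_one, Real.norm_of_nonneg (by linarith)]
      exact this
    exact h2.comp_tendsto tendsto_natCast_atTop_atTop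
  have h := LSeries_eq_mul_integral f (by linarith : 0 ≤ s.re/2) (by linarith) hS hO
  have hs0 : s ≠ 0 := fun h => by simp [h] at hs
  have hz : riemannZeta (s+1) ≠ 0 := riemannZeta_ne_zero_of_one_le_re hre.le
  have hne : 1 + s ≠ 1 := by simpa using hs0
  rw [zetaOne_of_ne hne, add_sub_cancel_left, add_comm 1 s]
  have hI : ∫ t in Set.Ioi (1 : ℝ), (Amu t : ℂ) * (t:ℂ) ^ (-(s + 1)) =
      ∫ t in Set.Ioi (1 : ℝ), (∑ k ∈ Finset.Icc 1 ⌊t⌋₊, f k) * (t:ℂ) ^ (-(s + 1)) := by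
    congr 1; ext t; congr 1; simp [Amu, hf]
  rw [hI]
  rw [h] at hprod
  rw [eq_div_iff (mul_ne_zero hs0 hz)]
  refine Eq.trans ?_ hprod
  ring

lemma Amu_laplace_exp (s : ℂ) (hs : 0 < s.re) :
    ∫ u in Set.Ioi (0 : ℝ), (Amu (Real.exp u) : ℂ) * Complex.exp (-(s * u)) =
      1 / zetaOne (1 + s) := by
  rw [← Amu_laplace s hs]
  have himg : Real.exp '' (Set.Ioi 0) = Set.Ioi 1 := by
    ext y; constructor
    · rintro ⟨x, hx, rfl⟩; exact Real.one_lt_exp_iff.2 hx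
    · intro hy
      have hy' : (1:ℝ) < y := hy
      exact ⟨Real.log y, Real.log_pos hy', Real.exp_log (by linarith)⟩
  rw [← himg, MeasureTheory.integral_image_eq_integral_abs_deriv_smul measurableSet_Ioi
    (fun x _ => (Real.hasDerivAt_exp x).hasDerivWithinAt) (Real.exp_injective.injOn)]
  refine MeasureTheory.setIntegral_congr_fun measurableSet_Ioi (fun u hu => ?_)
  simp only [Real.abs_exp, Complex.real_smul, Complex.ofReal_exp]
  rw [Complex.cpow_def_of_ne_zero (Complex.exp_ne_zero _), ← Complex.ofReal_exp,
    ← Complex.ofReal_log (Real.exp_pos u).le, Real.log_exp, mul_left_comm, Complex.ofReal_exp,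
    ← Complex.exp_add]
  congr 2
  ring

/-- damped function -/
noncomputable def gmu (σ : ℝ) : ℝ → ℂ :=
  (Set.Ioi (0:ℝ)).indicator (fun u => ((Amu (Real.exp u) * Real.exp (-(σ * u)) : ℝ) : ℂ))

lemma Amu_meas : Measurable Amu := by
  have : Amu = (fun N : ℕ => ∑ n ∈ Finset.Icc 1 N, (moebius n : ℝ) / n) ∘ (fun y : ℝ => ⌊y⌋₊) := rfl
  rw [this]
  exact measurable_from_top.comp Nat.measurable_floor

lemma gmu_meas (σ : ℝ) : Measurable (gmu σ) := by
  refine Measurable.indicator ?_ measurableSet_Ioi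
  exact Complex.measurable_ofReal.comp ((Amu_meas.comp Real.measurable_exp).mul (by fun_prop))

lemma gmu_norm_le (σ : ℝ) (hσ : 0 < σ) (u : ℝ) :
    (1 + |u|) * ‖gmu σ u‖ ≤ (Set.Ioi (0:ℝ)).indicator
      (fun u => (1 + 4/σ)^2 * Real.exp (-(σ/2) * u)) u := by
  by_cases hu : u ∈ Set.Ioi (0:ℝ)
  · have hu0 : 0 < u := hu
    rw [gmu, Set.indicator_of_mem hu, Set.indicator_of_mem hu, Complex.norm_real, Real.norm_eq_abs,
      abs_mul, abs_of_pos (Real.exp_pos _), abs_of_pos hu0]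
    have h1 := abs_Amu_le (Real.exp u) (Real.one_le_exp hu0.le)
    rw [Real.log_exp] at h1
    have h2 : 1 + u ≤ (1 + 4/σ) * Real.exp (σ * u / 4) := by
      have h3 := Real.add_one_le_exp (σ * u / 4)
      have h4 : 1 ≤ Real.exp (σ * u / 4) := Real.one_le_exp (by positivity)
      have h5 : u = 4/σ * (σ * u / 4) := by field_simp
      have h6 : 4/σ * (σ * u / 4) ≤ 4/σ * Real.exp (σ * u / 4) := by
        gcongr; linarith
      nlinarith
    calc (1 + u) * (|Amu (Real.exp u)| * Real.exp (-(σ*u)))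
        ≤ ((1 + 4/σ) * Real.exp (σ * u / 4)) * (((1 + 4/σ) * Real.exp (σ * u / 4)) *
          Real.exp (-(σ*u))) := by
          gcongr
          exact h1.trans h2
      _ = (1 + 4/σ)^2 * (Real.exp (σ * u / 4) * Real.exp (σ * u / 4) * Real.exp (-(σ*u))) := by ring
      _ = _ := by
        rw [← Real.exp_add, ← Real.exp_add]; congr 2; ring
  · simp [gmu, Set.indicator_of_notMem hu]

lemma gmu_dom (σ : ℝ) (hσ : 0 < σ) : MeasureTheory.Integrable ((Set.Ioi (0:ℝ)).indicator
      (fun u => (1 + 4/σ)^2 * Real.exp (-(σ/2) * u))) := by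
  rw [MeasureTheory.integrable_indicator_iff measurableSet_Ioi]
  exact (integrableOn_exp_mul_Ioi (by linarith) 0).const_mul _

lemma gmu_int (σ : ℝ) (hσ : 0 < σ) : MeasureTheory.Integrable (gmu σ) := by
  refine (gmu_dom σ hσ).mono' (gmu_meas σ).aestronglyMeasurable
    (Filter.Eventually.of_forall fun u => ?_)
  refine le_trans ?_ (gmu_norm_le σ hσ u)
  nlinarith [abs_nonneg u, norm_nonneg (gmu σ u), mul_nonneg (abs_nonneg u) (norm_nonneg (gmu σ u))]

lemma gmu_int' (σ : ℝ) (hσ : 0 < σ) : MeasureTheory.Integrable (fun u : ℝ => u • gmu σ u) := by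
  refine (gmu_dom σ hσ).mono' (measurable_id.smul (gmu_meas σ)).aestronglyMeasurable
    (Filter.Eventually.of_forall fun u => ?_)
  refine le_trans ?_ (gmu_norm_le σ hσ u)
  rw [norm_smul, Real.norm_eq_abs]
  nlinarith [abs_nonneg u, norm_nonneg (gmu σ u)]

section
open FourierTransform

lemma gmu_fourier (σ : ℝ) (hσ : 0 < σ) (ξ : ℝ) :
    𝓕 (gmu σ) ξ = 1 / zetaOne (1 + σ + Complex.I * ((2 * π * ξ : ℝ) : ℂ)) := by
  have h := Amu_laplace_exp (σ + Complex.I * ((2 * π * ξ : ℝ) : ℂ)) (by simpa using hσ)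
  rw [← add_assoc] at h
  rw [← h, Real.fourier_real_eq_integral_exp_smul, ← MeasureTheory.integral_indicator measurableSet_Ioi]
  congr 1
  ext u
  by_cases hu : u ∈ Set.Ioi (0:ℝ)
  · rw [gmu, Set.indicator_of_mem hu, Set.indicator_of_mem hu]
    push_cast
    rw [smul_eq_mul, mul_left_comm, ← Complex.exp_add]
    congr 2
    ring
  · simp [gmu, Set.indicator_of_notMem hu]

lemma gmu_fourier' (σ : ℝ) (hσ : 0 < σ) (ξ : ℝ) :
    𝓕 (fun u : ℝ => (u:ℂ) * gmu σ u) ξ =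
      deriv zetaOne (1 + σ + Complex.I * ((2 * π * ξ : ℝ) : ℂ)) /
        zetaOne (1 + σ + Complex.I * ((2 * π * ξ : ℝ) : ℂ)) ^ 2 := by
  have h1 := Real.hasDerivAt_fourier (gmu_int σ hσ) (gmu_int' σ hσ) ξ
  have hfun : 𝓕 (gmu σ) = fun ξ : ℝ => (zetaOne (1 + σ + Complex.I * ((2 * π * ξ : ℝ) : ℂ)))⁻¹ := by
    ext ξ; rw [gmu_fourier σ hσ ξ, one_div]
  have hc : 𝓕 (fun x : ℝ => (-2 * (π:ℂ) * Complex.I * x) • gmu σ x) ξ =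
      (-2 * (π:ℂ) * Complex.I) * 𝓕 (fun u : ℝ => (u:ℂ) * gmu σ u) ξ := by
    rw [Real.fourier_real_eq_integral_exp_smul, Real.fourier_real_eq_integral_exp_smul,
      ← MeasureTheory.integral_const_mul]
    congr 1; ext u
    simp only [smul_eq_mul]; ring
  have hne : zetaOne (1 + σ + Complex.I * ((2 * π * ξ : ℝ) : ℂ)) ≠ 0 :=
    zetaOne_ne_zero (by simp; exact hσ.le)
  have hlin : HasDerivAt (fun ξ : ℝ => (1:ℂ) + σ + Complex.I * ((2 * π * ξ : ℝ) : ℂ))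
      (Complex.I * (2 * π)) ξ := by
    have h2 : HasDerivAt (fun ξ : ℝ => ((2 * π * ξ : ℝ) : ℂ)) (2 * π) ξ := by
      have := ((hasDerivAt_id ξ).const_mul (2 * π)).ofReal_comp
      simpa using this
    exact (h2.const_mul Complex.I).const_add _
  have h3 := HasDerivAt.scomp ξ (zetaOne_diff _).hasDerivAt hlin
  have h4 := HasDerivAt.inv h3 hne
  rw [hfun] at h1
  have h5 := h1.unique h4
  rw [hc, smul_eq_mul] at h5
  have hpi : (-2 * (π:ℂ) * Complex.I) ≠ 0 := by
    simp [Real.pi_ne_zero]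
  apply mul_left_cancel₀ hpi
  rw [h5]
  simp only [Function.comp]
  field_simp

end

section
open FourierTransform SchwartzMap

lemma fourier_pair (g : ℝ → ℂ) (hg : MeasureTheory.Integrable g) (ψ : 𝓢(ℝ, ℂ)) :
    ∫ u, g u * 𝓕 ψ u = ∫ ξ, 𝓕 g ξ * ψ ξ := by
  symm
  simpa using! (VectorFourier.integral_fourierIntegral_smul_eq_flip (L := innerₗ ℝ)
      Real.continuous_fourierChar continuous_inner hg ψ.integrable)

lemma pair_bound : ∃ C : ℝ, 0 < C ∧ ∀ σ : ℝ, 0 < σ → σ ≤ 1 → ∀ (φ : 𝓢(ℝ, ℂ)) (h : ℝ), 0 < h →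
    ∫ u, ‖φ u‖ ^ 2 ≤ h → ‖∫ u : ℝ, ((u:ℂ) * gmu σ u) * φ u‖ ≤ C * √h := by
  obtain ⟨K, hK, hKb⟩ := inv_zetaOne_deriv_bound
  have hJi : MeasureTheory.Integrable (fun ξ : ℝ => (1 + ‖ξ‖) ^ (-(3/2 : ℝ))) :=
    integrable_one_add_norm (by simp; norm_num)
  set J := ∫ ξ : ℝ, (1 + ‖ξ‖) ^ (-(3/2 : ℝ)) with hJ
  have hJ0 : 0 ≤ J := MeasureTheory.integral_nonneg (fun ξ => by positivity)
  refine ⟨K / 2 * (J + 1), by positivity, fun σ hσ hσ1 φ h hh hφ => ?_⟩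
  have hr : 0 < √h := Real.sqrt_pos.2 hh
  set ψ : 𝓢(ℝ, ℂ) := 𝓕⁻ φ with hψ
  have hφψ : 𝓕 ψ = φ := FourierTransform.fourier_fourierInv_eq φ
  have hintg : MeasureTheory.Integrable (fun u : ℝ => (u:ℂ) * gmu σ u) := by
    simpa [Complex.real_smul] using gmu_int' σ hσ
  have h1 := fourier_pair _ hintg ψ
  rw [hφψ] at h1
  rw [h1]
  have hψ2 : ∫ ξ, ‖ψ ξ‖ ^ 2 ≤ h := by
    rw [← SchwartzMap.integral_norm_sq_fourier, hφψ]; exact hφ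
  have hψi : MeasureTheory.Integrable (fun ξ => ‖ψ ξ‖ ^ 2) :=
    (ψ.memLp 2).integrable_norm_pow (by norm_num)
  have hle := MeasureTheory.norm_integral_le_of_norm_le
    (f := fun ξ => 𝓕 (fun u : ℝ => (u:ℂ) * gmu σ u) ξ * ψ ξ)
    (g := fun ξ => K / 2 * (√h * (1 + ‖ξ‖) ^ (-(3/2 : ℝ)) + ‖ψ ξ‖ ^ 2 / √h))
    (((hJi.const_mul _).add (hψi.div_const _)).const_mul _) (Filter.Eventually.of_forall fun ξ => by
      show ‖_‖ ≤ _
      rw [norm_mul, gmu_fourier' σ hσ ξ]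
      have h2 := hKb σ (2 * π * ξ) hσ hσ1
      have h3 : (1 + |2 * π * ξ|) ^ (-(3/4):ℝ) ≤ (1 + ‖ξ‖) ^ (-(3/4):ℝ) := by
        apply Real.rpow_le_rpow_of_nonpos (by positivity) _ (by norm_num)
        rw [Real.norm_eq_abs, abs_mul, abs_of_pos (by positivity : 0 < 2 * π)]
        nlinarith [abs_nonneg ξ, Real.pi_gt_three]
      set a := (1 + ‖ξ‖) ^ (-(3/4):ℝ) with ha
      have ha2 : (1 + ‖ξ‖) ^ (-(3/2 : ℝ)) = a ^ 2 := by
        rw [ha, ← Real.rpow_natCast, ← Real.rpow_mul (by positivity)]; norm_num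
      rw [ha2]
      have h4 : a * ‖ψ ξ‖ ≤ 1/2 * (√h * a ^ 2 + ‖ψ ξ‖ ^ 2 / √h) := by
        have : √h * a ^ 2 + ‖ψ ξ‖ ^ 2 / √h - 2 * (a * ‖ψ ξ‖) = (√h * a - ‖ψ ξ‖) ^ 2 / √h := by
          field_simp; ring
        have : 0 ≤ (√h * a - ‖ψ ξ‖) ^ 2 / √h := by positivity
        linarith
      calc _ ≤ (K * a) * ‖ψ ξ‖ := by
            gcongr
            exact h2.trans (by gcongr)
        _ = K * (a * ‖ψ ξ‖) := by ring
        _ ≤ K * (1/2 * (√h * a ^ 2 + ‖ψ ξ‖ ^ 2 / √h)) := by gcongr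
        _ = _ := by ring)
  refine hle.trans ?_
  rw [MeasureTheory.integral_const_mul, MeasureTheory.integral_add (hJi.const_mul _) (hψi.div_const _),
    MeasureTheory.integral_const_mul, MeasureTheory.integral_div, ← hJ]
  have : (∫ ξ, ‖ψ ξ‖ ^ 2) / √h ≤ √h := by
    rw [div_le_iff₀ hr, Real.mul_self_sqrt hh.le]; exact hψ2
  calc _ ≤ K / 2 * (√h * J + √h) := by gcongr
    _ = _ := by ring

end

section
open FourierTransform SchwartzMap

lemma exists_bump (u h : ℝ) (hh : 0 < h) : ∃ (φ : 𝓢(ℝ, ℂ)) (b : ℝ → ℝ),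
    (∀ t, φ t = (b t : ℂ)) ∧ (∀ t, 0 ≤ b t) ∧ (∀ t, b t ≤ 1) ∧
    (∀ t, t ∉ Set.Ioo u (u + h) → b t = 0) ∧ MeasureTheory.Integrable b ∧ h / 2 ≤ ∫ t, b t ∧
    ∫ t, ‖φ t‖ ^ 2 ≤ h := by
  let f : ContDiffBump (u + h / 2) := ⟨h / 4, h / 2, by linarith, by linarith⟩
  have hsm : ContDiff ℝ ((⊤ : ℕ∞) : WithTop ℕ∞) (fun t => ((f t : ℝ) : ℂ)) :=
    Complex.ofRealCLM.contDiff.comp f.contDiff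
  have hcs : HasCompactSupport (fun t => ((f t : ℝ) : ℂ)) :=
    f.hasCompactSupport.comp_left (g := fun x : ℝ => (x:ℂ)) (by simp)
  have hintg : MeasureTheory.Integrable (fun t => f t) := f.integrable
  refine ⟨hcs.toSchwartzMap hsm, fun t => f t, fun t => rfl, fun t => f.nonneg, fun t => f.le_one,
    fun t ht => ?_, hintg, ?_, ?_⟩
  · refine f.zero_of_le_dist ?_
    show h / 2 ≤ _
    rw [Real.dist_eq]
    by_contra hc
    push Not at hc
    rw [abs_lt] at hc
    exact ht ⟨by linarith, by linarith⟩
  · have := f.measure_closedBall_le_integral MeasureTheory.volume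
    rw [MeasureTheory.Measure.real, Real.volume_closedBall, ENNReal.toReal_ofReal (by positivity)] at this
    have h2 : f.rIn = h / 4 := rfl
    rw [h2] at this
    linarith
  · have := f.integral_le_measure_closedBall MeasureTheory.volume
    rw [MeasureTheory.Measure.real, Real.volume_closedBall, ENNReal.toReal_ofReal
      (by have := f.rOut_pos; positivity)] at this
    have h2 : f.rOut = h / 2 := rfl
    rw [h2] at this
    refine le_trans ?_ (this.trans (by linarith))
    refine MeasureTheory.integral_mono_of_nonneg (Filter.Eventually.of_forall fun t => by positivity)
      hintg (Filter.Eventually.of_forall fun t => ?_)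
    show ‖((f t : ℝ) : ℂ)‖ ^ 2 ≤ f t
    rw [Complex.norm_real, Real.norm_of_nonneg f.nonneg]
    have h1 := f.le_one (x := t)
    have h0 := f.nonneg (x := t)
    nlinarith

lemma Amu_lip (y y' : ℝ) (hy : 1 ≤ y) (hyy : y ≤ y') : |Amu y' - Amu y| ≤ (y' - y + 1) / y := by
  have hfl : ⌊y⌋₊ ≤ ⌊y'⌋₊ := Nat.floor_mono hyy
  have hsub : Finset.Icc 1 ⌊y⌋₊ ⊆ Finset.Icc 1 ⌊y'⌋₊ := Finset.Icc_subset_Icc_right hfl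
  unfold Amu
  rw [← Finset.sum_sdiff hsub, add_sub_cancel_right]
  refine (Finset.abs_sum_le_sum_abs _ _).trans ?_
  have hb : ∀ n ∈ Finset.Icc 1 ⌊y'⌋₊ \ Finset.Icc 1 ⌊y⌋₊, |(moebius n : ℝ) / n| ≤ 1 / y := by
    intro n hn
    simp only [Finset.mem_sdiff, Finset.mem_Icc, not_and, not_le] at hn
    have hn1 : ⌊y⌋₊ < n := hn.2 hn.1.1
    have hn2 : y < n := (Nat.floor_lt (by linarith)).1 hn1
    rw [abs_div, Nat.abs_cast]
    exact div_le_div₀ (by norm_num) (abs_moebius_le n) (by linarith) hn2.le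
  refine (Finset.sum_le_card_nsmul _ _ _ hb).trans ?_
  rw [Finset.card_sdiff_of_subset hsub, Nat.card_Icc, Nat.card_Icc, nsmul_eq_mul, mul_one_div]
  gcongr
  simp only [Nat.add_sub_cancel]
  rw [Nat.cast_sub hfl]
  have h1 := Nat.floor_le (by linarith : 0 ≤ y')
  have h2 := Nat.lt_floor_add_one y
  linarith

lemma Amu_lip' (u h t : ℝ) (hu : 0 ≤ u) (h1 : h ≤ 1) (ht : t ∈ Set.Ioo u (u + h)) :
    |Amu (Real.exp t) - Amu (Real.exp u)| ≤ 2 * h + Real.exp (-u) := by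
  have h2 := Amu_lip (Real.exp u) (Real.exp t) (Real.one_le_exp hu) (Real.exp_le_exp.2 ht.1.le)
  refine h2.trans ?_
  have h3 : Real.exp t = Real.exp u * Real.exp (t - u) := by rw [← Real.exp_add]; congr 1; ring
  have h4 := Real.abs_exp_sub_one_le (x := t - u) (by rw [abs_le]; constructor <;> linarith [ht.1, ht.2])
  rw [abs_of_nonneg (by linarith [ht.1] : 0 ≤ t - u)] at h4
  have h5 := le_of_abs_le h4
  rw [div_le_iff₀ (Real.exp_pos u), add_mul, ← Real.exp_add, neg_add_cancel, Real.exp_zero, h3]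
  nlinarith [Real.exp_pos u, ht.2]

lemma Amu_core : ∃ C : ℝ, 0 < C ∧ ∀ u δ : ℝ, 1 ≤ u → 0 < δ → δ ≤ 1 → δ ≤ |Amu (Real.exp u)| →
    Real.exp (-u) ≤ δ / 4 → δ ^ 3 * u ^ 2 ≤ C := by
  obtain ⟨C, hC, hCb⟩ := pair_bound
  refine ⟨128 * (Real.exp 1) ^ 2 * C ^ 2, by positivity, fun u δ hu hδ hδ1 hA he => ?_⟩
  set h := δ / 8 with hh
  have hh0 : 0 < h := by positivity
  set σ := 1 / (u + 1) with hσ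
  have hσ0 : 0 < σ := by positivity
  have hσ1 : σ ≤ 1 := by rw [hσ, div_le_one (by linarith)]; linarith
  obtain ⟨φ, b, hφb, hb0, hb1, hbs, hbi, hbint, hφ2⟩ := exists_bump u h hh0
  have hP := hCb σ hσ0 hσ1 φ h hh0 hφ2
  have hintg : MeasureTheory.Integrable (fun u : ℝ => (u:ℂ) * gmu σ u) := by
    simpa [Complex.real_smul] using gmu_int' σ hσ0
  set F : ℝ → ℝ := fun t => t * (Amu (Real.exp t) * Real.exp (-(σ * t))) * b t with hF
  have hFeq : ∀ t : ℝ, ((t:ℂ) * gmu σ t) * φ t = (F t : ℂ) := by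
    intro t
    rw [hφb t, hF]
    by_cases ht : t ∈ Set.Ioo u (u + h)
    · have : t ∈ Set.Ioi (0:ℝ) := by have := ht.1; simp; linarith
      rw [gmu, Set.indicator_of_mem this]
      push_cast; ring
    · simp [hbs t ht]
  have hFi : MeasureTheory.Integrable F := by
    have h1 : MeasureTheory.Integrable (fun t : ℝ => ((t:ℂ) * gmu σ t) * φ t) := by
      refine hintg.mono (hintg.aestronglyMeasurable.mul φ.continuous.aestronglyMeasurable)
        (Filter.Eventually.of_forall fun t => ?_)
      rw [norm_mul, hφb t, Complex.norm_real, Real.norm_of_nonneg (hb0 t)]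
      exact mul_le_of_le_one_right (norm_nonneg _) (hb1 t)
    have h2 : F = fun t : ℝ => (((t:ℂ) * gmu σ t) * φ t).re := by
      ext t; rw [hFeq t, Complex.ofReal_re]
    rw [h2]; exact h1.re
  have hP' : |∫ t, F t| ≤ C * √h := by
    simp_rw [hFeq] at hP
    rw [integral_complex_ofReal, Complex.norm_real] at hP
    exact hP
  set c := u * (δ / 2) * Real.exp (-1) with hc
  have hc0 : 0 < c := by positivity
  have key : c * (h / 2) ≤ |∫ t, F t| := by
    have hpt : ∀ s : ℝ, |s| = 1 → s * Amu (Real.exp u) = |Amu (Real.exp u)| →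
        ∀ t, c * b t ≤ s * F t := by
      intro s hs hsA t
      by_cases ht : t ∈ Set.Ioo u (u + h)
      · have hl := Amu_lip' u h t (by linarith) (by linarith) ht
        have h3 : δ / 2 ≤ s * Amu (Real.exp t) := by
          have h4 : |s * (Amu (Real.exp t) - Amu (Real.exp u))| ≤ δ / 2 := by
            rw [abs_mul, hs, one_mul]; linarith
          have := neg_le_of_abs_le h4
          rw [mul_sub, hsA] at this
          linarith
        have h5 : Real.exp (-1) ≤ Real.exp (-(σ * t)) := by
          apply Real.exp_le_exp.2
          have : σ * t ≤ σ * (u + 1) := by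
            have := ht.2
            gcongr; linarith
          have h6 : σ * (u + 1) = 1 := by rw [hσ]; field_simp
          linarith
        have h7 : s * F t = t * (s * Amu (Real.exp t)) * Real.exp (-(σ * t)) * b t := by
          rw [hF]; ring
        rw [h7, hc]
        have h8 := ht.1.le
        have h9 := hb0 t
        have h10 : 0 ≤ t := by linarith
        have h11 : 0 ≤ s * Amu (Real.exp t) := by linarith
        have h12 : 0 ≤ t * (s * Amu (Real.exp t)) := mul_nonneg h10 h11
        gcongr
      · rw [hF]; simp [hbs t ht]
    have : ∃ s : ℝ, |s| = 1 ∧ s * Amu (Real.exp u) = |Amu (Real.exp u)| := by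
      rcases abs_cases (Amu (Real.exp u)) with h | h
      · exact ⟨1, by simp, by rw [h.1, one_mul]⟩
      · exact ⟨-1, by simp, by rw [h.1]; ring⟩
    obtain ⟨s, hs, hsA⟩ := this
    have h1 : ∫ t, c * b t ≤ ∫ t, s * F t :=
      MeasureTheory.integral_mono (hbi.const_mul c) (hFi.const_mul s) (hpt s hs hsA)
    rw [MeasureTheory.integral_const_mul, MeasureTheory.integral_const_mul] at h1
    calc c * (h / 2) ≤ c * ∫ t, b t := by gcongr
      _ ≤ s * ∫ t, F t := h1
      _ ≤ |s * ∫ t, F t| := le_abs_self _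
      _ = _ := by rw [abs_mul, hs, one_mul]
  have h10 : c * (h / 2) ≤ C * √h := key.trans hP'
  have hsq : √h * √h = h := Real.mul_self_sqrt hh0.le
  have hr : 0 < √h := Real.sqrt_pos.2 hh0
  have h11 : c * √h ≤ 2 * C := by
    have : (c * √h) * √h ≤ (2 * C) * √h := by rw [mul_assoc, hsq]; linarith
    exact le_of_mul_le_mul_right this hr
  have h12 : (c * √h) ^ 2 ≤ (2 * C) ^ 2 := by gcongr
  rw [mul_pow, Real.sq_sqrt hh0.le, hc, hh] at h12
  have h13 : Real.exp (-1) * Real.exp 1 = 1 := by rw [← Real.exp_add]; simp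
  have h14 : δ ^ 3 * u ^ 2 = 32 * Real.exp 1 ^ 2 * ((u * (δ / 2) * Real.exp (-1)) ^ 2 * (δ / 8)) := by
    have : 32 * Real.exp 1 ^ 2 * ((u * (δ / 2) * Real.exp (-1)) ^ 2 * (δ / 8)) =
      δ ^ 3 * u ^ 2 * (Real.exp (-1) * Real.exp 1) ^ 2 := by ring
    rw [this, h13]; ring
  rw [h14]
  calc _ ≤ 32 * Real.exp 1 ^ 2 * (2 * C) ^ 2 := by gcongr
    _ = _ := by ring

lemma Amu_bound : ∃ K : ℝ, 0 < K ∧ ∀ y : ℝ, 1 ≤ y → |Amu y| ^ 3 * (1 + Real.log y) ^ 2 ≤ K := by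
  obtain ⟨C, hC, hCb⟩ := Amu_core
  set D := C + 64 with hD
  refine ⟨64 + (2 + D) ^ 5 + 4 * D, by positivity, fun y hy => ?_⟩
  set u := Real.log y with hu
  have hu0 : 0 ≤ u := Real.log_nonneg hy
  have hyu : Real.exp u = y := Real.exp_log (by linarith)
  have hA := abs_Amu_le y hy
  rw [← hu] at hA
  have hA0 := abs_nonneg (Amu y)
  have hD0 : 0 < D := by positivity
  rcases lt_or_ge u 1 with hu1 | hu1
  · calc |Amu y| ^ 3 * (1 + u) ^ 2 ≤ (1 + 1) ^ 3 * (1 + 1) ^ 2 := by gcongr; linarith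
      _ ≤ _ := by nlinarith [pow_pos (by linarith : 0 < 2 + D) 5]
  have hδ : ∀ δ, 0 ≤ δ → δ ≤ 1 → δ ≤ |Amu y| → δ ^ 3 * u ^ 2 ≤ D := by
    intro δ h0 h1 h2
    rcases eq_or_lt_of_le h0 with h0 | h0
    · rw [← h0]; simp; exact hD0.le
    rcases le_or_gt (Real.exp (-u)) (δ / 4) with h3 | h3
    · have := hCb u δ hu1 h0 h1 (by rw [hyu]; exact h2) h3
      linarith
    · have h4 : δ ≤ 4 * Real.exp (-u) := by linarith
      have h5 : Real.exp (-u) * u ≤ 1 := by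
        rw [Real.exp_neg, inv_mul_le_one₀ (Real.exp_pos u)]
        linarith [Real.add_one_le_exp u]
      have h6 : δ * u ≤ 4 := by
        calc δ * u ≤ 4 * Real.exp (-u) * u := by gcongr
          _ ≤ 4 := by linarith
      have h7 : 0 ≤ δ * u := by positivity
      calc δ ^ 3 * u ^ 2 = δ * (δ * u) ^ 2 := by ring
        _ ≤ 1 * 4 ^ 2 := by gcongr
        _ ≤ D := by linarith
  have hu2 : (1 + u) ^ 2 ≤ 4 * u ^ 2 := by nlinarith
  rcases le_or_gt |Amu y| 1 with h1 | h1
  · have := hδ _ hA0 h1 le_rfl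
    have h3 : |Amu y| ^ 3 * (1 + u) ^ 2 ≤ |Amu y| ^ 3 * (4 * u ^ 2) := by gcongr
    have : 0 < (2 + D) ^ 5 := by positivity
    linarith
  · have h2 := hδ 1 zero_le_one le_rfl h1.le
    have h3 : u ≤ D := by nlinarith
    calc |Amu y| ^ 3 * (1 + u) ^ 2 ≤ (1 + u) ^ 3 * (1 + u) ^ 2 := by gcongr
      _ = (1 + u) ^ 5 := by ring
      _ ≤ (2 + D) ^ 5 := by gcongr; linarith
      _ ≤ _ := by linarith

end


/-- `μ ω` as an arithmetic function -/
noncomputable def muom : ArithmeticFunction ℝ :=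
  ⟨fun n => (moebius n : ℝ) * (n.primeFactors.card : ℝ), by simp⟩

/-- minus the indicator of prime powers -/
noncomputable def ppind : ArithmeticFunction ℝ :=
  ⟨fun n => if IsPrimePow n then -1 else 0, by simp [not_isPrimePow_zero]⟩

lemma muom_apply (n : ℕ) : muom n = (moebius n : ℝ) * (n.primeFactors.card : ℝ) := rfl

lemma ppind_apply (n : ℕ) : ppind n = if IsPrimePow n then -1 else 0 := rfl

lemma alt_sum (P : Finset ℕ) : ∑ S ∈ P.powerset, (-1 : ℝ) ^ S.card * S.card =
    if P.card = 1 then -1 else 0 := by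
  induction P using Finset.induction_on with
  | empty => simp
  | insert a P ha _ =>
    rw [Finset.sum_powerset_insert ha]
    have h1 : ∑ S ∈ P.powerset, (-1 : ℝ) ^ (insert a S).card * (insert a S).card =
        ∑ S ∈ P.powerset, (-((-1 : ℝ) ^ S.card * S.card) - (-1 : ℝ) ^ S.card) := by
      refine Finset.sum_congr rfl fun S hS => ?_
      have : a ∉ S := fun h => ha (Finset.mem_powerset.1 hS h)
      rw [Finset.card_insert_of_notMem this]
      push_cast; ring
    rw [h1, Finset.sum_sub_distrib, Finset.sum_neg_distrib, Finset.card_insert_of_notMem ha]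
    have h2 : ∑ S ∈ P.powerset, (-1 : ℝ) ^ S.card = if P = ∅ then 1 else 0 := by
      have := Finset.sum_powerset_neg_one_pow_card (x := P)
      exact_mod_cast this
    rw [h2]
    simp only [Nat.add_eq_right, Finset.card_eq_zero]
    split_ifs <;> ring

lemma sum_div_muom (m : ℕ) (hm : m ≠ 0) :
    ∑ d ∈ m.divisors, muom d = if IsPrimePow m then -1 else 0 := by
  have h1 : ∑ d ∈ m.divisors, muom d = ∑ d ∈ m.divisors with Squarefree d, muom d := by
    rw [Finset.sum_filter]
    refine Finset.sum_congr rfl fun d _ => ?_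
    split_ifs with h
    · rfl
    · simp [muom_apply, moebius_eq_zero_of_not_squarefree h]
  rw [h1]
  simp only [isPrimePow_iff_card_primeFactors_eq_one]
  rw [← alt_sum]
  have hprime : ∀ S ∈ m.primeFactors.powerset, ∀ p ∈ S, p.Prime := fun S hS p hp =>
    Nat.prime_of_mem_primeFactors (Finset.mem_powerset.1 hS hp)
  refine Finset.sum_bij' (fun d _ => d.primeFactors) (fun S _ => ∏ p ∈ S, p) ?_ ?_ ?_ ?_ ?_
  · intro d hd
    simp only [Finset.mem_filter, Nat.mem_divisors] at hd
    exact Finset.mem_powerset.2 (Nat.primeFactors_mono hd.1.1 hm)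
  · intro S hS
    simp only [Finset.mem_filter, Nat.mem_divisors]
    refine ⟨⟨?_, hm⟩, ?_⟩
    · exact (Finset.prod_dvd_prod_of_subset _ _ _ (Finset.mem_powerset.1 hS)).trans
        (Nat.prod_primeFactors_dvd m)
    · refine Finset.squarefree_prod_of_pairwise_isCoprime (fun p hp q hq hpq => ?_)
        (fun p hp => (hprime S hS p hp).prime.squarefree)
      exact Nat.coprime_iff_isRelPrime.1
        ((Nat.coprime_primes (hprime S hS p hp) (hprime S hS q hq)).2 hpq)
  · intro d hd
    simp only [Finset.mem_filter] at hd
    exact Nat.prod_primeFactors_of_squarefree hd.2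
  · intro S hS
    exact Nat.primeFactors_prod (hprime S hS)
  · intro d hd
    simp only [Finset.mem_filter] at hd
    have h3 : (moebius d) = (-1) ^ d.primeFactors.card := by
      rw [moebius_apply_of_squarefree hd.2,
        ← (cardDistinctFactors_eq_cardFactors_iff_squarefree hd.2.ne_zero).2 hd.2,
        cardDistinctFactors_apply]
      rfl
    simp [muom_apply, h3]

lemma muom_zeta : muom * (zeta : ArithmeticFunction ℝ) = ppind := by
  ext m
  rcases eq_or_ne m 0 with rfl | hm
  · simp
  rw [coe_mul_zeta_apply, sum_div_muom m hm, ppind_apply]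

lemma muom_eq : muom = ppind * (moebius : ArithmeticFunction ℝ) := by
  rw [← muom_zeta, mul_assoc, coe_zeta_mul_coe_moebius, mul_one]

lemma sum_muom_floor (N : ℕ) : ∑ n ∈ Ioc 0 N, muom n * ((N / n : ℕ) : ℝ) =
    - (((Ioc 0 N).filter IsPrimePow).card : ℝ) := by
  rw [← sum_Ioc_mul_zeta_eq_sum, muom_zeta]
  simp_rw [ppind_apply]
  rw [← Finset.sum_filter]
  simp

/-- `f(n)/n` -/
noncomputable def divid (f : ArithmeticFunction ℝ) : ArithmeticFunction ℝ :=
  ⟨fun n => f n / n, by simp⟩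

lemma divid_apply (f : ArithmeticFunction ℝ) (n : ℕ) : divid f n = f n / n := rfl

lemma sum_muom_div (x : ℝ) : ∑ n ∈ Ioc 0 ⌊x⌋₊, muom n / n =
    -∑ q ∈ (Ioc 0 ⌊x⌋₊).filter IsPrimePow, (1 / (q:ℝ)) * Amu (x / q) := by
  have h := sum_Ioc_mul_eq_sum_sum (divid ppind) (divid (moebius : ArithmeticFunction ℝ)) ⌊x⌋₊
  have h1 : ∀ n, (divid ppind * divid (moebius : ArithmeticFunction ℝ)) n = muom n / n := by
    intro n
    rw [muom_eq, mul_apply, mul_apply, Finset.sum_div]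
    refine Finset.sum_congr rfl fun p hp => ?_
    rw [← (Nat.mem_divisorsAntidiagonal.1 hp).1, divid_apply, divid_apply]
    push_cast
    rw [div_mul_div_comm]
  simp_rw [h1] at h
  rw [h, Finset.sum_filter, ← Finset.sum_neg_distrib]
  refine Finset.sum_congr rfl fun q _ => ?_
  have h2 : ∑ m ∈ Ioc 0 (⌊x⌋₊ / q), divid (moebius : ArithmeticFunction ℝ) m = Amu (x / q) := by
    rw [Amu, Nat.floor_div_natCast]
    refine Finset.sum_congr ?_ fun m _ => ?_
    · ext; simp [Nat.succ_le_iff]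
    · rw [divid_apply, intCoe_apply]
  rw [h2, divid_apply, ppind_apply]
  split_ifs
  · ring
  · simp


lemma pp_count : ∃ C : ℝ, 0 < C ∧ ∀ y : ℝ, 1 ≤ y →
    (((Ioc 0 ⌊y⌋₊).filter IsPrimePow).card : ℝ) ≤ C * y / (1 + Real.log y) := by
  refine ⟨48 , by norm_num, fun y hy => ?_⟩
  have hl0 : 0 ≤ Real.log y := Real.log_nonneg hy
  rcases lt_or_ge y 2 with h2 | h2
  · have : (Ioc 0 ⌊y⌋₊).filter IsPrimePow = ∅ := by
      rw [Finset.filter_eq_empty_iff]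
      intro n hn hp
      have h3 := hp.two_le
      have h4 : (n:ℝ) ≤ y := (Nat.le_floor_iff (by linarith)).1 (Finset.mem_Ioc.1 hn).2
      have : (2:ℝ) ≤ n := by exact_mod_cast h3
      linarith
    rw [this]; simp; positivity
  set l := Real.log y with hl
  have hlog2 : 1/2 ≤ Real.log 2 := by linarith [Real.log_two_gt_d9]
  have hl2 : Real.log 2 ≤ l := Real.log_le_log (by norm_num) h2
  have h := Chebyshev.sum_PrimePow_eq_sum_sum (fun _ => (1:ℝ)) (by linarith : 0 ≤ y)
  rw [Finset.sum_const, nsmul_eq_mul, mul_one] at h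
  rw [h]
  set J := ⌊l / Real.log 2⌋₊ with hJ
  have hJ1 : 1 ≤ J := by
    rw [hJ, Nat.one_le_floor_iff, le_div_iff₀ (by linarith)]; linarith
  rw [← Finset.add_sum_Ioc_eq_sum_Icc hJ1]
  have hs : 0 < √y := Real.sqrt_pos.2 (by linarith)
  have hpi : ∑ p ∈ Ioc 0 ⌊y ^ ((1:ℝ) / (1:ℕ))⌋₊ with p.Prime, (1:ℝ) ≤
      Real.log 4 * y / Real.log √y + √y := by
    refine le_trans (le_of_eq ?_) (Chebyshev.pi_le_log4_mul_div (by linarith : 1 < y))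
    simp only [Nat.cast_one, div_one, Real.rpow_one, Finset.sum_const, nsmul_eq_mul, mul_one]
    norm_cast
    rw [← Nat.primesLE_card_eq_primeCounting]
    congr 1
    ext p
    simp [Nat.mem_primesLE]
    intro hp _
    exact hp.pos
  have hhigh : ∑ k ∈ Ioc 1 J, ∑ p ∈ Ioc 0 ⌊y ^ ((1:ℝ) / k)⌋₊ with p.Prime, (1:ℝ) ≤ 2 * l * √y := by
    have hb : ∀ k ∈ Ioc 1 J, ∑ p ∈ Ioc 0 ⌊y ^ ((1:ℝ) / k)⌋₊ with p.Prime, (1:ℝ) ≤ √y := by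
      intro k hk
      have hk2 : 2 ≤ k := (Finset.mem_Ioc.1 hk).1
      rw [Finset.sum_const, nsmul_eq_mul, mul_one]
      calc _ ≤ ((Ioc 0 ⌊y ^ ((1:ℝ) / k)⌋₊).card : ℝ) := by
            exact_mod_cast Finset.card_filter_le _ _
        _ = (⌊y ^ ((1:ℝ) / k)⌋₊ : ℝ) := by simp
        _ ≤ y ^ ((1:ℝ) / k) := Nat.floor_le (by positivity)
        _ ≤ y ^ ((1:ℝ) / 2) := by
            apply Real.rpow_le_rpow_of_exponent_le hy
            have : (2:ℝ) ≤ k := by exact_mod_cast hk2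
            gcongr
        _ = √y := (Real.sqrt_eq_rpow y).symm
    refine (Finset.sum_le_card_nsmul _ _ _ hb).trans ?_
    rw [nsmul_eq_mul]
    gcongr
    rw [Nat.card_Ioc]
    calc ((J - 1 : ℕ) : ℝ) ≤ J := by exact_mod_cast Nat.sub_le _ _
      _ ≤ l / Real.log 2 := Nat.floor_le (by positivity)
      _ ≤ 2 * l := by rw [div_le_iff₀ (by linarith)]; nlinarith
  refine (add_le_add hpi hhigh).trans ?_
  rw [le_div_iff₀ (by positivity)]
  have hsq : Real.log √y = l / 2 := by rw [Real.log_sqrt (by linarith)]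
  have hlog4 : Real.log 4 ≤ 2 := by
    have : Real.log 4 = 2 * Real.log 2 := by
      rw [show (4:ℝ) = 2 ^ 2 by norm_num, Real.log_pow]; norm_num
    linarith [Real.log_two_lt_d9]
  have t1 : Real.log 4 * y / Real.log √y * (1 + l) ≤ 12 * y := by
    rw [hsq, div_mul_eq_mul_div, div_le_iff₀ (by linarith)]
    have : 1 + l ≤ 3 * l := by linarith
    calc Real.log 4 * y * (1 + l) ≤ 2 * y * (3 * l) := by gcongr
      _ = _ := by ring
  have t2 : (1 + l) ^ 2 ≤ 16 * √y := by
    have e1 : √y = Real.exp (l / 4) ^ 2 := by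
      rw [← Real.exp_nat_mul, ← Real.exp_log hs, hsq]; congr 1; push_cast; ring
    have e2 := Real.add_one_le_exp (l / 4)
    rw [e1]
    have e3 : (1 + l) ^ 2 ≤ (4 * Real.exp (l/4)) ^ 2 := by gcongr; linarith
    linarith
  have t3 : √y * √y = y := Real.mul_self_sqrt (by linarith)
  have t4 : (√y + 2 * l * √y) * (1 + l) ≤ 32 * y := by
    calc (√y + 2 * l * √y) * (1 + l) = √y * ((1 + 2 * l) * (1 + l)) := by ring
      _ ≤ √y * (2 * (1 + l) ^ 2) := by
          apply mul_le_mul_of_nonneg_left _ hs.le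
          nlinarith
      _ ≤ √y * (2 * (16 * √y)) := by gcongr
      _ = 32 * (√y * √y) := by ring
      _ = _ := by rw [t3]
  nlinarith

lemma Amu_rpow : ∃ K : ℝ, 0 < K ∧ ∀ y : ℝ, 1 ≤ y → |Amu y| ≤ K * (1 + Real.log y) ^ (-(2/3) : ℝ) := by
  obtain ⟨K, hK, h⟩ := Amu_bound
  refine ⟨K ^ ((1:ℝ)/3), by positivity, fun y hy => ?_⟩
  have hl : 0 ≤ Real.log y := Real.log_nonneg hy
  have hb : 0 < 1 + Real.log y := by linarith
  have h1 := h y hy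
  refine le_of_pow_le_pow_left₀ (n := 3) (by norm_num) (by positivity) ?_
  rw [mul_pow, ← Real.rpow_natCast (K ^ _), ← Real.rpow_mul hK.le, ← Real.rpow_natCast (_ ^ (-(2/3) : ℝ)),
    ← Real.rpow_mul hb.le]
  norm_num
  rw [← div_eq_mul_inv, le_div_iff₀ (by positivity)]
  exact h1

lemma conv_sum (J : ℕ) (L : ℝ) (hJ : (J:ℝ) ≤ L) :
    ∑ j ∈ range (J + 1), 1 / (1 + L - j) * (1 + (j:ℝ)) ^ (-(2/3) : ℝ) ≤ 14 * (L + 2) ^ (-(1/2) : ℝ) := by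
  have hL : 0 ≤ L := le_trans (by positivity) hJ
  set z := L + 2 with hz
  have hz0 : 0 < z := by positivity
  have hterm : ∀ j ∈ range (J + 1), 1 / (1 + L - j) * (1 + (j:ℝ)) ^ (-(2/3) : ℝ) ≤
      z ^ (-(2/3) : ℝ) * (1 / (1 + (J:ℝ) - j) + 1 / (1 + (j:ℝ))) := by
    intro j hj
    have hjJ : (j:ℝ) ≤ J := by exact_mod_cast Nat.lt_succ_iff.1 (Finset.mem_range.1 hj)
    set b := 1 + (j:ℝ) with hb
    have hb0 : 0 < b := by positivity
    set a := 1 + L - j with ha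
    have ha0 : 0 < a := by linarith
    have haJ : 0 < 1 + (J:ℝ) - j := by linarith
    have e1 : b ^ (-(2/3) : ℝ) = b ^ ((1/3) : ℝ) * (1 / b) := by
      rw [one_div b, ← Real.rpow_neg_one b, ← Real.rpow_add hb0]; norm_num
    have e2 : z ^ (-(2/3) : ℝ) = z ^ ((1/3) : ℝ) * (1 / z) := by
      rw [one_div z, ← Real.rpow_neg_one z, ← Real.rpow_add hz0]; norm_num
    have hab : a + b = z := by rw [ha, hb, hz]; ring
    have e3 : 1 / a * (1 / b) = 1 / z * (1 / a + 1 / b) := by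
      rw [← hab]; field_simp; ring
    have hbz : b ≤ z := by linarith
    calc 1 / a * b ^ (-(2/3) : ℝ) = b ^ ((1/3) : ℝ) * (1 / a * (1 / b)) := by rw [e1]; ring
      _ ≤ z ^ ((1/3) : ℝ) * (1 / a * (1 / b)) := by gcongr
      _ = z ^ (-(2/3) : ℝ) * (1 / a + 1 / b) := by rw [e3, e2]; ring
      _ ≤ _ := by gcongr; linarith
  refine (Finset.sum_le_sum hterm).trans ?_
  rw [← Finset.mul_sum, Finset.sum_add_distrib]
  have hH : ∑ j ∈ range (J + 1), 1 / (1 + (j:ℝ)) ≤ 1 + Real.log z := by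
    have h := harmonic_le_one_add_log (J + 1)
    rw [harmonic] at h
    push_cast at h
    refine le_trans (le_of_eq ?_) (h.trans ?_)
    · refine Finset.sum_congr rfl fun j _ => ?_
      rw [one_div, add_comm]
    · have : Real.log ((J:ℝ) + 1) ≤ Real.log z := Real.log_le_log (by positivity) (by linarith)
      linarith
  have hR : ∑ j ∈ range (J + 1), 1 / (1 + (J:ℝ) - j) = ∑ j ∈ range (J + 1), 1 / (1 + (j:ℝ)) := by
    rw [← Finset.sum_range_reflect]
    refine Finset.sum_congr rfl fun j hj => ?_
    have : j ≤ J := Nat.lt_succ_iff.1 (Finset.mem_range.1 hj)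
    rw [show J + 1 - 1 - j = J - j by omega, Nat.cast_sub this]
    congr 1; ring
  rw [hR]
  have h6 : 1 + Real.log z ≤ 7 * z ^ ((1/6) : ℝ) := by
    have h1 := Real.log_le_rpow_div hz0.le (by norm_num : (0:ℝ) < 1/6)
    have h2 := Real.one_le_rpow (by linarith : 1 ≤ z) (by norm_num : (0:ℝ) ≤ 1/6)
    linarith
  calc _ ≤ z ^ (-(2/3) : ℝ) * (7 * z ^ ((1/6) : ℝ) + 7 * z ^ ((1/6) : ℝ)) := by
        gcongr <;> linarith
    _ = 14 * (z ^ (-(2/3) : ℝ) * z ^ ((1/6) : ℝ)) := by ring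
    _ = _ := by rw [← Real.rpow_add hz0]; norm_num

lemma main_sum : ∃ C : ℝ, 0 < C ∧ ∀ x : ℝ, 1 ≤ x →
    ∑ q ∈ (Ioc 0 ⌊x⌋₊).filter IsPrimePow, (1 / (q:ℝ)) * |Amu (x / q)| ≤
      C * (Real.log x + 2) ^ (-(1/2) : ℝ) := by
  obtain ⟨C, hC, hcount⟩ := pp_count
  obtain ⟨K, hK, hA⟩ := Amu_rpow
  refine ⟨C * Real.exp 1 * K * 14, by positivity, fun x hx => ?_⟩
  set L := Real.log x with hL
  have hL0 : 0 ≤ L := Real.log_nonneg hx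
  set J := ⌊L⌋₊ with hJ
  have hx0 : 0 < x := by linarith
  set S := (Ioc 0 ⌊x⌋₊).filter IsPrimePow with hS
  have hSq : ∀ q ∈ S, (1:ℝ) ≤ q ∧ (q:ℝ) ≤ x := by
    intro q hq
    have := Finset.mem_Ioc.1 (Finset.mem_filter.1 hq).1
    exact ⟨by exact_mod_cast this.1, (Nat.le_floor_iff hx0.le).1 this.2⟩
  have hmaps : ∀ q ∈ S, ⌊Real.log (x / q)⌋₊ ∈ range (J + 1) := by
    intro q hq
    obtain ⟨h1, h2⟩ := hSq q hq
    rw [Finset.mem_range, Nat.lt_succ_iff]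
    apply Nat.floor_mono
    apply Real.log_le_log (by positivity)
    exact div_le_self hx0.le h1
  rw [← Finset.sum_fiberwise_of_maps_to hmaps]
  have hblock : ∀ j ∈ range (J + 1), ∑ q ∈ S.filter (fun q : ℕ => ⌊Real.log (x / q)⌋₊ = j),
      (1 / (q:ℝ)) * |Amu (x / q)| ≤
        C * Real.exp 1 * K * (1 / (1 + L - j) * (1 + (j:ℝ)) ^ (-(2/3) : ℝ)) := by
    intro j hj
    have hjL : (j:ℝ) ≤ L := by
      have h1 : j ≤ J := Nat.lt_succ_iff.1 (Finset.mem_range.1 hj)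
      exact (Nat.le_floor_iff hL0).1 h1
    have hb : ∀ q ∈ S.filter (fun q : ℕ => ⌊Real.log (x / q)⌋₊ = j), (1 / (q:ℝ)) * |Amu (x / q)| ≤
        (Real.exp (j + 1) / x) * (K * (1 + (j:ℝ)) ^ (-(2/3) : ℝ)) := by
      intro q hq
      obtain ⟨hqS, hqj⟩ := Finset.mem_filter.1 hq
      obtain ⟨h1, h2⟩ := hSq q hqS
      have hxq : 1 ≤ x / q := by rw [le_div_iff₀ (by linarith)]; linarith
      have hlog0 : 0 ≤ Real.log (x / q) := Real.log_nonneg hxq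
      have hlo : (j:ℝ) ≤ Real.log (x / q) := by rw [← hqj]; exact Nat.floor_le hlog0
      have hhi : Real.log (x / q) < j + 1 := by rw [← hqj]; exact Nat.lt_floor_add_one _
      have h3 : 1 / (q:ℝ) ≤ Real.exp (j + 1) / x := by
        have h4 : x / q ≤ Real.exp (j + 1) := by
          rw [← Real.exp_log (by positivity : 0 < x / q)]
          exact Real.exp_le_exp.2 hhi.le
        rw [le_div_iff₀ hx0]
        calc 1 / (q:ℝ) * x = x / q := by ring
          _ ≤ _ := h4
      have h5 : |Amu (x / q)| ≤ K * (1 + (j:ℝ)) ^ (-(2/3) : ℝ) := by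
        refine (hA _ hxq).trans ?_
        gcongr K * ?_
        exact Real.rpow_le_rpow_of_nonpos (by positivity) (by linarith) (by norm_num)
      gcongr
    refine (Finset.sum_le_card_nsmul _ _ _ hb).trans ?_
    rw [nsmul_eq_mul]
    have hy : 1 ≤ x * Real.exp (-j) := by
      have : x = Real.exp L := (Real.exp_log hx0).symm
      rw [this, ← Real.exp_add]
      exact Real.one_le_exp (by linarith)
    have hcard : ((S.filter (fun q : ℕ => ⌊Real.log (x / q)⌋₊ = j)).card : ℝ) ≤
        C * (x * Real.exp (-j)) / (1 + L - j) := by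
      have h6 := hcount _ hy
      rw [Real.log_mul hx0.ne' (Real.exp_pos _).ne', Real.log_exp, ← hL, ← sub_eq_add_neg,
        ← add_sub_assoc] at h6
      refine le_trans ?_ h6
      refine Nat.cast_le.2 (Finset.card_le_card ?_)
      intro q hq
      obtain ⟨hqS, hqj⟩ := Finset.mem_filter.1 hq
      obtain ⟨h1, h2⟩ := hSq q hqS
      have hq' := Finset.mem_filter.1 hqS
      refine Finset.mem_filter.2 ⟨Finset.mem_Ioc.2 ⟨(Finset.mem_Ioc.1 hq'.1).1, ?_⟩, hq'.2⟩
      apply Nat.le_floor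
      have hxq : 1 ≤ x / q := by rw [le_div_iff₀ (by linarith)]; linarith
      have hlo : (j:ℝ) ≤ Real.log (x / q) := by
        rw [← hqj]; exact Nat.floor_le (Real.log_nonneg hxq)
      have h7 : Real.exp j ≤ x / q := by
        rw [← Real.exp_log (by positivity : 0 < x / q)]
        exact Real.exp_le_exp.2 hlo
      rw [Real.exp_neg, ← div_eq_mul_inv, le_div_iff₀ (Real.exp_pos _)]
      rw [le_div_iff₀ (by linarith)] at h7
      linarith
    have hden : 0 < 1 + L - j := by linarith
    calc _ ≤ (C * (x * Real.exp (-j)) / (1 + L - j)) *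
          ((Real.exp (j + 1) / x) * (K * (1 + (j:ℝ)) ^ (-(2/3) : ℝ))) := by gcongr
      _ = _ := by
        rw [Real.exp_neg, Real.exp_add]
        field_simp
  refine (Finset.sum_le_sum hblock).trans ?_
  rw [← Finset.mul_sum]
  calc _ ≤ C * Real.exp 1 * K * (14 * (L + 2) ^ (-(1/2) : ℝ)) := by
        gcongr
        exact conv_sum J L (Nat.floor_le hL0)
    _ = _ := by ring


theorem moebius_omega_fract_sum_bound :
    ∃ C > (0 : ℝ), ∀ x : ℝ, 16 ≤ x →
      |∑ n ∈ Finset.Icc 1 ⌊x⌋₊,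
          (moebius n : ℝ) * (n.primeFactors.card : ℝ) * Int.fract (x / n)|
        ≤ C * x * Real.sqrt (Real.log (Real.log x)) / Real.sqrt (Real.log x) := by
  obtain ⟨C1, hC1, h1⟩ := main_sum
  obtain ⟨C2, hC2, h2⟩ := pp_count
  refine ⟨C1 + C2, by positivity, fun x hx => ?_⟩
  have hx0 : 0 < x := by linarith
  set L := Real.log x with hL
  have hL16 : Real.exp 1 ≤ L := by
    have e1 : Real.log 16 ≤ L := Real.log_le_log (by norm_num) hx
    have e2 : Real.log 16 = 4 * Real.log 2 := by
      rw [show (16:ℝ) = 2 ^ 4 by norm_num, Real.log_pow]; norm_num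
    linarith [Real.log_two_gt_d9, Real.exp_one_lt_d9]
  have hL1 : 1 ≤ L := by linarith [Real.add_one_le_exp (1:ℝ)]
  have hL0 : 0 < L := by linarith
  have hLL : 1 ≤ √(Real.log L) := by
    rw [Real.one_le_sqrt, Real.le_log_iff_exp_le hL0]; exact hL16
  have hsL : 0 < √L := Real.sqrt_pos.2 hL0
  have hset : Finset.Icc 1 ⌊x⌋₊ = Ioc 0 ⌊x⌋₊ := by ext; simp [Nat.succ_le_iff]
  have hsum : ∑ n ∈ Finset.Icc 1 ⌊x⌋₊,
      (moebius n : ℝ) * (n.primeFactors.card : ℝ) * Int.fract (x / n) =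
      x * (∑ n ∈ Ioc 0 ⌊x⌋₊, muom n / n) - ∑ n ∈ Ioc 0 ⌊x⌋₊, muom n * ((⌊x⌋₊ / n : ℕ) : ℝ) := by
    rw [hset, Finset.mul_sum, ← Finset.sum_sub_distrib]
    refine Finset.sum_congr rfl fun n _ => ?_
    have e1 : ((⌊x⌋₊ / n : ℕ) : ℝ) = ((⌊x / n⌋ : ℤ) : ℝ) := by
      rw [← Nat.floor_div_natCast, natCast_floor_eq_intCast_floor (by positivity)]
    rw [e1, muom_apply, Int.fract]
    ring
  rw [hsum, sum_muom_div, sum_muom_floor]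
  have b1 : |∑ q ∈ (Ioc 0 ⌊x⌋₊).filter IsPrimePow, (1 / (q:ℝ)) * Amu (x / q)| ≤ C1 / √L := by
    refine (Finset.abs_sum_le_sum_abs _ _).trans ?_
    have e1 : ∀ q ∈ (Ioc 0 ⌊x⌋₊).filter IsPrimePow, |(1 / (q:ℝ)) * Amu (x / q)| =
        (1 / (q:ℝ)) * |Amu (x / q)| := by
      intro q _
      rw [abs_mul, abs_of_nonneg (by positivity : 0 ≤ 1 / (q:ℝ))]
    rw [Finset.sum_congr rfl e1]
    refine (h1 x (by linarith)).trans ?_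
    rw [← hL, Real.sqrt_eq_rpow, div_eq_mul_inv C1, ← Real.rpow_neg hL0.le]
    gcongr C1 * ?_
    exact Real.rpow_le_rpow_of_nonpos hL0 (by linarith) (by norm_num)
  have b2 : (((Ioc 0 ⌊x⌋₊).filter IsPrimePow).card : ℝ) ≤ C2 * x / √L := by
    refine (h2 x (by linarith)).trans ?_
    rw [← hL]
    have : √L ≤ 1 + L := by
      rw [Real.sqrt_le_left (by linarith)]; nlinarith
    gcongr
  have b3 : (0:ℝ) ≤ (((Ioc 0 ⌊x⌋₊).filter IsPrimePow).card : ℝ) := by positivity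
  calc _ ≤ x * |∑ q ∈ (Ioc 0 ⌊x⌋₊).filter IsPrimePow, (1 / (q:ℝ)) * Amu (x / q)| +
        (((Ioc 0 ⌊x⌋₊).filter IsPrimePow).card : ℝ) := by
        refine (abs_sub _ _).trans (le_of_eq ?_)
        rw [abs_neg, abs_of_nonneg b3, abs_mul, abs_neg, abs_of_pos hx0]
    _ ≤ x * (C1 / √L) + C2 * x / √L := by gcongr
    _ = (C1 + C2) * x * 1 / √L := by ring
    _ ≤ _ := by gcongr
end

section
/- There exists a constant C > 0 such that for all real x ≥ 16, |Σ_{n ≤ x} μ(n) ω(n) / n| ≤ C · √(log log x) / √(log x). Consequently, the series Σ_{n=1}^∞ μ(n) ω(n) / n converges and equals 0, i.e., the partial sums Σ_{n ≤ x} μ(n) ω(n)/n tend to 0 as x → ∞. -/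
namespace MOS
open Complex

noncomputable def za (n : ℕ) (s : ℂ) : ℂ :=
  (n:ℂ) ^ (-s) - ((n:ℂ) ^ (1 - s) - ((n + 1 : ℕ) : ℂ) ^ (1 - s)) / (s - 1)

lemma hasDeriv_cpow (r : ℂ) {x : ℝ} (hx : 0 < x) :
    HasDerivAt (fun y : ℝ => (y:ℂ) ^ r) (r * (x:ℂ) ^ (r - 1)) x := by
  have h := (HasDerivAt.cpow_const (c := r) (hasDerivAt_id (x:ℂ)) (by
    left; simpa using hx)).comp_ofReal
  simpa using h

lemma norm_cpow_sub_le {n : ℕ} (hn : 1 ≤ n) {s : ℂ} (hs : -1 ≤ s.re) {x : ℝ}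
    (hx : x ∈ Set.Icc (n:ℝ) (n+1)) :
    ‖(n:ℂ) ^ (-s) - (x:ℂ)^(-s)‖ ≤ ‖s‖ * (n:ℝ) ^ (-s.re - 1) := by
  have hn0 : (0:ℝ) < n := by exact_mod_cast hn
  have key := (convex_Icc (n:ℝ) (n+1)).norm_image_sub_le_of_norm_hasDerivWithin_le
    (f := fun y : ℝ => (y:ℂ) ^ (-s)) (f' := fun y : ℝ => (-s) * (y:ℂ) ^ (-s - 1))
    (C := ‖s‖ * (n:ℝ) ^ (-s.re - 1)) (x := x) (y := n)
    (fun y hy => (hasDeriv_cpow (-s) (lt_of_lt_of_le hn0 hy.1)).hasDerivWithinAt)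
    (fun y hy => by
      rw [norm_mul, norm_neg, Complex.norm_cpow_eq_rpow_re_of_pos (lt_of_lt_of_le hn0 hy.1)]
      gcongr
      simp only [sub_re, neg_re, one_re]
      exact Real.rpow_le_rpow_of_nonpos hn0 hy.1 (by linarith)) hx (by simp)
  have h2 : ‖(n:ℝ) - x‖ ≤ 1 := by
    rw [Real.norm_eq_abs, abs_le]; constructor <;> linarith [hx.1, hx.2]
  calc _ ≤ _ := by simpa using key
    _ ≤ ‖s‖ * (n:ℝ) ^ (-s.re - 1) * 1 := by gcongr; simpa using h2
    _ = _ := by ring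

lemma norm_za_le {n : ℕ} (hn : 1 ≤ n) {s : ℂ} (hs : -1 ≤ s.re) (hs1 : s ≠ 1) :
    ‖za n s‖ ≤ ‖s‖ * (n:ℝ) ^ (-s.re - 1) := by
  have hn0 : (0:ℝ) < n := by exact_mod_cast hn
  have hs1' : s - 1 ≠ 0 := sub_ne_zero.mpr hs1
  have key := (convex_Icc (n:ℝ) (n+1)).norm_image_sub_le_of_norm_hasDerivWithin_le
    (f := fun y : ℝ => (n:ℂ)^(-s) * (y:ℂ) + (y:ℂ) ^ (1-s) / (s - 1))
    (f' := fun y : ℝ => (n:ℂ)^(-s) - (y:ℂ) ^ (-s))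
    (C := ‖s‖ * (n:ℝ) ^ (-s.re - 1)) (x := n) (y := n + 1)
    (fun y hy => by
      have h1 := (hasDeriv_cpow (1-s) (lt_of_lt_of_le hn0 hy.1)).div_const (s-1)
      have h2 : HasDerivAt (fun y : ℝ => (n:ℂ)^(-s) * (y:ℂ)) ((n:ℂ)^(-s) * 1) y :=
        (Complex.ofRealCLM.hasDerivAt (x := y)).const_mul _
      convert (h2.add h1).hasDerivWithinAt using 1
      · rfl
      have : (1:ℂ) - s = -(s-1) := by ring
      rw [show (1:ℂ) - s - 1 = -s by ring, this]
      field_simp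
      ring)
    (fun y hy => norm_cpow_sub_le hn hs hy) (by simp) (by simp)
  have : za n s = (n:ℂ)^(-s) * ((n:ℝ) + 1 : ℝ) + (((n:ℝ)+1 : ℝ):ℂ) ^ (1-s) / (s - 1)
     - ((n:ℂ)^(-s) * ((n:ℝ):ℂ) + ((n:ℝ):ℂ) ^ (1-s) / (s - 1)) := by
    unfold za; push_cast; ring
  rw [this]
  simpa using key

lemma za_differentiableAt {n : ℕ} (hn : 1 ≤ n) {s : ℂ} (hs1 : s ≠ 1) :
    DifferentiableAt ℂ (za n) s := by
  have hs1' : s - 1 ≠ 0 := sub_ne_zero.mpr hs1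
  have h0 : (n:ℂ) ≠ 0 := by exact_mod_cast (by omega : n ≠ 0)
  have h1 : ((n+1:ℕ):ℂ) ≠ 0 := by exact_mod_cast (by omega : n+1 ≠ 0)
  unfold za
  refine DifferentiableAt.sub ?_ (DifferentiableAt.div (DifferentiableAt.sub ?_ ?_) (by fun_prop) hs1')
  · exact DifferentiableAt.const_cpow (by fun_prop) (Or.inl h0)
  · exact DifferentiableAt.const_cpow (by fun_prop) (Or.inl h0)
  · exact DifferentiableAt.const_cpow (by fun_prop) (Or.inl h1)

lemma sum_za (s : ℂ) (N : ℕ) :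
    ∑ n ∈ Finset.range N, za (n+1) s = ∑ n ∈ Finset.range N, ((n+1:ℕ):ℂ) ^ (-s)
      - (1 - ((N+1:ℕ):ℂ) ^ (1 - s)) / (s-1) := by
  induction N with
  | zero => simp
  | succ N ih =>
    rw [Finset.sum_range_succ, Finset.sum_range_succ, ih, za]; ring

lemma summable_za {s : ℂ} (hs : 0 < s.re) (hs1 : s ≠ 1) : Summable (fun n : ℕ => za (n+1) s) := by
  refine Summable.of_norm_bounded (g := fun n : ℕ => ‖s‖ * ((n+1:ℕ):ℝ) ^ (-s.re - 1)) ?_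
    (fun n => norm_za_le (by omega) (by linarith) hs1)
  refine Summable.mul_left _ ?_
  exact (summable_nat_add_iff 1).mpr (Real.summable_nat_rpow.mpr (by linarith))

lemma zeta_eq_of_one_lt {s : ℂ} (hs : 1 < s.re) :
    riemannZeta s = 1 / (s-1) + ∑' n : ℕ, za (n+1) s := by
  have hs1 : s ≠ 1 := by rintro rfl; simp at hs
  have h1 := (summable_za (by linarith) hs1).hasSum.tendsto_sum_nat
  have h2 : Summable (fun n : ℕ => ((n+1:ℕ):ℂ) ^ (-s)) := by
    have := (summable_nat_add_iff 1).mpr (Complex.summable_one_div_nat_cpow.mpr hs)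
    refine this.congr (fun n => ?_)
    rw [Complex.cpow_neg, one_div]
  have h3 := h2.hasSum.tendsto_sum_nat
  have h4 : Filter.Tendsto (fun N : ℕ => ((N+1:ℕ):ℂ) ^ (1 - s)) Filter.atTop (nhds 0) := by
    rw [tendsto_zero_iff_norm_tendsto_zero]
    have := (tendsto_rpow_neg_atTop (y := s.re - 1) (by linarith)).comp
      ((tendsto_natCast_atTop_atTop (R := ℝ)).comp (Filter.tendsto_add_atTop_nat 1))
    refine this.congr (fun N => ?_)
    simp only [Function.comp]
    rw [Complex.norm_natCast_cpow_of_pos (by omega)]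
    simp
  have h5 : Filter.Tendsto (fun N : ℕ => ∑ n ∈ Finset.range N, ((n+1:ℕ):ℂ) ^ (-s)
      - (1 - ((N+1:ℕ):ℂ) ^ (1 - s)) / (s-1)) Filter.atTop
      (nhds ((∑' n : ℕ, ((n+1:ℕ):ℂ) ^ (-s)) - (1 - 0) / (s-1))) :=
    h3.sub (((tendsto_const_nhds).sub h4).div_const _)
  have h6 := tendsto_nhds_unique h1 (h5.congr (fun N => (sum_za s N).symm))
  rw [h6, zeta_eq_tsum_one_div_nat_add_one_cpow hs]
  have : (∑' n : ℕ, ((n+1:ℕ):ℂ) ^ (-s)) = ∑' n : ℕ, 1 / ((n:ℂ) + 1) ^ s := by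
    congr 1; ext n; rw [Complex.cpow_neg, one_div]; push_cast; rfl
  rw [this]; ring

lemma zeta_eq_of_im_pos {s : ℂ} (hs : 1/2 < s.re) (ht : 0 < s.im) :
    riemannZeta s = 1 / (s-1) + ∑' n : ℕ, za (n+1) s := by
  set R : ℝ := s.re + 3 with hR
  set T : ℝ := s.im + 1 with hT
  let U : Set ℂ := (Complex.re ⁻¹' Set.Ioo (1/2) R) ∩ (Complex.im ⁻¹' Set.Ioo 0 T)
  have hUo : IsOpen U := (isOpen_Ioo.preimage Complex.continuous_re).inter
    (isOpen_Ioo.preimage Complex.continuous_im)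
  have hUc : Convex ℝ U := ((convex_Ioo _ _).linear_preimage Complex.reLm).inter
    ((convex_Ioo _ _).linear_preimage Complex.imLm)
  have hne : ∀ z ∈ U, z ≠ 1 := by
    rintro z hz rfl
    have := hz.2.1; simp at this
  have hA : DifferentiableOn ℂ riemannZeta U := fun z hz =>
    (differentiableAt_riemannZeta (hne z hz)).differentiableWithinAt
  have hB : DifferentiableOn ℂ (fun z => 1 / (z-1) + ∑' n : ℕ, za (n+1) z) U := by
    refine DifferentiableOn.add ?_ ?_
    · intro z hz
      have : z - 1 ≠ 0 := sub_ne_zero.mpr (hne z hz)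
      exact ((differentiableAt_const (1:ℂ)).div (differentiableAt_id.sub_const 1) this).differentiableWithinAt
    · refine differentiableOn_tsum_of_summable_norm
        (u := fun n : ℕ => (R + T) * ((n+1:ℕ):ℝ) ^ (-(3/2):ℝ)) ?_ ?_ hUo ?_
      · refine Summable.mul_left _ ?_
        exact (summable_nat_add_iff 1).mpr (Real.summable_nat_rpow.mpr (by norm_num))
      · exact fun n z hz => (za_differentiableAt (by omega) (hne z hz)).differentiableWithinAt
      · intro n z hz
        have h1 : 1/2 < z.re := hz.1.1
        have h2 : z.re < R := hz.1.2
        have h3 : 0 < z.im := hz.2.1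
        have h4 : z.im < T := hz.2.2
        refine (norm_za_le (by omega) (by linarith) (hne z hz)).trans ?_
        gcongr
        · have := Complex.norm_le_abs_re_add_abs_im z
          rw [abs_of_pos (by linarith), abs_of_pos h3] at this; linarith
        · exact_mod_cast (by omega : 1 ≤ n+1)
        · linarith
  have h0 : (⟨2, s.im⟩ : ℂ) ∈ U := by
    refine ⟨⟨?_, ?_⟩, ⟨?_, ?_⟩⟩ <;> simp <;> norm_num <;> linarith
  have := (hA.analyticOnNhd hUo).eqOn_of_preconnected_of_eventuallyEq (hB.analyticOnNhd hUo)
    hUc.isPreconnected h0 (by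
      have : {z : ℂ | 1 < z.re} ∈ nhds (⟨2, s.im⟩ : ℂ) :=
        (isOpen_lt continuous_const Complex.continuous_re).mem_nhds (by simp)
      filter_upwards [this] with z hz using zeta_eq_of_one_lt hz)
  have h := this (x := s) ⟨⟨hs, by simp [hR]⟩, ⟨ht, by simp [hT]⟩⟩
  simpa using h

end MOS

namespace MOS
open Complex

lemma zeta_bound_pos : ∃ C > (0:ℝ), ∀ s : ℂ, 1 - 1/64 ≤ s.re → s.re ≤ 3 → 1 ≤ s.im →
    ‖riemannZeta s‖ ≤ C * s.im ^ (1/32 : ℝ) := by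
  have hsum : Summable (fun n : ℕ => ((n+1:ℕ):ℝ) ^ (-(65/64):ℝ)) :=
    (summable_nat_add_iff 1).mpr (Real.summable_nat_rpow.mpr (by norm_num))
  set K := ∑' n : ℕ, ((n+1:ℕ):ℝ) ^ (-(65/64):ℝ) with hK
  have hK0 : 0 ≤ K := tsum_nonneg (fun n => by positivity)
  refine ⟨3 * (5 * K + 1), by positivity, ?_⟩
  intro s h1 h3 ht
  have hs1 : s ≠ 1 := by rintro rfl; norm_num at ht
  set N := ⌈s.im⌉₊ with hN
  have hNt : s.im ≤ N := Nat.le_ceil _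
  have hNt2 : (N:ℝ) < s.im + 1 := Nat.ceil_lt_add_one (by linarith)
  have hM0 : (0:ℝ) < ((N+1:ℕ):ℝ) := by positivity
  have hM1 : (1:ℝ) ≤ ((N+1:ℕ):ℝ) := by exact_mod_cast (by omega : 1 ≤ N+1)
  have hM3 : ((N+1:ℕ):ℝ) ≤ 3 * s.im := by push_cast; linarith
  have hMt : s.im ≤ ((N+1:ℕ):ℝ) := by push_cast; linarith
  have hnorm : ‖s‖ ≤ 4 * ((N+1:ℕ):ℝ) := by
    have := Complex.norm_le_abs_re_add_abs_im s
    rw [abs_of_pos (by linarith), abs_of_pos (by linarith)] at this; linarith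
  have hsz := summable_za (s := s) (by linarith) hs1
  have e1 : riemannZeta s = ∑ n ∈ Finset.range N, ((n+1:ℕ):ℂ) ^ (-s)
      + ((N+1:ℕ):ℂ) ^ (1-s) / (s-1) + ∑' n : ℕ, za (n+N+1) s := by
    rw [zeta_eq_of_im_pos (by linarith) (by linarith), ← hsz.sum_add_tsum_nat_add N, sum_za]
    ring
  have b1 : ‖∑ n ∈ Finset.range N, ((n+1:ℕ):ℂ) ^ (-s)‖ ≤ K * ((N+1:ℕ):ℝ) ^ (1/32:ℝ) := by
    calc _ ≤ ∑ n ∈ Finset.range N, ((n+1:ℕ):ℝ) ^ (-(65/64):ℝ) * ((N+1:ℕ):ℝ) ^ (1/32:ℝ) := by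
          refine norm_sum_le_of_le _ (fun n hn => ?_)
          have hn1 : (1:ℝ) ≤ ((n+1:ℕ):ℝ) := by exact_mod_cast (by omega : 1 ≤ n+1)
          rw [Complex.norm_natCast_cpow_of_pos (by omega), neg_re]
          calc ((n+1:ℕ):ℝ) ^ (-s.re) ≤ ((n+1:ℕ):ℝ) ^ (-(65/64) + 1/32 : ℝ) :=
                Real.rpow_le_rpow_of_exponent_le hn1 (by linarith)
            _ = ((n+1:ℕ):ℝ) ^ (-(65/64):ℝ) * ((n+1:ℕ):ℝ) ^ (1/32:ℝ) :=
                Real.rpow_add (by positivity) _ _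
            _ ≤ _ := by
                gcongr
                have := Finset.mem_range.mp hn; omega
      _ = (∑ n ∈ Finset.range N, ((n+1:ℕ):ℝ) ^ (-(65/64):ℝ)) * ((N+1:ℕ):ℝ) ^ (1/32:ℝ) := by
          rw [Finset.sum_mul]
      _ ≤ _ := by
          gcongr
          exact hsum.sum_le_tsum _ (fun n _ => by positivity)
  have b2 : ‖((N+1:ℕ):ℂ) ^ (1-s) / (s-1)‖ ≤ ((N+1:ℕ):ℝ) ^ (1/32:ℝ) := by
    have hd : 1 ≤ ‖s - 1‖ := by
      have := Complex.abs_im_le_norm (s-1)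
      simp only [sub_im, one_im, sub_zero] at this
      exact ht.trans ((le_abs_self _).trans this)
    rw [norm_div, Complex.norm_natCast_cpow_of_pos (by omega)]
    refine (div_le_self (by positivity) hd).trans ?_
    exact Real.rpow_le_rpow_of_exponent_le hM1 (by simp; linarith)
  have b3 : ‖∑' n : ℕ, za (n+N+1) s‖ ≤ 4 * K * ((N+1:ℕ):ℝ) ^ (1/32:ℝ) := by
    have hh : HasSum (fun n : ℕ => 4 * ((N+1:ℕ):ℝ) ^ (1/32:ℝ) * ((n+1:ℕ):ℝ) ^ (-(65/64):ℝ))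
        (4 * ((N+1:ℕ):ℝ) ^ (1/32:ℝ) * K) := hsum.hasSum.mul_left _
    refine (tsum_of_norm_bounded hh (fun n => ?_)).trans (le_of_eq (by ring))
    have hn1 : (1:ℝ) ≤ ((n+N+1:ℕ):ℝ) := by exact_mod_cast (by omega : 1 ≤ n+N+1)
    calc ‖za (n+N+1) s‖ ≤ ‖s‖ * ((n+N+1:ℕ):ℝ) ^ (-s.re-1) := norm_za_le (by omega) (by linarith) hs1
      _ ≤ (4 * ((N+1:ℕ):ℝ)) * ((n+N+1:ℕ):ℝ) ^ (-(31/32) + -(65/64) : ℝ) := by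
          gcongr
          linarith
      _ = (4 * ((N+1:ℕ):ℝ)) * (((n+N+1:ℕ):ℝ) ^ (-(31/32) : ℝ) * ((n+N+1:ℕ):ℝ) ^ (-(65/64) : ℝ)) := by
          rw [Real.rpow_add (by positivity)]
      _ ≤ (4 * ((N+1:ℕ):ℝ)) * (((N+1:ℕ):ℝ) ^ (-(31/32) : ℝ) * ((n+1:ℕ):ℝ) ^ (-(65/64) : ℝ)) := by
          refine mul_le_mul_of_nonneg_left (mul_le_mul ?_ ?_ (by positivity) (by positivity)) (by positivity)
          · exact Real.rpow_le_rpow_of_nonpos hM0 (by exact_mod_cast (by omega : N + 1 ≤ n + N + 1)) (by norm_num)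
          · exact Real.rpow_le_rpow_of_nonpos (by positivity)
              (by exact_mod_cast (by omega : n + 1 ≤ n + N + 1)) (by norm_num)
      _ = 4 * (((N+1:ℕ):ℝ) * ((N+1:ℕ):ℝ) ^ (-(31/32) : ℝ)) * ((n+1:ℕ):ℝ) ^ (-(65/64) : ℝ) := by ring
      _ = _ := by
          congr 2
          rw [← Real.rpow_one_add' (by positivity) (by norm_num)]; norm_num
  have b4 : ((N+1:ℕ):ℝ) ^ (1/32:ℝ) ≤ 3 * s.im ^ (1/32:ℝ) := by
    calc ((N+1:ℕ):ℝ) ^ (1/32:ℝ) ≤ (3 * s.im) ^ (1/32:ℝ) := by gcongr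
      _ = 3 ^ (1/32:ℝ) * s.im ^ (1/32:ℝ) := Real.mul_rpow (by norm_num) (by linarith)
      _ ≤ 3 ^ (1:ℝ) * s.im ^ (1/32:ℝ) := by
          gcongr <;> norm_num
      _ = _ := by norm_num
  rw [e1]
  calc _ ≤ K * ((N+1:ℕ):ℝ) ^ (1/32:ℝ) + ((N+1:ℕ):ℝ) ^ (1/32:ℝ) + 4 * K * ((N+1:ℕ):ℝ) ^ (1/32:ℝ) :=
        (norm_add₃_le).trans (by gcongr)
    _ = (5 * K + 1) * ((N+1:ℕ):ℝ) ^ (1/32:ℝ) := by ring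
    _ ≤ (5 * K + 1) * (3 * s.im ^ (1/32:ℝ)) := by gcongr
    _ = _ := by ring

lemma zeta_bound : ∃ C > (0:ℝ), ∀ s : ℂ, 1 - 1/64 ≤ s.re → s.re ≤ 3 → 1 ≤ |s.im| →
    ‖riemannZeta s‖ ≤ C * |s.im| ^ (1/32 : ℝ) := by
  obtain ⟨C, hC, h⟩ := zeta_bound_pos
  refine ⟨C, hC, fun s h1 h2 h3 => ?_⟩
  rcases le_total 0 s.im with h0 | h0
  · rw [abs_of_nonneg h0] at h3 ⊢
    exact h s h1 h2 h3
  · rw [abs_of_nonpos h0] at h3 ⊢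
    have := h (starRingEnd ℂ s) (by simpa using h1) (by simpa using h2) (by simpa using h3)
    rw [riemannZeta_conj] at this
    simpa using this

/-- derivative bound -/
lemma zeta_deriv_bound : ∃ C > (0:ℝ), ∀ s : ℂ, 1 - 1/128 ≤ s.re → s.re ≤ 5/2 → 2 ≤ |s.im| →
    ‖deriv riemannZeta s‖ ≤ C * |s.im| ^ (1/32 : ℝ) := by
  obtain ⟨C, hC, h⟩ := zeta_bound
  refine ⟨C * 2 * 128, by positivity, fun s h1 h2 h3 => ?_⟩
  have hball : ∀ z ∈ Metric.closedBall s (1/128), |z.re - s.re| ≤ 1/128 ∧ |z.im - s.im| ≤ 1/128 := by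
    intro z hz
    rw [Metric.mem_closedBall, dist_eq_norm] at hz
    exact ⟨by simpa using (Complex.abs_re_le_norm (z - s)).trans hz,
      by simpa using (Complex.abs_im_le_norm (z - s)).trans hz⟩
  have him : ∀ z ∈ Metric.closedBall s (1/128), 1 ≤ |z.im| ∧ |z.im| ≤ 2 * |s.im| := by
    intro z hz
    have h4 := (hball z hz).2
    have h5 := abs_sub_abs_le_abs_sub s.im z.im
    have h6 := abs_sub_abs_le_abs_sub z.im s.im
    rw [abs_sub_comm] at h5
    constructor <;> linarith
  have key := Complex.norm_deriv_le_of_forall_mem_sphere_norm_le (c := s) (R := 1/128)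
    (f := riemannZeta) (C := C * 2 * |s.im| ^ (1/32:ℝ)) (by norm_num) ?_ ?_
  · refine key.trans (le_of_eq (by ring))
  · refine DifferentiableOn.diffContOnCl_ball (U := Metric.closedBall s (1/128)) ?_ le_rfl
    intro z hz
    refine (differentiableAt_riemannZeta ?_).differentiableWithinAt
    rintro rfl
    have := (him 1 hz).1; norm_num at this
  · intro z hz
    have hz := Metric.sphere_subset_closedBall hz
    have h4 := abs_le.mp (hball z hz).1
    refine (h z (by linarith) (by linarith) (him z hz).1).trans ?_
    rw [mul_assoc]
    gcongr
    calc |z.im| ^ (1/32:ℝ) ≤ (2 * |s.im|) ^ (1/32:ℝ) := by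
          gcongr; exact (him z hz).2
      _ = 2 ^ (1/32:ℝ) * |s.im| ^ (1/32:ℝ) := Real.mul_rpow (by norm_num) (by positivity)
      _ ≤ 2 ^ (1:ℝ) * |s.im| ^ (1/32:ℝ) := by gcongr <;> norm_num
      _ = _ := by norm_num

end MOS

namespace MOS
open Complex

lemma zeta_near_one : ∃ C > (0:ℝ), ∀ x : ℝ, 0 < x → x ≤ 1 → ‖riemannZeta (1 + x)‖ ≤ C / x := by
  have hc : ContinuousOn (fun x : ℝ => riemannZeta₁ (1 + x)) (Set.Icc 0 1) := by
    have : Continuous riemannZeta₁ := differentiable_riemannZeta₁.continuous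
    fun_prop
  obtain ⟨C, hC⟩ := isCompact_Icc.exists_bound_of_continuousOn hc
  refine ⟨max C 1, by positivity, fun x h0 h1 => ?_⟩
  have hx : (x:ℂ) ≠ 0 := by exact_mod_cast h0.ne'
  rw [riemannZeta_eq_inv_sub_mul (by simpa using hx), norm_mul, norm_inv]
  have := (hC x ⟨h0.le, h1⟩).trans (le_max_left C 1)
  have h2 : ‖(1:ℂ) + x - 1‖ = x := by simp [abs_of_pos h0]
  rw [h2, div_eq_inv_mul]
  gcongr

lemma three_four_one {x : ℝ} (hx : 0 < x) (y : ℝ) :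
    1 ≤ ‖riemannZeta (1 + x)‖ ^ 3 * ‖riemannZeta (1 + x + I * y)‖ ^ 4 *
      ‖riemannZeta (1 + x + 2 * I * y)‖ := by
  have := DirichletCharacter.norm_LFunction_product_ge_one (N := 1) (1 : DirichletCharacter ℂ 1) hx y
  rw [DirichletCharacter.LFunctionTrivChar] at this
  simp only [one_pow, DirichletCharacter.LFunction_modOne_eq, norm_mul, norm_pow] at this
  exact this

lemma zeta_seg : ∃ C > (0:ℝ), ∀ t : ℝ, 2 ≤ |t| → ∀ a b : ℝ, 0 ≤ a → a ≤ 1 → 0 ≤ b → b ≤ 1 →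
    ‖riemannZeta (1 + a + I * t) - riemannZeta (1 + b + I * t)‖ ≤ C * |t| ^ (1/32:ℝ) * |a - b| := by
  obtain ⟨C, hC, h⟩ := zeta_deriv_bound
  refine ⟨C, hC, fun t ht a b ha ha1 hb hb1 => ?_⟩
  let U : Set ℂ := (Complex.re ⁻¹' Set.Icc 1 2) ∩ (Complex.im ⁻¹' {t})
  have hUc : Convex ℝ U := ((convex_Icc _ _).linear_preimage Complex.reLm).inter
    ((convex_singleton _).linear_preimage Complex.imLm)
  have := hUc.norm_image_sub_le_of_norm_deriv_le (f := riemannZeta) (C := C * |t| ^ (1/32:ℝ))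
    (x := 1 + b + I * t) (y := 1 + a + I * t) ?_ ?_ ?_ ?_
  · refine this.trans (le_of_eq ?_)
    congr 1
    rw [show (1:ℂ) + a + I * t - (1 + b + I * t) = ((a - b : ℝ) : ℂ) by push_cast; ring]
    rw [Complex.norm_real, Real.norm_eq_abs]
  · intro z hz
    refine differentiableAt_riemannZeta ?_
    rintro rfl
    have : (1:ℂ).im = t := hz.2
    simp at this; rw [← this] at ht; norm_num at ht
  · intro z hz
    have h1 : 1 ≤ z.re := hz.1.1
    have h2 : z.re ≤ 2 := hz.1.2
    have h3 : z.im = t := hz.2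
    have := h z (by linarith) (by linarith) (by rw [h3]; exact ht)
    rwa [h3] at this
  · refine ⟨⟨?_, ?_⟩, ?_⟩ <;> simp <;> linarith
  · refine ⟨⟨?_, ?_⟩, ?_⟩ <;> simp <;> linarith

lemma zeta_lower : ∃ c > (0:ℝ), ∀ σ t : ℝ, 0 < σ → σ ≤ 1 → 2 ≤ |t| →
    c * (|t| ^ (1/32:ℝ))⁻¹ ^ 4 ≤ ‖riemannZeta (1 + σ + I * t)‖ := by
  obtain ⟨C0, hC0, h0⟩ := zeta_near_one
  obtain ⟨C1, hC1, h1⟩ := zeta_bound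
  obtain ⟨C2, hC2, h2⟩ := zeta_seg
  set B := C0 ^ 3 * (2 * C1) with hB
  have hB0 : 0 < B := by positivity
  set b := B ^ (1/4:ℝ) with hb
  have hb0 : 0 < b := by positivity
  have hb4 : b ^ 4 = B := by
    rw [hb, ← Real.rpow_natCast, ← Real.rpow_mul hB0.le]; norm_num
  set k := min 1 (1 / (2 * b * C2)) with hk
  have hk0 : 0 < k := by positivity
  have hk1 : k ≤ 1 := min_le_left _ _
  have hk2 : k * (2 * b * C2) ≤ 1 := by
    have := min_le_right 1 (1 / (2 * b * C2))
    rwa [← hk, le_div_iff₀ (by positivity)] at this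
  refine ⟨k^3 / (2 * b), by positivity, fun σ t hσ hσ1 ht => ?_⟩
  set τ := |t| ^ (1/32:ℝ) with hτ
  have hτ1 : 1 ≤ τ := Real.one_le_rpow (by linarith) (by norm_num)
  have hτ0 : 0 < τ := by linarith
  set w := τ⁻¹ with hw
  have hw0 : 0 < w := by positivity
  have hw1 : w ≤ 1 := inv_le_one_of_one_le₀ hτ1
  have hwτ : w * τ = 1 := inv_mul_cancel₀ hτ0.ne'
  -- main lower bound
  have main : ∀ x : ℝ, 0 < x → x ≤ 1 → x ^ 3 * w ≤ (b * ‖riemannZeta (1 + x + I * t)‖) ^ 4 := by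
    intro x hx hx1
    have e1 := three_four_one hx t
    have e2 : ‖riemannZeta (1 + x + 2 * I * t)‖ ≤ (2 * C1) * τ := by
      have e3 := h1 (1 + x + 2 * I * t) (by simp; linarith) (by simp; linarith) (by
        simp [abs_mul]; linarith)
      have e4 : (1 + x + 2 * I * t : ℂ).im = 2 * t := by simp
      rw [e4, abs_mul, abs_two, Real.mul_rpow (by norm_num) (by positivity)] at e3
      refine e3.trans ?_
      rw [mul_comm 2 C1, mul_assoc]
      gcongr
      calc (2:ℝ) ^ (1/32:ℝ) ≤ 2 ^ (1:ℝ) := by gcongr <;> norm_num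
        _ = 2 := by norm_num
    have e5 := h0 x hx hx1
    set Z := ‖riemannZeta (1 + x + I * t)‖ with hZ
    have e6 : 1 ≤ (C0 / x) ^ 3 * Z ^ 4 * ((2 * C1) * τ) := e1.trans (by gcongr)
    have e7 : (C0 / x) ^ 3 * Z ^ 4 * ((2 * C1) * τ) = (b * Z) ^ 4 * τ / x ^ 3 := by
      rw [mul_pow, hb4, hB]; field_simp
    rw [e7, le_div_iff₀ (by positivity), one_mul] at e6
    calc x ^ 3 * w ≤ ((b * Z) ^ 4 * τ) * w := by gcongr
      _ = (b*Z)^4 * (w * τ) := by ring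
      _ = _ := by rw [hwτ, mul_one]
  have main2 : ∀ x : ℝ, 0 < x → x ≤ 1 → k ^ 4 * w ^ 5 ≤ x →
      k ^ 3 * w ^ 4 ≤ b * ‖riemannZeta (1 + x + I * t)‖ := by
    intro x hx hx1 hxk
    refine le_of_pow_le_pow_left₀ (n := 4) (by norm_num) (by positivity) ?_
    refine le_trans ?_ (main x hx hx1)
    calc (k ^ 3 * w ^ 4) ^ 4 = (k ^ 4 * w ^ 5) ^ 3 * w := by ring
      _ ≤ _ := by gcongr
  rcases le_total (k ^ 4 * w ^ 5) σ with hc | hc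
  · have := main2 σ hσ hσ1 hc
    rw [div_mul_eq_mul_div, div_le_iff₀ (by positivity)]
    have h5 : 0 ≤ b * ‖riemannZeta (1 + σ + I * t)‖ := by positivity
    linarith
  · set η := k ^ 4 * w ^ 5 with hη
    have hη0 : 0 < η := by positivity
    have hη1 : η ≤ 1 := by
      rw [hη]; exact mul_le_one₀ (pow_le_one₀ hk0.le hk1) (by positivity) (pow_le_one₀ hw0.le hw1)
    have e1 := main2 η hη0 hη1 le_rfl
    have e2 := h2 t ht η σ hη0.le hη1 hσ.le hσ1
    have e3 := norm_sub_norm_le (riemannZeta (1 + η + I * t)) (riemannZeta (1 + σ + I * t))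
    have e4 : C2 * τ * |η - σ| ≤ C2 * k ^ 4 * w ^ 4 := by
      rw [abs_of_nonneg (by linarith)]
      calc C2 * τ * (η - σ) ≤ C2 * τ * η := by gcongr; linarith
        _ = C2 * k ^ 4 * w ^ 4 * (w * τ) := by rw [hη]; ring
        _ = _ := by rw [hwτ, mul_one]
    have e5 : b * (C2 * k ^ 4 * w ^ 4) ≤ k ^ 3 * w ^ 4 / 2 := by
      have : b * (C2 * k ^ 4 * w ^ 4) = (k * (2 * b * C2)) * (k ^ 3 * w ^ 4 / 2) := by ring
      rw [this]
      exact mul_le_of_le_one_left (by positivity) hk2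
    rw [div_mul_eq_mul_div, div_le_iff₀ (by positivity)]
    have e6 : ‖riemannZeta (1 + η + I * t)‖ ≤ ‖riemannZeta (1 + σ + I * t)‖ + C2 * k ^ 4 * w ^ 4 := by
      linarith
    have e7 := mul_le_mul_of_nonneg_left e6 hb0.le
    nlinarith

end MOS

namespace MOS
open Complex

lemma zeta_lower_disc : ∃ c > (0:ℝ), ∃ r > (0:ℝ), r ≤ 1/128 ∧ ∀ s z : ℂ, 0 < s.re → s.re ≤ 1 →
    3 ≤ |s.im| → ‖z - s‖ ≤ r * (|s.im| ^ (1/32:ℝ))⁻¹ ^ 5 →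
    c * (|s.im| ^ (1/32:ℝ))⁻¹ ^ 4 ≤ ‖riemannZeta (1 + z)‖ := by
  obtain ⟨c, hc, h1⟩ := zeta_lower
  obtain ⟨C, hC, h2⟩ := zeta_deriv_bound
  set r := min (1/128) (c / (4 * C)) with hr
  have hr0 : 0 < r := by positivity
  have hr1 : r ≤ 1/128 := min_le_left _ _
  have hr2 : r * (4 * C) ≤ c := by
    have := min_le_right (1/128) (c / (4 * C))
    rwa [← hr, le_div_iff₀ (by positivity)] at this
  refine ⟨c/2, by positivity, r, hr0, hr1, fun s z hs hs1 ht hz => ?_⟩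
  set τ := |s.im| ^ (1/32:ℝ) with hτ
  have hτ1 : 1 ≤ τ := Real.one_le_rpow (by linarith) (by norm_num)
  have hτ0 : 0 < τ := by linarith
  set w := τ⁻¹ with hw
  have hw0 : 0 < w := by positivity
  have hw1 : w ≤ 1 := inv_le_one_of_one_le₀ hτ1
  have hwτ : w * τ = 1 := inv_mul_cancel₀ hτ0.ne'
  have hrw : r * w ^ 5 ≤ 1/128 := by
    calc r * w ^ 5 ≤ r * 1 := by gcongr; exact pow_le_one₀ hw0.le hw1
      _ ≤ _ := by linarith
  have hball : ∀ u ∈ Metric.closedBall (1 + s) (r * w ^ 5), |u.re - (1 + s.re)| ≤ 1/128 ∧ |u.im - s.im| ≤ 1/128 := by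
    intro u hu
    rw [Metric.mem_closedBall, dist_eq_norm] at hu
    exact ⟨by simpa using (Complex.abs_re_le_norm (u - (1+s))).trans (hu.trans hrw),
      by simpa using (Complex.abs_im_le_norm (u - (1+s))).trans (hu.trans hrw)⟩
  have him : ∀ u ∈ Metric.closedBall (1 + s) (r * w ^ 5), 2 ≤ |u.im| ∧ |u.im| ≤ 2 * |s.im| := by
    intro u hu
    have h4 := (hball u hu).2
    have h5 := abs_sub_abs_le_abs_sub s.im u.im
    have h6 := abs_sub_abs_le_abs_sub u.im s.im
    rw [abs_sub_comm] at h5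
    constructor <;> linarith
  have key := (convex_closedBall (1+s) (r * w ^ 5)).norm_image_sub_le_of_norm_deriv_le
    (f := riemannZeta) (C := C * (2 * τ)) (x := 1 + s) (y := 1 + z) ?_ ?_ ?_ ?_
  · have e1 := h1 s.re s.im hs hs1 (by linarith)
    have e2 : (1:ℂ) + s.re + I * s.im = 1 + s := by
      rw [add_assoc, mul_comm I, Complex.re_add_im]
    rw [e2] at e1
    have e3 : ‖(1 + z) - (1 + s)‖ ≤ r * w ^ 5 := by simpa using hz
    have e4 := norm_sub_norm_le (riemannZeta (1 + s)) (riemannZeta (1 + z))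
    rw [norm_sub_rev] at e4
    have e5 : C * (2 * τ) * ‖(1 + z) - (1 + s)‖ ≤ c / 2 * w ^ 4 := by
      calc _ ≤ C * (2 * τ) * (r * w ^ 5) := by gcongr
        _ = (r * (4 * C)) / 2 * w ^ 4 * (w * τ) := by ring
        _ = (r * (4 * C)) / 2 * w ^ 4 := by rw [hwτ, mul_one]
        _ ≤ _ := by gcongr
    linarith
  · intro u hu
    refine differentiableAt_riemannZeta ?_
    rintro rfl
    have := (him 1 hu).1; norm_num at this
  · intro u hu
    have h3 := abs_le.mp (hball u hu).1
    refine (h2 u (by linarith) (by linarith) (him u hu).1).trans ?_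
    gcongr
    calc |u.im| ^ (1/32:ℝ) ≤ (2 * |s.im|) ^ (1/32:ℝ) := by
          gcongr; exact (him u hu).2
      _ = 2 ^ (1/32:ℝ) * |s.im| ^ (1/32:ℝ) := Real.mul_rpow (by norm_num) (by positivity)
      _ ≤ 2 ^ (1:ℝ) * |s.im| ^ (1/32:ℝ) := by gcongr <;> norm_num
      _ = _ := by norm_num [hτ]
  · simp; positivity
  · simpa [dist_eq_norm] using hz

noncomputable def G (s : ℂ) : ℂ := ((s + 1) * riemannZeta₁ (1 + s))⁻¹

lemma zeta1_eq {s : ℂ} (hs : s ≠ 0) : riemannZeta₁ (1 + s) = s * riemannZeta (1 + s) := by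
  rw [riemannZeta_eq_inv_sub_mul (by simpa using hs)]
  rw [add_sub_cancel_left]; field_simp

def V : Set ℂ := {s | (s + 1) * riemannZeta₁ (1 + s) ≠ 0}

lemma V_open : IsOpen V := by
  have : Continuous riemannZeta₁ := differentiable_riemannZeta₁.continuous
  exact isOpen_ne_fun (by fun_prop) continuous_const

lemma G_diff : DifferentiableOn ℂ G V := by
  intro s hs
  unfold G
  have : DifferentiableAt ℂ (fun s => (s + 1) * riemannZeta₁ (1 + s)) s := by fun_prop
  exact (this.inv hs).differentiableWithinAt

lemma mem_V {s : ℂ} (hs : 0 ≤ s.re) : s ∈ V := by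
  refine mul_ne_zero ?_ ?_
  · intro h
    have := congrArg Complex.re h; simp at this; linarith
  · by_cases h : s = 0
    · simp [h]
    · rw [zeta1_eq h]
      exact mul_ne_zero h (riemannZeta_ne_zero_of_one_le_re (by simpa using hs))

lemma G_an : AnalyticOnNhd ℂ G V := G_diff.analyticOnNhd V_open

lemma G_an_iter (k : ℕ) : AnalyticOnNhd ℂ (iteratedDeriv k G) V := by
  rw [iteratedDeriv_eq_iterate]
  exact G_an.iterated_deriv k

lemma G_bound_large : ∃ C > (0:ℝ), ∀ k ≤ 2, ∀ s : ℂ, 0 < s.re → s.re ≤ 1 → 3 ≤ |s.im| →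
    ‖iteratedDeriv k G s‖ ≤ C * (1 + ‖s.im‖ ^ 2) ^ (-(3/2)/2 : ℝ) := by
  obtain ⟨c, hc, r, hr, hr1, h⟩ := zeta_lower_disc
  refine ⟨2 * 4 * 2 / (c * r ^ 2), by positivity, fun k hk s hs hs1 ht => ?_⟩
  set τ := |s.im| ^ (1/32:ℝ) with hτ
  have hτ1 : 1 ≤ τ := Real.one_le_rpow (by linarith) (by norm_num)
  have hτ0 : 0 < τ := by linarith
  set w := τ⁻¹ with hw
  have hw0 : 0 < w := by positivity
  have hw1 : w ≤ 1 := inv_le_one_of_one_le₀ hτ1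
  have hrw : r * w ^ 5 ≤ 1/128 := by
    calc r * w ^ 5 ≤ r * 1 := by gcongr; exact pow_le_one₀ hw0.le hw1
      _ ≤ _ := by linarith
  have t0 : 0 < |s.im| := by linarith
  have hzim : ∀ z ∈ Metric.closedBall s (r * w ^ 5), |s.im| / 2 ≤ |z.im| := by
    intro z hz
    rw [Metric.mem_closedBall, dist_eq_norm] at hz
    have h4 : |z.im - s.im| ≤ 1/128 := by
      simpa using (Complex.abs_im_le_norm (z - s)).trans (hz.trans hrw)
    have h5 := abs_sub_abs_le_abs_sub s.im z.im
    rw [abs_sub_comm] at h5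
    linarith
  have hzb : ∀ z ∈ Metric.closedBall s (r * w ^ 5),
      |s.im|/2 * (|s.im|/2) * (c * w ^ 4) ≤ ‖(z + 1) * riemannZeta₁ (1 + z)‖ := by
    intro z hz
    have h4 := hzim z hz
    have hz0 : z ≠ 0 := by rintro rfl; simp at h4; linarith [abs_pos.mp t0, abs_nonneg s.im]
    rw [zeta1_eq hz0, norm_mul, norm_mul, ← mul_assoc ‖z + 1‖]
    have h5 := Complex.abs_im_le_norm z
    have h6 : |z.im| ≤ ‖z + 1‖ := by simpa using Complex.abs_im_le_norm (z+1)
    have h7 := h s z hs hs1 ht (by rwa [Metric.mem_closedBall, dist_eq_norm] at hz)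
    exact mul_le_mul (mul_le_mul (by linarith) (by linarith) (by positivity) (by positivity))
      h7 (by positivity) (by positivity)
  have key := Complex.norm_iteratedDeriv_le_of_forall_mem_sphere_norm_le (n := k) (c := s)
    (R := r * w ^ 5) (f := G) (C := (|s.im|/2 * (|s.im|/2) * (c * w ^ 4))⁻¹) (by positivity) ?_ ?_
  · refine key.trans ?_
    have f1 : (k.factorial : ℝ) ≤ 2 := by
      interval_cases k <;> norm_num
    have f2 : (r * w ^ 5) ^ 2 ≤ (r * w ^ 5) ^ k :=
      pow_le_pow_of_le_one (by positivity) (by linarith) hk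
    have hτ16 : τ ^ 16 = |s.im| ^ (1/2:ℝ) := by
      rw [hτ, ← Real.rpow_natCast, ← Real.rpow_mul t0.le]; norm_num
    have f3 : (|s.im| ^ (-(3/2) : ℝ)) = |s.im| ^ (1/2:ℝ) / |s.im| ^ 2 := by
      rw [← Real.rpow_natCast, ← Real.rpow_sub t0]; norm_num
    have f4 : |s.im| ^ (-(3/2) : ℝ) ≤ 2 * (1 + ‖s.im‖ ^ 2) ^ (-(3/2)/2 : ℝ) := by
      have g1 : 1 + ‖s.im‖ ^ 2 ≤ 2 * |s.im| ^ 2 := by rw [Real.norm_eq_abs]; nlinarith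
      have g2 : (2 * |s.im| ^ 2) ^ (-(3/2)/2 : ℝ) ≤ (1 + ‖s.im‖ ^ 2) ^ (-(3/2)/2 : ℝ) :=
        Real.rpow_le_rpow_of_nonpos (by positivity) g1 (by norm_num)
      have g3 : (2 * |s.im| ^ 2) ^ (-(3/2)/2 : ℝ) = 2 ^ (-(3/2)/2 : ℝ) * |s.im| ^ (-(3/2) : ℝ) := by
        rw [Real.mul_rpow (by norm_num) (by positivity), ← Real.rpow_natCast |s.im|, ← Real.rpow_mul t0.le]
        norm_num
      have g4 : (2:ℝ) ^ (-1:ℝ) ≤ 2 ^ (-(3/2)/2 : ℝ) := by gcongr <;> norm_num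
      rw [Real.rpow_neg_one] at g4
      have g5 : 0 ≤ |s.im| ^ (-(3/2) : ℝ) := by positivity
      nlinarith
    calc (k.factorial : ℝ) * (|s.im|/2 * (|s.im|/2) * (c * w ^ 4))⁻¹ / (r * w ^ 5) ^ k
        ≤ 2 * (|s.im|/2 * (|s.im|/2) * (c * w ^ 4))⁻¹ / (r * w ^ 5) ^ 2 := by gcongr
      _ = (2 * 4 / (c * r ^ 2)) * (τ ^ 14 / |s.im| ^ 2) := by
          rw [hw]; field_simp; ring
      _ ≤ (2 * 4 / (c * r ^ 2)) * (τ ^ 16 / |s.im| ^ 2) := by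
          gcongr <;> norm_num [hτ1]
      _ = (2 * 4 / (c * r ^ 2)) * |s.im| ^ (-(3/2) : ℝ) := by rw [hτ16, f3]
      _ ≤ (2 * 4 / (c * r ^ 2)) * (2 * (1 + ‖s.im‖ ^ 2) ^ (-(3/2)/2 : ℝ)) := by gcongr
      _ = _ := by ring
  · refine DifferentiableOn.diffContOnCl_ball (U := V) G_diff ?_
    intro z hz
    have := hzb z hz
    have h0 : 0 < |s.im|/2 * (|s.im|/2) * (c * w ^ 4) := by positivity
    exact norm_pos_iff.mp (lt_of_lt_of_le h0 this)
  · intro z hz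
    unfold G
    rw [norm_inv]
    have := hzb z (Metric.sphere_subset_closedBall hz)
    gcongr

lemma G_bound_small (k : ℕ) : ∃ C > (0:ℝ), ∀ s : ℂ, 0 < s.re → s.re ≤ 1 → |s.im| ≤ 3 →
    ‖iteratedDeriv k G s‖ ≤ C * (1 + ‖s.im‖ ^ 2) ^ (-(3/2)/2 : ℝ) := by
  have hcpt : IsCompact (Set.Icc (0:ℝ) 1 ×ℂ Set.Icc (-3:ℝ) 3) := isCompact_Icc.reProdIm isCompact_Icc
  have hsub : (Set.Icc (0:ℝ) 1 ×ℂ Set.Icc (-3:ℝ) 3) ⊆ V := fun z hz => mem_V hz.1.1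
  obtain ⟨C, hC⟩ := hcpt.exists_bound_of_continuousOn ((G_an_iter k).continuousOn.mono hsub)
  refine ⟨max C 1 * 10, by positivity, fun s h1 h2 h3 => ?_⟩
  have h4 := hC s ⟨⟨h1.le, h2⟩, abs_le.mp h3⟩
  have h5 : (10:ℝ)⁻¹ ≤ (1 + ‖s.im‖ ^ 2) ^ (-(3/2)/2 : ℝ) := by
    have g1 : 1 + ‖s.im‖ ^ 2 ≤ 10 := by rw [Real.norm_eq_abs]; nlinarith [abs_nonneg s.im]
    calc (10:ℝ)⁻¹ = 10 ^ (-1:ℝ) := by rw [Real.rpow_neg_one]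
      _ ≤ 10 ^ (-(3/2)/2 : ℝ) := by gcongr <;> norm_num
      _ ≤ _ := Real.rpow_le_rpow_of_nonpos (by positivity) g1 (by norm_num)
  calc _ ≤ max C 1 := h4.trans (le_max_left _ _)
    _ = max C 1 * 10 * 10⁻¹ := by ring
    _ ≤ _ := by gcongr

lemma G_bound : ∃ C > (0:ℝ), ∀ k ≤ 2, ∀ s : ℂ, 0 < s.re → s.re ≤ 1 →
    ‖iteratedDeriv k G s‖ ≤ C * (1 + ‖s.im‖ ^ 2) ^ (-(3/2)/2 : ℝ) := by
  obtain ⟨C, hC, h⟩ := G_bound_large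
  obtain ⟨C0, hC0, h0⟩ := G_bound_small 0
  obtain ⟨C1, hC1, h1⟩ := G_bound_small 1
  obtain ⟨C2, hC2, h2⟩ := G_bound_small 2
  refine ⟨C + C0 + C1 + C2, by positivity, fun k hk s hs hs1 => ?_⟩
  have hp : 0 ≤ (1 + ‖s.im‖ ^ 2) ^ (-(3/2)/2 : ℝ) := by positivity
  rcases le_total 3 |s.im| with ht | ht
  · refine (h k hk s hs hs1 ht).trans ?_
    gcongr; linarith
  · interval_cases k
    · refine (h0 s hs hs1 ht).trans ?_
      gcongr; linarith
    · refine (h1 s hs hs1 ht).trans ?_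
      gcongr; linarith
    · refine (h2 s hs hs1 ht).trans ?_
      gcongr; linarith

end MOS

namespace MOS
open Complex MeasureTheory FourierTransform

noncomputable def sl (c ξ : ℝ) : ℂ := c + 2 * Real.pi * I * ξ

noncomputable def K (s : ℂ) : ℂ := (s * (s + 1))⁻¹

@[simp] lemma sl_re (c ξ : ℝ) : (sl c ξ).re = c := by simp [sl]
@[simp] lemma sl_im (c ξ : ℝ) : (sl c ξ).im = 2 * Real.pi * ξ := by simp [sl]

lemma sl_ne {c : ℝ} (hc : 0 < c) (ξ : ℝ) : sl c ξ ≠ 0 := by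
  intro h; have := congrArg Complex.re h; simp at this; linarith

lemma sl1_ne {c : ℝ} (hc : 0 < c) (ξ : ℝ) : sl c ξ + 1 ≠ 0 := by
  intro h; have := congrArg Complex.re h; simp at this; linarith

lemma sl_cont (c : ℝ) : Continuous (sl c) := by unfold sl; fun_prop

lemma K_cont {c : ℝ} (hc : 0 < c) : Continuous (fun ξ => K (sl c ξ)) := by
  unfold K
  have := sl_cont c
  exact Continuous.inv₀ (by fun_prop) (fun ξ => mul_ne_zero (sl_ne hc ξ) (sl1_ne hc ξ))

lemma two_pi_sq (ξ : ℝ) : ξ ^ 2 ≤ (2 * Real.pi * ξ) ^ 2 := by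
  have : (1:ℝ) ≤ 2 * Real.pi := by linarith [Real.pi_gt_three]
  rw [mul_pow]
  exact le_mul_of_one_le_left (sq_nonneg ξ) (one_le_pow₀ this)

lemma K_int {c : ℝ} (hc : 0 < c) : Integrable (fun ξ => K (sl c ξ)) := by
  refine Integrable.mono' (integrable_inv_one_add_sq.const_mul ((min (c^2) 1)⁻¹))
    (K_cont hc).aestronglyMeasurable (Filter.Eventually.of_forall fun ξ => ?_)
  unfold K
  rw [norm_inv, ← mul_inv, norm_mul]
  have hm : 0 < min (c^2) 1 := by positivity
  have h1 : ‖sl c ξ‖ ^ 2 = c ^ 2 + (2 * Real.pi * ξ) ^ 2 := by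
    rw [← Complex.normSq_eq_norm_sq, Complex.normSq_apply]; simp; ring
  have h2 : ‖sl c ξ‖ ≤ ‖sl c ξ + 1‖ := by
    rw [← sq_le_sq₀ (by positivity) (by positivity), ← Complex.normSq_eq_norm_sq,
      ← Complex.normSq_eq_norm_sq, Complex.normSq_apply, Complex.normSq_apply]
    simp; nlinarith
  have h3 : min (c^2) 1 * (1 + ξ ^ 2) ≤ ‖sl c ξ‖ * ‖sl c ξ + 1‖ := by
    calc min (c^2) 1 * (1 + ξ ^ 2) = min (c^2) 1 + min (c^2) 1 * ξ^2 := by ring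
      _ ≤ c^2 + 1 * ξ^2 := by gcongr <;> simp
      _ ≤ c^2 + (2 * Real.pi * ξ) ^ 2 := by linarith [two_pi_sq ξ]
      _ = ‖sl c ξ‖ * ‖sl c ξ‖ := by rw [← h1]; ring
      _ ≤ _ := by gcongr
  gcongr

noncomputable def f (c : ℝ) : ℝ → ℂ :=
  Set.indicator (Set.Ioi 0) (fun v => cexp (-(c:ℂ) * v) - cexp (-((c:ℂ)+1) * v))

lemma f_eq_max (c : ℝ) : f c = fun v => cexp (-(c:ℂ) * (max v 0 : ℝ)) - cexp (-((c:ℂ)+1) * (max v 0 : ℝ)) := by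
  ext v
  unfold f
  by_cases h : 0 < v
  · rw [Set.indicator_of_mem (by simpa using h), max_eq_left h.le]
  · rw [Set.indicator_of_notMem (by simpa using h), max_eq_right (by linarith)]; simp

lemma f_cont (c : ℝ) : Continuous (f c) := by
  rw [f_eq_max]; fun_prop

lemma f_int {c : ℝ} (hc : 0 < c) : Integrable (f c) := by
  unfold f
  rw [integrable_indicator_iff measurableSet_Ioi]
  exact (integrableOn_exp_mul_complex_Ioi (by simpa using hc) 0).sub
    (integrableOn_exp_mul_complex_Ioi (by simp; linarith) 0)

lemma f_fourier {c : ℝ} (hc : 0 < c) : 𝓕 (f c) = fun ξ => K (sl c ξ) := by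
  ext ξ
  rw [Real.fourier_eq']
  have h1 : ∀ v : ℝ, cexp (↑(-2 * Real.pi * inner ℝ v ξ) * I) • f c v =
      Set.indicator (Set.Ioi 0) (fun v : ℝ => cexp (-(sl c ξ) * v) - cexp (-(sl c ξ + 1) * v)) v := by
    intro v
    unfold f
    by_cases h : v ∈ Set.Ioi (0:ℝ)
    · rw [Set.indicator_of_mem h, Set.indicator_of_mem h, smul_eq_mul, mul_sub, ← Complex.exp_add,
        ← Complex.exp_add]
      congr 2
      · simp [sl]; ring
      · simp [sl]; ring
    · rw [Set.indicator_of_notMem h, Set.indicator_of_notMem h, smul_zero]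
  simp_rw [h1]
  rw [integral_indicator measurableSet_Ioi, integral_sub, integral_exp_mul_complex_Ioi (by simpa using hc),
    integral_exp_mul_complex_Ioi (by simp; linarith)]
  · have := sl_ne hc ξ
    have := sl1_ne hc ξ
    unfold K
    simp only [ofReal_zero, mul_zero, Complex.exp_zero]
    rw [neg_div_neg_eq, neg_div_neg_eq]
    field_simp
    ring
  · exact integrableOn_exp_mul_complex_Ioi (by simpa using hc) 0
  · exact integrableOn_exp_mul_complex_Ioi (by simp; linarith) 0

lemma perron {c : ℝ} (hc : 0 < c) (w : ℝ) :
    ∫ ξ : ℝ, cexp (2 * Real.pi * I * ξ * w) * K (sl c ξ) = f c w := by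
  have h := (f_int hc).fourierInv_fourier_eq (by rw [f_fourier hc]; exact K_int hc)
    (f_cont c).continuousAt (v := w)
  rw [f_fourier hc, Real.fourierInv_eq'] at h
  rw [← h]
  congr 1; ext ξ
  rw [smul_eq_mul]
  congr 2
  simp; ring

/-- the function on the line -/
noncomputable def g (c ξ : ℝ) : ℂ := G (sl c ξ)

lemma sl_hasDeriv (c ξ : ℝ) : HasDerivAt (sl c) (2 * Real.pi * I) ξ := by
  unfold sl
  have := ((Complex.ofRealCLM.hasDerivAt (x := ξ)).const_mul (2 * Real.pi * I)).const_add (c:ℂ)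
  simpa using this

lemma iter_hasDeriv {c : ℝ} (hc : 0 < c) (k : ℕ) (ξ : ℝ) :
    HasDerivAt (fun ξ => iteratedDeriv k G (sl c ξ))
      ((2 * Real.pi * I) * iteratedDeriv (k+1) G (sl c ξ)) ξ := by
  have h1 : HasDerivAt (iteratedDeriv k G) (iteratedDeriv (k+1) G (sl c ξ)) (sl c ξ) := by
    rw [iteratedDeriv_succ]
    exact ((G_an_iter k) _ (mem_V (by simpa using hc.le))).differentiableAt.hasDerivAt
  have := HasDerivAt.scomp (𝕜 := ℝ) (𝕜' := ℂ) ξ h1 (sl_hasDeriv c ξ)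
  simp only [smul_eq_mul] at this
  exact this

lemma iter_int {c : ℝ} (hc : 0 < c) (hc1 : c ≤ 1) (k : ℕ) (hk : k ≤ 2) :
    Integrable (fun ξ => iteratedDeriv k G (sl c ξ)) := by
  obtain ⟨C, hC, h⟩ := G_bound
  have hi : Integrable (fun ξ : ℝ => (1 + ‖ξ‖ ^ 2) ^ (-(3/2)/2 : ℝ)) :=
    integrable_rpow_neg_one_add_norm_sq (by simp; norm_num)
  refine Integrable.mono' (hi.const_mul C) ?_ (Filter.Eventually.of_forall fun ξ => ?_)
  · refine Continuous.aestronglyMeasurable ?_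
    exact continuous_iff_continuousAt.mpr (fun ξ => (iter_hasDeriv hc k ξ).continuousAt)
  · refine (h k hk _ (by simpa using hc) (by simpa using hc1)).trans ?_
    gcongr ?_ * ?_
    refine Real.rpow_le_rpow_of_nonpos (by positivity) ?_ (by norm_num)
    have := two_pi_sq ξ
    rw [Real.norm_eq_abs, Real.norm_eq_abs, sq_abs, sq_abs, sl_im]; linarith

lemma fourier_g_bound : ∃ C > (0:ℝ), ∀ c : ℝ, 0 < c → c ≤ 1 → ∀ u : ℝ, 0 < u →
    ‖∫ ξ : ℝ, cexp (2 * Real.pi * I * ξ * u) * g c ξ‖ ≤ C / u ^ 2 := by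
  obtain ⟨C, hC, h⟩ := G_bound
  have hi : Integrable (fun ξ : ℝ => (1 + ‖ξ‖ ^ 2) ^ (-(3/2)/2 : ℝ)) :=
    integrable_rpow_neg_one_add_norm_sq (by simp; norm_num)
  set J := ∫ ξ : ℝ, (1 + ‖ξ‖ ^ 2) ^ (-(3/2)/2 : ℝ) with hJ
  have hJ0 : 0 ≤ J := integral_nonneg (fun ξ => by positivity)
  refine ⟨C * J + 1, by positivity, fun c hc hc1 u hu => ?_⟩
  have hd0 : deriv (g c) = fun ξ => (2 * Real.pi * I) * iteratedDeriv 1 G (sl c ξ) := by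
    ext ξ
    have := (iter_hasDeriv hc 0 ξ).deriv
    simp only [iteratedDeriv_zero, zero_add] at this
    exact this
  have hd1 : deriv (deriv (g c)) = fun ξ => (2 * Real.pi * I) * ((2 * Real.pi * I) * iteratedDeriv 2 G (sl c ξ)) := by
    rw [hd0]; ext ξ
    exact ((iter_hasDeriv hc 1 ξ).const_mul _).deriv
  have hD0 : Differentiable ℝ (g c) := fun ξ => by
    have := (iter_hasDeriv hc 0 ξ).differentiableAt
    simp only [iteratedDeriv_zero] at this
    exact this
  have hD1 : Differentiable ℝ (deriv (g c)) := fun ξ => by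
    rw [hd0]; exact ((iter_hasDeriv hc 1 ξ).const_mul _).differentiableAt
  have hI0 : Integrable (g c) := by
    have := iter_int hc hc1 0 (by norm_num)
    simp only [iteratedDeriv_zero] at this
    exact this
  have hI1 : Integrable (deriv (g c)) := by
    rw [hd0]; exact (iter_int hc hc1 1 (by norm_num)).const_mul _
  have hI2 : Integrable (deriv (deriv (g c))) := by
    rw [hd1]; exact ((iter_int hc hc1 2 (by norm_num)).const_mul _).const_mul _
  have e1 := Real.fourier_deriv hI0 hD0 hI1
  have e2 := Real.fourier_deriv hI1 hD1 hI2
  have e3 : 𝓕 (deriv (deriv (g c))) (-u) = (2 * Real.pi * I * u) ^ 2 * 𝓕 (g c) (-u) := by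
    rw [e2, e1]; simp only [smul_eq_mul]; push_cast; ring
  have e4 : 𝓕 (g c) (-u) = ∫ ξ : ℝ, cexp (2 * Real.pi * I * ξ * u) * g c ξ := by
    rw [Real.fourier_eq']
    congr 1; ext ξ
    rw [smul_eq_mul]; congr 2; simp; ring
  have e5 : ‖𝓕 (deriv (deriv (g c))) (-u)‖ ≤ (2 * Real.pi) ^ 2 * (C * J) := by
    rw [Real.fourier_eq']
    refine (norm_integral_le_integral_norm _).trans ?_
    calc _ ≤ ∫ ξ : ℝ, (2 * Real.pi) ^ 2 * (C * (1 + ‖ξ‖ ^ 2) ^ (-(3/2)/2 : ℝ)) := by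
          refine integral_mono_of_nonneg (Filter.Eventually.of_forall fun ξ => norm_nonneg _)
            ((hi.const_mul _).const_mul _) (Filter.Eventually.of_forall fun ξ => ?_)
          simp only
          rw [norm_smul, Complex.norm_exp_ofReal_mul_I, one_mul, hd1]
          simp only [norm_mul, Complex.norm_I, Complex.norm_real, Real.norm_eq_abs, abs_of_pos Real.pi_pos]
          have := h 2 le_rfl (sl c ξ) (by simpa using hc) (by simpa using hc1)
          have h6 : (1 + ‖(sl c ξ).im‖ ^ 2) ^ (-(3/2)/2 : ℝ) ≤ (1 + ‖ξ‖ ^ 2) ^ (-(3/2)/2 : ℝ) := by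
            refine Real.rpow_le_rpow_of_nonpos (by positivity) ?_ (by norm_num)
            have := two_pi_sq ξ
            rw [Real.norm_eq_abs, Real.norm_eq_abs, sq_abs, sq_abs, sl_im]; linarith
          have h7 : ‖iteratedDeriv 2 G (sl c ξ)‖ ≤ C * (1 + ‖ξ‖ ^ 2) ^ (-(3/2)/2 : ℝ) :=
            this.trans (by gcongr)
          rw [Real.norm_eq_abs] at h7
          have h8 := mul_le_mul_of_nonneg_left h7 (sq_nonneg (2 * Real.pi))
          refine le_trans (le_of_eq ?_) h8
          simp; ring
      _ = _ := by rw [integral_const_mul, integral_const_mul]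
  rw [e3, norm_mul, norm_pow, e4] at e5
  have e6 : ‖(2 * Real.pi * I * u : ℂ)‖ = 2 * Real.pi * u := by
    simp [abs_of_pos Real.pi_pos, abs_of_pos hu]
  rw [e6, mul_pow, mul_assoc] at e5
  have e7 := le_of_mul_le_mul_left e5 (by positivity)
  rw [le_div_iff₀ (by positivity)]
  linarith

end MOS

namespace MOS
open Complex MeasureTheory

noncomputable def A (c : ℝ) (n : ℕ) : ℂ := (ArithmeticFunction.moebius n : ℂ) / n * cexp (-(c:ℂ) * (Real.log n : ℝ))

lemma A_term (c ξ : ℝ) (n : ℕ) :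
    A c n * cexp (-(2 * Real.pi * I * ξ) * (Real.log n : ℝ)) =
      LSeries.term (fun n => (ArithmeticFunction.moebius n : ℂ)) (1 + sl c ξ) n := by
  rcases Nat.eq_zero_or_pos n with rfl | hn
  · simp [A]
  · have hn0 : (n:ℂ) ≠ 0 := by exact_mod_cast hn.ne'
    rw [LSeries.term_of_ne_zero hn.ne', Complex.cpow_add _ _ hn0, Complex.cpow_one, A, mul_assoc,
      ← Complex.exp_add, Complex.cpow_def_of_ne_zero hn0, div_mul_eq_div_div, div_eq_mul_inv _ (cexp _), ← Complex.exp_neg,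
      Complex.ofReal_log (Nat.cast_nonneg n), sl]
    congr 2
    push_cast
    ring

lemma norm_e (ξ w : ℝ) : ‖cexp (2 * Real.pi * I * ξ * w)‖ = 1 := by
  rw [show (2 * Real.pi * I * ξ * w : ℂ) = ((2 * Real.pi * ξ * w : ℝ) : ℂ) * I by push_cast; ring]
  exact Complex.norm_exp_ofReal_mul_I _

lemma A_norm (c : ℝ) (n : ℕ) : ‖A c n‖ ≤ (n:ℝ) ^ (-(1 + c)) := by
  rcases Nat.eq_zero_or_pos n with rfl | hn
  · simp [A]; positivity
  · have hn0 : (0:ℝ) < n := by exact_mod_cast hn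
    rw [A, norm_mul, Complex.norm_exp, norm_div, Real.rpow_def_of_pos hn0]
    have h1 : ‖(ArithmeticFunction.moebius n : ℂ)‖ ≤ 1 := by
      rw [Complex.norm_intCast]
      exact_mod_cast ArithmeticFunction.abs_moebius_le_one
    have h2 : (-(c:ℂ) * (Real.log n : ℝ)).re = - c * Real.log n := by
      rw [← Complex.ofReal_neg, ← Complex.ofReal_mul, Complex.ofReal_re]
    rw [h2, Complex.norm_natCast]
    have h3 : Real.exp (Real.log n * (-(1+c))) = 1 / n * Real.exp (- c * Real.log n) := by
      rw [show Real.log n * (-(1+c)) = -Real.log n + (-c * Real.log n) by ring, Real.exp_add, Real.exp_neg,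
        Real.exp_log hn0, one_div]
    rw [h3]
    gcongr

lemma tsum_A {c : ℝ} (hc : 0 < c) (u ξ : ℝ) :
    ∑' n : ℕ, A c n * (cexp (2 * Real.pi * I * ξ * ((u - Real.log n : ℝ))) * K (sl c ξ)) =
      cexp (2 * Real.pi * I * ξ * u) * g c ξ := by
  have h1 : ∀ n : ℕ, A c n * (cexp (2 * Real.pi * I * ξ * ((u - Real.log n : ℝ))) * K (sl c ξ)) =
      (cexp (2 * Real.pi * I * ξ * u) * K (sl c ξ)) *
        LSeries.term (fun n => (ArithmeticFunction.moebius n : ℂ)) (1 + sl c ξ) n := by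
    intro n
    rw [← A_term]
    have : cexp (2 * Real.pi * I * ξ * ((u - Real.log n : ℝ))) =
      cexp (2 * Real.pi * I * ξ * u) * cexp (-(2 * Real.pi * I * ξ) * (Real.log n : ℝ)) := by
      rw [← Complex.exp_add]; congr 1; push_cast; ring
    rw [this]; ring
  simp_rw [h1]
  rw [tsum_mul_left]
  change _ * LSeries (fun n => (ArithmeticFunction.moebius n : ℂ)) (1 + sl c ξ) = _
  have hre : 1 < (1 + sl c ξ).re := by simpa using hc
  have h2 := LSeries_one_mul_Lseries_moebius hre
  rw [LSeries_one_eq_riemannZeta hre] at h2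
  rw [g, G, zeta1_eq (sl_ne hc ξ), K]
  have hz : riemannZeta (1 + sl c ξ) ≠ 0 := left_ne_zero_of_mul (h2.symm ▸ one_ne_zero)
  have h3 : LSeries (fun n => (ArithmeticFunction.moebius n : ℂ)) (1 + sl c ξ) = (riemannZeta (1 + sl c ξ))⁻¹ :=
    eq_inv_of_mul_eq_one_right h2
  rw [h3, mul_inv, mul_inv, mul_inv]; ring

lemma A_f (c u : ℝ) {n : ℕ} (hn : 0 < n) (h : n ≤ ⌊Real.exp u⌋₊) :
    A c n * f c (u - Real.log n) =
      ((Real.exp (-c * u) * ((ArithmeticFunction.moebius n : ℝ) / n * (1 - n / Real.exp u)) : ℝ) : ℂ) := by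
  have hn0 : (0:ℝ) < n := by exact_mod_cast hn
  have hnx : (n:ℝ) ≤ Real.exp u := (Nat.le_floor_iff (Real.exp_pos u).le).mp h
  have hl : Real.log n ≤ u := (Real.log_le_iff_le_exp hn0).mpr hnx
  simp only [f_eq_max]
  rw [max_eq_left (by linarith), A]
  have e1 : cexp (-(c:ℂ) * (Real.log n : ℝ)) * (cexp (-(c:ℂ) * (u - Real.log n : ℝ)) - cexp (-((c:ℂ)+1) * (u - Real.log n : ℝ)))
      = ((Real.exp (-c * u) * (1 - n / Real.exp u) : ℝ) : ℂ) := by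
    have : (n:ℝ) / Real.exp u = Real.exp (Real.log n - u) := by rw [Real.exp_sub, Real.exp_log hn0]
    rw [this]
    push_cast [mul_sub, mul_one]
    rw [← Complex.exp_add, ← Complex.exp_add, ← Complex.exp_add]
    congr 2 <;> ring
  rw [mul_assoc, e1]
  push_cast; ring

lemma A_f_zero (c u : ℝ) {n : ℕ} (h : n ∉ Finset.Icc 1 ⌊Real.exp u⌋₊) :
    A c n * f c (u - Real.log n) = 0 := by
  rcases Nat.eq_zero_or_pos n with rfl | hn
  · simp [A]
  have hn0 : (0:ℝ) < n := by exact_mod_cast hn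
  have h1 : ⌊Real.exp u⌋₊ < n := by
    by_contra! h2; exact h (Finset.mem_Icc.mpr ⟨hn, h2⟩)
  have h2 : Real.exp u < n := (Nat.floor_lt (Real.exp_pos u).le).mp h1
  have hl : u < Real.log n := (Real.lt_log_iff_exp_lt hn0).mpr h2
  simp only [f_eq_max]
  rw [max_eq_right (by linarith)]; simp

lemma D_bound : ∃ C > (0:ℝ), ∀ u : ℝ, 1 ≤ u →
    |∑ n ∈ Finset.Icc 1 ⌊Real.exp u⌋₊, (ArithmeticFunction.moebius n : ℝ) / n * (1 - n / Real.exp u)| ≤ C / u ^ 2 := by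
  obtain ⟨C, hC, h⟩ := fourier_g_bound
  refine ⟨Real.exp 1 * C, by positivity, fun u hu => ?_⟩
  have hu0 : 0 < u := by linarith
  have hc : 0 < 1 / u := by positivity
  have hc1 : 1 / u ≤ 1 := by rw [div_le_one hu0]; exact hu
  set c := 1 / u with hcdef
  have hcu : c * u = 1 := by rw [hcdef]; field_simp
  have hI : ∀ n : ℕ, Integrable (fun ξ : ℝ => A c n * (cexp (2 * Real.pi * I * ξ * ((u - Real.log n : ℝ))) * K (sl c ξ))) := by
    intro n
    refine Integrable.const_mul ?_ _
    refine (K_int hc).bdd_mul (c := 1) (Continuous.aestronglyMeasurable (by fun_prop)) (Filter.Eventually.of_forall fun ξ => ?_)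
    exact (norm_e ξ _).le
  have hN : ∀ n : ℕ, ∀ ξ : ℝ, ‖A c n * (cexp (2 * Real.pi * I * ξ * ((u - Real.log n : ℝ))) * K (sl c ξ))‖ = ‖A c n‖ * ‖K (sl c ξ)‖ := by
    intro n ξ
    rw [norm_mul, norm_mul, norm_e, one_mul]
  have hS : Summable (fun n : ℕ => ∫ ξ : ℝ, ‖A c n * (cexp (2 * Real.pi * I * ξ * ((u - Real.log n : ℝ))) * K (sl c ξ))‖) := by
    simp_rw [hN, integral_const_mul]
    refine Summable.mul_right _ ?_
    exact Summable.of_nonneg_of_le (fun n => norm_nonneg _) (fun n => A_norm c n)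
      (Real.summable_nat_rpow.mpr (by linarith))
  have H := hasSum_integral_of_summable_integral_norm hI hS
  have H2 := H.tsum_eq
  simp_rw [integral_const_mul, perron hc, tsum_A hc] at H2
  rw [tsum_eq_sum (s := Finset.Icc 1 ⌊Real.exp u⌋₊) (fun n hn => A_f_zero c u hn)] at H2
  rw [Finset.sum_congr rfl (fun n hn => A_f c u (Finset.mem_Icc.mp hn).1 (Finset.mem_Icc.mp hn).2),
    ← Complex.ofReal_sum, ← Finset.mul_sum] at H2
  have h1 := h c hc hc1 u hu0
  rw [← H2, Complex.norm_real, Real.norm_eq_abs, abs_mul, abs_of_pos (Real.exp_pos _),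
    show -c * u = -1 by linarith, Real.exp_neg] at h1
  rw [inv_mul_le_iff₀ (Real.exp_pos 1)] at h1
  rw [mul_div_assoc]; exact h1

end MOS

namespace MOS
open Finset

noncomputable def m (x : ℝ) : ℝ := ∑ n ∈ Icc 1 ⌊x⌋₊, (ArithmeticFunction.moebius n : ℝ) / n

noncomputable def Dd (x : ℝ) : ℝ := ∑ n ∈ Icc 1 ⌊x⌋₊, (ArithmeticFunction.moebius n : ℝ) / n * (x - n)

lemma Dd_bound : ∃ C > (0:ℝ), ∀ x : ℝ, 1 ≤ Real.log x → 0 < x → |Dd x| ≤ C * x / Real.log x ^ 2 := by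
  obtain ⟨C, hC, h⟩ := D_bound
  refine ⟨C, hC, fun x hl hx => ?_⟩
  have h1 := h (Real.log x) hl
  rw [Real.exp_log hx] at h1
  have h2 : Dd x = x * ∑ n ∈ Finset.Icc 1 ⌊x⌋₊, (ArithmeticFunction.moebius n : ℝ) / n * (1 - n / x) := by
    rw [Finset.mul_sum, Dd]
    refine Finset.sum_congr rfl fun n _ => ?_
    field_simp
  rw [h2, abs_mul, abs_of_pos hx]
  calc _ ≤ x * (C / Real.log x ^ 2) := by gcongr
    _ = _ := by ring

lemma abs_mu_le (n : ℕ) : |(ArithmeticFunction.moebius n : ℝ)| ≤ 1 := by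
  exact_mod_cast ArithmeticFunction.abs_moebius_le_one

lemma Icc_split (h : ℕ → ℝ) {a b : ℕ} (hab : a ≤ b) :
    ∑ n ∈ Icc 1 b, h n = ∑ n ∈ Icc 1 a, h n + ∑ n ∈ Ioc a b, h n := by
  rw [← Finset.sum_union]
  · congr 1; ext n; simp; omega
  · rw [Finset.disjoint_left]; intro n; simp; omega

lemma m_diff {x z : ℝ} (hx : 0 < x) (hxz : x ≤ z) :
    (z - x) * |m x| ≤ |Dd z| + |Dd x| + (z - x + 1) * ((z - x) / x) := by
  have hfl : ⌊x⌋₊ ≤ ⌊z⌋₊ := Nat.floor_le_floor hxz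
  have h1 : (z - x) * m x = Dd z - Dd x - ∑ n ∈ Ioc ⌊x⌋₊ ⌊z⌋₊, (ArithmeticFunction.moebius n : ℝ) / n * (z - n) := by
    rw [Dd, Icc_split _ hfl, add_sub_right_comm, add_sub_cancel_right, Dd, ← Finset.sum_sub_distrib, m, Finset.mul_sum]
    refine Finset.sum_congr rfl fun n _ => ?_
    ring
  have h2 : |∑ n ∈ Ioc ⌊x⌋₊ ⌊z⌋₊, (ArithmeticFunction.moebius n : ℝ) / n * (z - n)| ≤ (z - x + 1) * ((z - x) / x) := by
    refine (Finset.abs_sum_le_sum_abs _ _).trans ?_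
    refine (Finset.sum_le_card_nsmul _ _ ((z - x) / x) ?_).trans ?_
    · intro n hn
      rw [Finset.mem_Ioc] at hn
      have hn1 : x < n := (Nat.floor_lt hx.le).mp hn.1
      have hn2 : (n:ℝ) ≤ z := (Nat.le_floor_iff (by linarith)).mp hn.2
      have hn0 : (0:ℝ) < n := by linarith
      rw [abs_mul, abs_div, abs_of_pos hn0, abs_of_nonneg (by linarith : 0 ≤ z - n)]
      calc _ ≤ 1 / x * (z - x) := by
            gcongr
            exact abs_mu_le n
        _ = _ := by ring
    · rw [nsmul_eq_mul, Nat.card_Ioc, Nat.cast_sub hfl]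
      have := Nat.floor_le (show 0 ≤ z by linarith)
      have := Nat.lt_floor_add_one x
      have : 0 ≤ z - x := by linarith
      gcongr
      linarith
  have h3 : (z - x) * |m x| = |(z - x) * m x| := by
    rw [abs_mul, abs_of_nonneg (by linarith : 0 ≤ z - x)]
  rw [h3, h1]
  have a1 := abs_sub (Dd z - Dd x) (∑ n ∈ Ioc ⌊x⌋₊ ⌊z⌋₊, (ArithmeticFunction.moebius n : ℝ) / n * (z - n))
  have a2 := abs_sub (Dd z) (Dd x)
  linarith

lemma m_bound : ∃ C > (0:ℝ), (∀ x : ℝ, |m x| ≤ C) ∧ ∀ x : ℝ, 1 < x → |m x| ≤ C / Real.log x := by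
  obtain ⟨C, hC, h⟩ := Dd_bound
  have key : ∀ x : ℝ, 0 < x → 1 ≤ Real.log x → |m x| ≤ (3 * C + 2) / Real.log x := by
    intro x hx hl
    set L := Real.log x with hL
    have hL0 : 0 < L := by linarith
    have hy : 0 < x / L := by positivity
    have hz : x + x / L ≤ 2 * x := by
      have : x / L ≤ x := div_le_self hx.le hl
      linarith
    have hlz : L ≤ Real.log (x + x / L) := Real.log_le_log hx (by linarith)
    have d1 := h x hl hx
    have d2 : |Dd (x + x / L)| ≤ C * (2 * x) / L ^ 2 := by
      refine (h _ (by linarith) (by linarith)).trans ?_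
      gcongr
    have d3 := m_diff hx (show x ≤ x + x / L by linarith)
    rw [add_sub_cancel_left] at d3
    have d4 : (x / L + 1) * (x / L / x) = (x / L) * (1 / L + 1 / x) := by field_simp
    have d5 : (x / L) * |m x| ≤ (x / L) * (3 * C / L + 1 / L + 1 / x) := by
      calc _ ≤ C * (2 * x) / L ^ 2 + C * x / L ^ 2 + (x / L) * (1 / L + 1 / x) := by rw [← d4]; linarith
        _ = _ := by field_simp; ring
    have d6 := le_of_mul_le_mul_left d5 hy
    have d7 : 1 / x ≤ 1 / L := by
      apply one_div_le_one_div_of_le hL0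
      rw [hL]; exact (Real.log_le_sub_one_of_pos hx).trans (by linarith)
    calc |m x| ≤ _ := d6
      _ ≤ 3 * C / L + 1 / L + 1 / L := by linarith
      _ = _ := by ring
  have small : ∀ x : ℝ, x < 3 → |m x| ≤ 2 := by
    intro x hx
    have hf : ⌊x⌋₊ ≤ 2 := by
      have : ⌊x⌋₊ < 3 := by
        rcases le_or_gt 0 x with h0 | h0
        · exact (Nat.floor_lt h0).mpr (by exact_mod_cast hx)
        · rw [Nat.floor_of_nonpos h0.le]; norm_num
      omega
    refine (Finset.abs_sum_le_sum_abs _ _).trans ?_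
    refine (Finset.sum_le_card_nsmul _ _ 1 ?_).trans ?_
    · intro n hn
      have hn1 : (1:ℝ) ≤ n := by exact_mod_cast (Finset.mem_Icc.mp hn).1
      rw [abs_div, abs_of_pos (by linarith : (0:ℝ) < n), div_le_one (by linarith)]
      exact (abs_mu_le n).trans hn1
    · simp; exact_mod_cast hf
  have e3 : Real.exp 1 < 3 := by linarith [Real.exp_one_lt_d9]
  have cases : ∀ x : ℝ, x < 3 ∨ (0 < x ∧ 1 ≤ Real.log x) := by
    intro x
    rcases lt_or_ge x 3 with h0 | h0
    · exact Or.inl h0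
    · exact Or.inr ⟨by linarith, (Real.le_log_iff_exp_le (by linarith)).mpr (by linarith)⟩
  refine ⟨6 * C + 4, by positivity, fun x => ?_, fun x hx => ?_⟩
  · rcases cases x with h0 | ⟨h0, h1⟩
    · linarith [small x h0]
    · refine (key x h0 h1).trans ?_
      refine (div_le_self (by positivity) h1).trans (by linarith)
  · rcases cases x with h0 | ⟨h0, h1⟩
    · have hl : 0 < Real.log x := Real.log_pos hx
      have hl2 : Real.log x ≤ 2 := (Real.log_le_sub_one_of_pos (by linarith)).trans (by linarith)
      rw [le_div_iff₀ hl]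
      have := small x h0
      nlinarith [abs_nonneg (m x)]
    · refine (key x h0 h1).trans ?_
      gcongr <;> linarith

end MOS

namespace MOS
open Finset ArithmeticFunction
open scoped ArithmeticFunction.zeta ArithmeticFunction.Moebius ArithmeticFunction.Omega ArithmeticFunction.omega

/-- indicator of the prime powers -/
noncomputable def PPf : ArithmeticFunction ℤ := ⟨fun n => if IsPrimePow n then 1 else 0, if_neg not_isPrimePow_zero⟩

lemma PPf_apply (n : ℕ) : PPf n = if IsPrimePow n then 1 else 0 := rfl

/-- integer valued `Ω` -/
noncomputable def Om : ArithmeticFunction ℤ := (ArithmeticFunction.cardFactors : ArithmeticFunction ℤ)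

lemma Om_apply (n : ℕ) : Om n = (ArithmeticFunction.cardFactors n : ℤ) := by
  simp [Om]

lemma sum_PPf (n : ℕ) : ∑ d ∈ n.divisors, PPf d = Om n := by
  rw [Om_apply]
  refine Nat.recOnPrimeCoprime ?_ ?_ ?_ n
  · simp
  · intro p k hp
    rw [Nat.sum_divisors_prime_pow hp, Finset.sum_range_succ', pow_zero,
      ArithmeticFunction.cardFactors_apply_prime_pow hp]
    have h1 : ∀ j ∈ Finset.range k, PPf (p ^ (j+1)) = 1 := by
      intro j _
      rw [PPf_apply, if_pos (hp.isPrimePow.pow (Nat.succ_ne_zero j))]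
    rw [Finset.sum_congr rfl h1, PPf_apply, if_neg not_isPrimePow_one]
    simp
  · intro a b ha' hb' hab ha hb
    simp only [PPf_apply, ← sum_filter] at ha hb ⊢
    rw [Nat.mul_divisors_filter_prime_pow hab, filter_union,
      sum_union (Nat.disjoint_divisors_filter_isPrimePow hab), ha, hb,
      ArithmeticFunction.cardFactors_mul (by omega) (by omega)]
    push_cast; rfl

lemma PPf_mul_zeta : PPf * ζ = Om := by
  ext n; rw [coe_mul_zeta_apply, sum_PPf]

lemma mu_mul_Om : μ * Om = PPf := by
  rw [mul_comm, ← PPf_mul_zeta, mul_assoc, coe_zeta_mul_moebius, mul_one]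

lemma pmul_mul_zeta : (ArithmeticFunction.pmul μ Om) * ζ = - PPf := by
  ext n
  rcases Nat.eq_zero_or_pos n with rfl | hn
  · simp
  have h1 : ((ArithmeticFunction.pmul μ Om) * (ζ : ArithmeticFunction ℤ)) n =
      Om n * (μ * (ζ : ArithmeticFunction ℤ)) n - (μ * Om) n := by
    rw [ArithmeticFunction.mul_apply, ArithmeticFunction.mul_apply, ArithmeticFunction.mul_apply,
      Finset.mul_sum, ← Finset.sum_sub_distrib]
    refine Finset.sum_congr rfl fun ab hab => ?_
    obtain ⟨h2, h3⟩ := Nat.mem_divisorsAntidiagonal.mp hab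
    have ha : ab.1 ≠ 0 := by rintro h; simp [h] at h2; omega
    have hb : ab.2 ≠ 0 := by rintro h; simp [h] at h2; omega
    have h4 : Om n = Om ab.1 + Om ab.2 := by
      rw [← h2, Om_apply, Om_apply, Om_apply, ArithmeticFunction.cardFactors_mul ha hb]; push_cast; rfl
    rw [h4, ArithmeticFunction.pmul_apply, ArithmeticFunction.natCoe_apply, ArithmeticFunction.zeta_apply, if_neg hb]
    push_cast; ring
  rw [h1, mu_mul_Om, moebius_mul_coe_zeta]
  rcases eq_or_ne n 1 with rfl | hn1
  · simp [Om_apply]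
  · simp [ArithmeticFunction.one_apply_ne hn1]

lemma pmul_eq : ArithmeticFunction.pmul μ Om = - (PPf * μ) := by
  rw [← neg_mul, ← pmul_mul_zeta, mul_assoc, coe_zeta_mul_moebius, mul_one]

lemma mu_omega (n : ℕ) : μ n * (n.primeFactors.card : ℤ) = - (PPf * μ) n := by
  have h := congrArg (fun F : ArithmeticFunction ℤ => F n) pmul_eq
  simp only [ArithmeticFunction.pmul_apply] at h
  change _ = - (PPf * μ) n at h
  rw [← h, Om_apply]
  by_cases hs : Squarefree n
  · have h0 : n ≠ 0 := hs.ne_zero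
    rw [← (ArithmeticFunction.cardDistinctFactors_eq_cardFactors_iff_squarefree h0).mpr hs,
      ArithmeticFunction.cardDistinctFactors_apply]
    rfl
  · simp [ArithmeticFunction.moebius_eq_zero_of_not_squarefree hs]

/-- divide an arithmetic function by `n` -/
noncomputable def dv (F : ArithmeticFunction ℤ) : ArithmeticFunction ℝ := ⟨fun n => (F n : ℝ) / n, by simp⟩

lemma dv_apply (F : ArithmeticFunction ℤ) (n : ℕ) : dv F n = (F n : ℝ) / n := rfl

lemma dv_mul (F H : ArithmeticFunction ℤ) : dv F * dv H = dv (F * H) := by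
  ext n
  rw [dv_apply, ArithmeticFunction.mul_apply, ArithmeticFunction.mul_apply, Int.cast_sum, Finset.sum_div]
  refine Finset.sum_congr rfl fun ab hab => ?_
  rw [← (Nat.mem_divisorsAntidiagonal.mp hab).1, dv_apply, dv_apply]
  push_cast
  rw [div_mul_div_comm]

lemma S_eq (x : ℝ) : ∑ n ∈ Icc 1 ⌊x⌋₊, (moebius n : ℝ) * (n.primeFactors.card : ℝ) / n =
    - ∑ q ∈ Icc 1 ⌊x⌋₊, (PPf q : ℝ) / q * m (x / q) := by
  have h := ArithmeticFunction.sum_Ioc_mul_eq_sum_sum (dv PPf) (dv μ) ⌊x⌋₊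
  rw [dv_mul] at h
  have hI : ∀ N : ℕ, Icc 1 N = Ioc 0 N := fun N => by ext; simp; omega
  have h2 : ∀ n : ℕ, (moebius n : ℝ) * (n.primeFactors.card : ℝ) / n = - dv (PPf * μ) n := by
    intro n
    have := mu_omega n
    rw [dv_apply, ← neg_div]
    congr 1
    exact_mod_cast this
  simp_rw [h2]
  rw [Finset.sum_neg_distrib, hI, h]
  congr 1
  refine Finset.sum_congr rfl fun q _ => ?_
  rw [dv_apply, m, hI, Nat.floor_div_natCast]
  rfl

end MOS

namespace MOS
open Finset

lemma PPf_nonneg (q : ℕ) : (0:ℝ) ≤ (PPf q : ℝ) := by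
  rw [PPf_apply]; split_ifs <;> simp

lemma PPf_le_real {j q : ℕ} (hj : 1 ≤ j) (hq : 2 ^ j ≤ q) :
    (PPf q : ℝ) ≤ (if q.Prime then Real.log q else 0) / (j * Real.log 2) +
      (if ¬ q.Prime then ArithmeticFunction.vonMangoldt q else 0) / Real.log 2 := by
  have hl2 : 0 < Real.log 2 := Real.log_pos (by norm_num)
  have hj0 : (0:ℝ) < j := by exact_mod_cast hj
  by_cases hp : q.Prime
  · rw [PPf_apply, if_pos hp.isPrimePow, if_pos hp, if_neg (by simpa using hp), zero_div, add_zero, le_div_iff₀ (by positivity)]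
    have : Real.log ((2:ℝ)^j) ≤ Real.log q := Real.log_le_log (by positivity) (by exact_mod_cast hq)
    rw [Real.log_pow] at this
    simpa using this
  · rw [if_neg hp, if_pos hp, zero_div, zero_add, le_div_iff₀ hl2, PPf_apply, ArithmeticFunction.vonMangoldt_apply]
    split_ifs with h
    · have h1 : q ≠ 1 := by rintro rfl; exact not_isPrimePow_one h
      have := (Nat.minFac_prime h1).two_le
      simp only [Int.cast_one, one_mul]
      exact Real.log_le_log (by norm_num) (by exact_mod_cast this)
    · simp

lemma block_bound : ∃ C > (0:ℝ), ∀ j : ℕ, 1 ≤ j →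
    ∑ q ∈ Ico (2^j) (2^(j+1)), (PPf q : ℝ) / q ≤ C / j := by
  obtain ⟨C0, hC0⟩ := Chebyshev.psi_sub_theta_le_mul_sqrt
  set C := max C0 0 with hC
  have hCn : 0 ≤ C := le_max_right _ _
  have hl2 : 1 / 2 < Real.log 2 := by linarith [Real.log_two_gt_d9]
  have hl2p : 0 < Real.log 2 := by linarith
  refine ⟨4 + 10 * C, by positivity, fun j hj => ?_⟩
  have hj0 : (0:ℝ) < j := by exact_mod_cast hj
  set X : ℝ := 2 ^ (j+1) with hX
  have hfl : ⌊X⌋₊ = 2 ^ (j+1) := by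
    rw [hX, ← Nat.cast_ofNat, ← Nat.cast_pow, Nat.floor_natCast]
  have hsub : Ico (2^j) (2^(j+1)) ⊆ Ioc 0 ⌊X⌋₊ := by
    rw [hfl]; intro q hq
    have := Nat.pos_of_neZero (2^j)
    simp at hq ⊢; omega
  have h1 : ∑ q ∈ Ico (2^j) (2^(j+1)), (PPf q : ℝ) / q ≤
      (1 / 2 ^ j) * (Chebyshev.theta X / (j * Real.log 2) + (Chebyshev.psi X - Chebyshev.theta X) / Real.log 2) := by
    rw [Chebyshev.psi_sub_theta_eq_sum_not_prime, Chebyshev.theta, Finset.sum_filter, Finset.sum_filter,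
      Finset.sum_div, Finset.sum_div, ← Finset.sum_add_distrib, Finset.mul_sum]
    calc _ ≤ ∑ q ∈ Ico (2^j) (2^(j+1)), (1 / 2 ^ j : ℝ) * ((if q.Prime then Real.log q else 0) / (j * Real.log 2) +
      (if ¬ q.Prime then ArithmeticFunction.vonMangoldt q else 0) / Real.log 2) := by
          refine Finset.sum_le_sum fun q hq => ?_
          have hq1 := (Finset.mem_Ico.mp hq).1
          have hq2 : (2:ℝ) ^ j ≤ q := by exact_mod_cast hq1
          rw [div_eq_mul_one_div, mul_comm]
          refine mul_le_mul ?_ (PPf_le_real hj hq1) (PPf_nonneg q) (by positivity)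
          exact one_div_le_one_div_of_le (by positivity) hq2
      _ ≤ _ := by
          refine Finset.sum_le_sum_of_subset_of_nonneg hsub fun q _ _ => ?_
          have a1 : 0 ≤ (if q.Prime then Real.log q else 0) := by
            split_ifs
            · exact Real.log_natCast_nonneg q
            · exact le_rfl
          have a2 : 0 ≤ (if ¬ q.Prime then ArithmeticFunction.vonMangoldt q else 0) := by
            split_ifs
            · exact le_rfl
            · exact ArithmeticFunction.vonMangoldt_nonneg
          positivity
  have h2 : Chebyshev.theta X ≤ 2 * Real.log 2 * X := by
    have := Chebyshev.theta_le_log4_mul_x (x := X) (by positivity)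
    rwa [show (4:ℝ) = 2 ^ 2 by norm_num, Real.log_pow] at this
  have h3 : Chebyshev.psi X - Chebyshev.theta X ≤ C * Real.sqrt X :=
    (hC0 X).trans (by gcongr; exact le_max_left _ _)
  set r := Real.sqrt 2 ^ j with hr
  have hs2 : Real.sqrt 2 ^ 2 = 2 := Real.sq_sqrt (by norm_num)
  have hs14 : 1.4 ≤ Real.sqrt 2 := Real.le_sqrt_of_sq_le (by norm_num)
  have hs15 : Real.sqrt 2 ≤ 1.5 := Real.sqrt_le_iff.mpr (by norm_num)
  have hrr : r * r = 2 ^ j := by rw [hr, ← mul_pow, ← sq, hs2]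
  have hr0 : 0 < r := by positivity
  have hsX : Real.sqrt X = Real.sqrt 2 * r := by
    rw [hX, pow_succ, ← hrr, mul_comm, Real.sqrt_mul (by norm_num), Real.sqrt_mul_self hr0.le]
  have hjr : (j:ℝ) ≤ 2.5 * r := by
    have := one_add_mul_le_pow (a := Real.sqrt 2 - 1) (by linarith) j
    rw [add_sub_cancel, ← hr] at this
    nlinarith
  calc _ ≤ _ := h1
    _ ≤ (1 / 2 ^ j) * (2 * Real.log 2 * X / (j * Real.log 2) + C * Real.sqrt X / Real.log 2) := by gcongr
    _ = 4 / j + C * (Real.sqrt 2 / r) / Real.log 2 := by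
        rw [hsX, hX, pow_succ, ← hrr]; field_simp; ring
    _ ≤ 4 / j + C * (1.5 / (j / 2.5)) / (1 / 2) := by
        gcongr
        rw [div_le_iff₀ (by norm_num)]; linarith
    _ ≤ _ := by
        have : 4 / (j:ℝ) + C * (1.5 / (j / 2.5)) / (1 / 2) = (4 + 7.5 * C) / j := by field_simp; ring
        rw [this]
        gcongr
        norm_num

lemma sum_blocks (h : ℕ → ℝ) (K : ℕ) :
    ∑ q ∈ Ico 1 (2^K), h q = ∑ j ∈ range K, ∑ q ∈ Ico (2^j) (2^(j+1)), h q := by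
  induction K with
  | zero => simp
  | succ K ih =>
    rw [Finset.sum_range_succ, ← ih, Finset.sum_Ico_consecutive]
    · exact Nat.one_le_two_pow
    · exact Nat.pow_le_pow_right (by norm_num) (by omega)

lemma S_bound1 : ∃ C > (0:ℝ), ∀ x : ℝ, 1 ≤ x →
    |∑ q ∈ Icc 1 ⌊x⌋₊, (PPf q : ℝ) / q * m (x / q)| ≤
      C * ∑ i ∈ range (Nat.log 2 ⌊x⌋₊), (1 / ((i:ℝ) + 1) * (1 / ((Nat.log 2 ⌊x⌋₊ : ℝ) - i))) := by
  obtain ⟨C, hC, hm1, hm2⟩ := m_bound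
  obtain ⟨B, hB, hb⟩ := block_bound
  have hl2 : 1 / 2 < Real.log 2 := by linarith [Real.log_two_gt_d9]
  refine ⟨6 * C * B, by positivity, fun x hx => ?_⟩
  have hN : ⌊x⌋₊ ≠ 0 := (Nat.floor_pos.mpr hx).ne'
  set N := ⌊x⌋₊ with hNdef
  set J := Nat.log 2 N with hJ
  have hJN : 2 ^ J ≤ N := Nat.pow_log_le_self 2 hN
  have hNJ : N < 2 ^ (J+1) := Nat.lt_pow_succ_log_self (by norm_num) N
  have hNx : (N:ℝ) ≤ x := Nat.floor_le (by linarith)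
  have hJx : (2:ℝ) ^ J ≤ x := le_trans (by exact_mod_cast hJN) hNx
  have hx0 : 0 < x := by linarith
  -- bound on m
  have hmw : ∀ j ≤ J, ∀ q : ℕ, q ∈ Ico (2^j) (2^(j+1)) → |m (x / q)| ≤ 6 * C / ((J:ℝ) + 1 - j) := by
    intro j hj q hq
    rw [Finset.mem_Ico] at hq
    have hjJ : (j:ℝ) ≤ J := by exact_mod_cast hj
    have hq0 : (0:ℝ) < q := by exact_mod_cast lt_of_lt_of_le (by positivity) hq.1
    rw [le_div_iff₀ (by linarith)]
    rcases lt_or_ge ((J:ℝ) - j) 2 with h | h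
    · have := hm1 (x / q)
      nlinarith [abs_nonneg (m (x/q))]
    · have hq2 : (q:ℝ) ≤ 2 ^ (j+1) := by exact_mod_cast hq.2.le
      have hlog : ((J:ℝ) - j - 1) * Real.log 2 ≤ Real.log (x / q) := by
        rw [Real.log_div hx0.ne' hq0.ne']
        have a1 := Real.log_le_log (by positivity) hJx
        have a2 := Real.log_le_log hq0 hq2
        rw [Real.log_pow] at a1 a2
        push_cast at a2
        linarith
      have hlog2 : ((J:ℝ) + 1 - j) / 6 ≤ Real.log (x / q) := by nlinarith
      have hlp : 0 < Real.log (x / q) := by linarith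
      have hxq : 1 < x / q := (Real.log_pos_iff (by positivity)).mp hlp
      have := hm2 _ hxq
      rw [le_div_iff₀ hlp] at this
      nlinarith [abs_nonneg (m (x/q))]
  calc |∑ q ∈ Icc 1 N, (PPf q : ℝ) / q * m (x / q)|
      ≤ ∑ q ∈ Icc 1 N, (PPf q : ℝ) / q * |m (x / q)| := by
        refine (Finset.abs_sum_le_sum_abs _ _).trans (le_of_eq ?_)
        refine Finset.sum_congr rfl fun q _ => ?_
        rw [abs_mul, abs_of_nonneg (div_nonneg (PPf_nonneg q) (Nat.cast_nonneg q))]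
    _ ≤ ∑ q ∈ Ico 1 (2^(J+1)), (PPf q : ℝ) / q * |m (x / q)| := by
        refine Finset.sum_le_sum_of_subset_of_nonneg ?_ fun q _ _ =>
          mul_nonneg (div_nonneg (PPf_nonneg q) (Nat.cast_nonneg q)) (abs_nonneg _)
        intro q hq; simp at hq ⊢; omega
    _ = ∑ i ∈ range J, ∑ q ∈ Ico (2^(i+1)) (2^(i+1+1)), (PPf q : ℝ) / q * |m (x / q)| := by
        rw [sum_blocks, Finset.sum_range_succ']
        simp [PPf_apply, not_isPrimePow_one]
    _ ≤ ∑ i ∈ range J, 6 * C * B * (1 / ((i:ℝ) + 1) * (1 / ((J : ℝ) - i))) := by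
        refine Finset.sum_le_sum fun i hi => ?_
        have hi' : i + 1 ≤ J := Finset.mem_range.mp hi
        have hiR : (i:ℝ) + 1 ≤ J := by exact_mod_cast hi'
        have hJi : 0 < (J:ℝ) - i := by linarith
        calc _ ≤ ∑ q ∈ Ico (2^(i+1)) (2^(i+1+1)), (PPf q : ℝ) / q * (6 * C / ((J:ℝ) - i)) := by
              refine Finset.sum_le_sum fun q hq => ?_
              have := hmw (i+1) hi' q hq
              push_cast at this
              rw [show (J:ℝ) + 1 - (i + 1) = J - i by ring] at this
              exact mul_le_mul_of_nonneg_left this (div_nonneg (PPf_nonneg q) (Nat.cast_nonneg q))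
          _ ≤ B / ((i:ℝ)+1) * (6 * C / ((J:ℝ) - i)) := by
              rw [← Finset.sum_mul]
              have := hb (i+1) (by omega)
              push_cast at this
              exact mul_le_mul_of_nonneg_right this (by positivity)
          _ = _ := by ring
    _ = _ := by rw [Finset.mul_sum]

lemma conv_sum {J : ℕ} (hJ : 1 ≤ J) :
    ∑ i ∈ range J, (1 / ((i:ℝ) + 1) * (1 / ((J : ℝ) - i))) ≤ 2 * (1 + Real.log J) / (J + 1) := by
  have hH : ∑ i ∈ range J, (1 / ((i:ℝ) + 1)) ≤ 1 + Real.log J := by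
    have := harmonic_le_one_add_log J
    rw [harmonic] at this
    push_cast at this
    simpa [one_div] using this
  have hR : ∑ i ∈ range J, (1 / ((J:ℝ) - i)) = ∑ i ∈ range J, (1 / ((i:ℝ) + 1)) := by
    rw [← Finset.sum_range_reflect]
    refine Finset.sum_congr rfl fun i hi => ?_
    have := Finset.mem_range.mp hi
    rw [Nat.cast_sub (by omega), Nat.cast_sub (by omega)]
    congr 1; push_cast; ring
  have hE : ∑ i ∈ range J, (1 / ((i:ℝ) + 1) * (1 / ((J : ℝ) - i))) =
      ∑ i ∈ range J, ((1 / ((i:ℝ) + 1) + 1 / ((J:ℝ) - i)) / (J + 1)) := by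
    refine Finset.sum_congr rfl fun i hi => ?_
    have hi' : i + 1 ≤ J := Finset.mem_range.mp hi
    have hiR : (i:ℝ) + 1 ≤ J := by exact_mod_cast hi'
    have hJi : (J:ℝ) - i ≠ 0 := by linarith
    field_simp
    ring
  rw [hE, ← Finset.sum_div, Finset.sum_add_distrib, hR]
  gcongr
  linarith

lemma loglog_ge {x : ℝ} (hx : 16 ≤ x) : 1 ≤ Real.log (Real.log x) ∧ 1 ≤ Real.log x := by
  have h1 : Real.exp 1 ≤ Real.log x := by
    have : Real.log 16 ≤ Real.log x := Real.log_le_log (by norm_num) hx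
    rw [show (16:ℝ) = 2 ^ 4 by norm_num, Real.log_pow] at this
    push_cast at this
    linarith [Real.log_two_gt_d9, Real.exp_one_lt_d9]
  have h2 : 1 ≤ Real.log x := by linarith [Real.exp_one_gt_d9]
  exact ⟨(Real.le_log_iff_exp_le (by linarith)).mpr h1, h2⟩

lemma main_bound : ∃ C > (0 : ℝ), ∀ x : ℝ, 16 ≤ x →
      |∑ n ∈ Finset.Icc 1 ⌊x⌋₊, (ArithmeticFunction.moebius n : ℝ) * (n.primeFactors.card : ℝ) / n|
        ≤ C * Real.sqrt (Real.log (Real.log x)) / Real.sqrt (Real.log x) := by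
  obtain ⟨C, hC, h⟩ := S_bound1
  refine ⟨6 * C, by positivity, fun x hx => ?_⟩
  obtain ⟨hll, hl⟩ := loglog_ge hx
  rw [S_eq, abs_neg]
  refine (h x (by linarith)).trans ?_
  have hx0 : 0 < x := by linarith
  have hN16 : 16 ≤ ⌊x⌋₊ := Nat.le_floor (by exact_mod_cast hx)
  set N := ⌊x⌋₊ with hN
  set J := Nat.log 2 N with hJ
  have hJ1 : 1 ≤ J := Nat.log_pos (by norm_num) (by omega)
  have hJN : 2 ^ J ≤ N := Nat.pow_log_le_self 2 (by omega)
  have hNJ : N < 2 ^ (J+1) := Nat.lt_pow_succ_log_self (by norm_num) N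
  have hNx : (N:ℝ) ≤ x := Nat.floor_le (by linarith)
  have hJx : (2:ℝ) ^ J ≤ x := le_trans (by exact_mod_cast hJN) hNx
  have hxJ : x ≤ (2:ℝ) ^ (J+1) := by
    have := Nat.lt_floor_add_one x
    have h2 : (N:ℝ) + 1 ≤ 2 ^ (J+1) := by exact_mod_cast hNJ
    linarith
  have a1 := Real.log_le_log (by positivity) hJx
  have a2 := Real.log_le_log hx0 hxJ
  rw [Real.log_pow] at a1 a2
  push_cast at a2
  have g1 := Real.log_two_gt_d9
  have g2 := Real.log_two_lt_d9
  have hJR : (1:ℝ) ≤ J := by exact_mod_cast hJ1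
  have b1 : (J:ℝ) ≤ 2 * Real.log x := by nlinarith
  have b2 : Real.log x ≤ J + 1 := by nlinarith
  have b3 : Real.log J ≤ 1 + Real.log (Real.log x) := by
    have := Real.log_le_log (by linarith) b1
    rw [Real.log_mul (by norm_num) (by linarith)] at this
    linarith
  set L := Real.log x with hL
  have hLL : Real.log L ≤ L := (Real.log_le_sub_one_of_pos (by linarith)).trans (by linarith)
  have hJl : 0 ≤ Real.log J := Real.log_nonneg hJR
  calc C * _ ≤ C * (2 * (1 + Real.log J) / (J + 1)) := by
        gcongr; exact conv_sum hJ1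
    _ ≤ C * (2 * (3 * Real.log L) / L) := by
        gcongr; linarith
    _ = 6 * C * (Real.log L / L) := by ring
    _ ≤ 6 * C * (Real.sqrt (Real.log L) / Real.sqrt L) := by
        refine mul_le_mul_of_nonneg_left ?_ (by positivity)
        rw [← Real.sqrt_div (by linarith)]
        refine Real.le_sqrt_of_sq_le ?_
        have c1 : 0 ≤ Real.log L / L := by positivity
        have c2 : Real.log L / L ≤ 1 := by rw [div_le_one (by linarith)]; exact hLL
        nlinarith
    _ = _ := by ring

open Filter in
lemma main_tendsto : Tendsto (fun x : ℝ =>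
        ∑ n ∈ Finset.Icc 1 ⌊x⌋₊, (ArithmeticFunction.moebius n : ℝ) * (n.primeFactors.card : ℝ) / n)
      atTop (nhds 0) := by
  obtain ⟨C, hC, h⟩ := main_bound
  refine squeeze_zero_norm' (a := fun x : ℝ => C * Real.sqrt (Real.log (Real.log x) / Real.log x)) ?_ ?_
  · filter_upwards [eventually_ge_atTop 16] with x hx
    have := h x hx
    rw [mul_div_assoc, ← Real.sqrt_div (by linarith [(loglog_ge hx).1])] at this
    exact this
  · have h1 : Tendsto (fun L : ℝ => Real.log L / L) atTop (nhds 0) := by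
      simpa using Real.isLittleO_log_id_atTop.tendsto_div_nhds_zero
    have h2 := (h1.comp Real.tendsto_log_atTop).sqrt.const_mul C
    simpa using h2

end MOS


open Finset ArithmeticFunction Real Filter

/-- There is a constant `C > 0` such that for all `x ≥ 16`,
`|Σ_{n ≤ x} μ(n) ω(n)/n| ≤ C √(log log x) / √(log x)`; consequently the partial sums
`Σ_{n ≤ x} μ(n) ω(n)/n` tend to `0` as `x → ∞`, i.e. `Σ_{n≥1} μ(n)ω(n)/n = 0`. -/
theorem moebius_omega_div_sum :
    (∃ C > (0 : ℝ), ∀ x : ℝ, 16 ≤ x →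
      |∑ n ∈ Finset.Icc 1 ⌊x⌋₊, (moebius n : ℝ) * (n.primeFactors.card : ℝ) / n|
        ≤ C * Real.sqrt (Real.log (Real.log x)) / Real.sqrt (Real.log x)) ∧
    Tendsto (fun x : ℝ =>
        ∑ n ∈ Finset.Icc 1 ⌊x⌋₊, (moebius n : ℝ) * (n.primeFactors.card : ℝ) / n)
      atTop (nhds 0) := by
  exact ⟨MOS.main_bound, MOS.main_tendsto⟩
end
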